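/- arXiv:2212.07974 — 3 statements merged into one kernel-verified Lean document; each statement's English description precedes it below -/
import Mathlib

section
/- Let α ∈ (0,1) and let α_* ∈ (0,1) be the unique solution in (0,1) of the equation 1/Γ(1-2a)² = 1/(Γ(1-a)·Γ(1-3a)) (α_* ≈ 0.771667). Then the function x ↦ φ(-α, 1-α, -x) is log-concave on [0,∞) if and only if α ≤ α_*. -/
/-- The Wright function `φ(ρ, β, x) = ∑ x^n / (n! Γ(β + ρ n))`. -/
noncomputable def wright (ρ β x : ℝ) : ℝ :=
  ∑' n : ℕ, x ^ n / ((n.factorial : ℝ) * Real.Gamma (β + ρ * n))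

/-- `f` is log-concave on the set `S`. -/
def LogConcaveOn' (f : ℝ → ℝ) (S : Set ℝ) : Prop :=
  ∀ x ∈ S, ∀ y ∈ S, ∀ t ∈ Set.Icc (0 : ℝ) 1,
    f ((1 - t) * x + t * y) ≥ f x ^ (1 - t) * f y ^ t

open Filter Topology

noncomputable def Fw (s : ℝ) (m : ℕ) : ℝ := ∏ l ∈ Finset.range m, ((l : ℝ) + 1 - s)

noncomputable def Vw (α : ℝ) (m i : ℕ) : ℝ :=
  ∑ j ∈ Finset.range (i + 1), (-1 : ℝ) ^ j * (i.choose j : ℝ) * Fw (((j : ℝ) + 1) * α) m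

lemma Fw_succ (s : ℝ) (m : ℕ) : Fw s (m + 1) = Fw s m * ((m : ℝ) + 1 - s) := by
  simp [Fw, Finset.prod_range_succ]

lemma Fw_zero (s : ℝ) : Fw s 0 = 1 := by simp [Fw]

lemma Vw_zero_right (α : ℝ) (m : ℕ) : Vw α m 0 = Fw α m := by simp [Vw]

lemma Vw_one_right (α : ℝ) (m : ℕ) : Vw α m 1 = Fw α m - Fw (2 * α) m := by
  simp [Vw, Finset.sum_range_succ]; norm_num; ring

lemma Vw_two_right (α : ℝ) (m : ℕ) :
    Vw α m 2 = Fw α m - 2 * Fw (2 * α) m + Fw (3 * α) m := by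
  simp [Vw, Finset.sum_range_succ]; norm_num; ring

lemma Vw_zero_left (α : ℝ) (i : ℕ) : Vw α 0 (i + 1) = 0 := by
  have h := Int.alternating_sum_range_choose (n := i + 1)
  simp only [Vw, Fw_zero, mul_one]
  have h2 : (∑ j ∈ Finset.range (i + 1 + 1), (-1 : ℝ) ^ j * ((i + 1).choose j : ℝ))
      = ((∑ j ∈ Finset.range (i + 1 + 1), (-1 : ℤ) ^ j * ((i + 1).choose j : ℤ) : ℤ) : ℝ) := by
    push_cast; rfl
  rw [h2, h]; simp

lemma Vw_succ_zero (α : ℝ) (m : ℕ) : Vw α (m + 1) 0 = ((m : ℝ) + 1 - α) * Vw α m 0 := by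
  rw [Vw_zero_right, Vw_zero_right, Fw_succ]; ring

lemma Vw_succ (α : ℝ) (m i : ℕ) :
    Vw α (m + 1) (i + 1) =
      ((m : ℝ) + 1 - α * (i + 2)) * Vw α m (i + 1) + α * (i + 1) * Vw α m i := by
  have h1 : Vw α m i = ∑ j ∈ Finset.range (i + 1 + 1),
      (-1 : ℝ) ^ j * (i.choose j : ℝ) * Fw (((j : ℝ) + 1) * α) m := by
    rw [Finset.sum_range_succ, Nat.choose_succ_self]; simp [Vw]
  rw [h1]
  simp only [Vw]
  rw [Finset.mul_sum, Finset.mul_sum, ← Finset.sum_add_distrib]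
  refine Finset.sum_congr rfl fun j hj => ?_
  have hj' : j ≤ i + 1 := by simpa [Nat.lt_succ_iff] using hj
  have h2 : ((i : ℝ) + 1) * (i.choose j : ℝ) = ((i + 1).choose j : ℝ) * ((i : ℝ) + 1 - j) := by
    have h := Nat.choose_mul_succ_eq i j
    have h3 : ((i + 1 - j : ℕ) : ℝ) = (i : ℝ) + 1 - j := by
      rw [Nat.cast_sub hj']; push_cast; ring
    rw [← h3]
    have h4 : ((i.choose j * (i + 1) : ℕ) : ℝ) = (((i + 1).choose j * (i + 1 - j) : ℕ) : ℝ) := by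
      rw [h]
    push_cast at h4
    linarith
  rw [Fw_succ]
  have : α * (↑i + 1) * ((-1) ^ j * (i.choose j : ℝ) * Fw ((↑j + 1) * α) m)
    = α * ((-1) ^ j * ((↑i + 1) * (i.choose j : ℝ)) * Fw ((↑j + 1) * α) m) := by ring
  rw [this, h2]
  ring

lemma Vw_eq_zero (α : ℝ) (m i : ℕ) (h : m < i) : Vw α m i = 0 := by
  induction m generalizing i with
  | zero =>
    obtain ⟨i, rfl⟩ : ∃ k, i = k + 1 := ⟨i - 1, by omega⟩
    exact Vw_zero_left α i
  | succ m ih =>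
    obtain ⟨i, rfl⟩ : ∃ k, i = k + 1 := ⟨i - 1, by omega⟩
    rw [Vw_succ, ih (i + 1) (by omega), ih i (by omega)]; ring

lemma Vw_pos (α : ℝ) (h0 : 0 < α) (h1 : α < 1) (m i : ℕ) (h : i ≤ m) : 0 < Vw α m i := by
  induction m generalizing i with
  | zero =>
    obtain rfl : i = 0 := by omega
    simp [Vw_zero_right, Fw_zero]
  | succ m ih =>
    rcases i with _ | i
    · rw [Vw_succ_zero]
      have := ih 0 (by omega)
      have hm : (0 : ℝ) ≤ m := Nat.cast_nonneg m
      exact mul_pos (by linarith) this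
    · rw [Vw_succ]
      have h3 := ih i (by omega)
      have h4 : 0 < α * ((i : ℝ) + 1) * Vw α m i := by positivity
      rcases Nat.lt_or_ge m (i + 1) with h5 | h5
      · rw [Vw_eq_zero α m (i + 1) h5]; linarith
      · have h6 := ih (i + 1) h5
        have h7 : (i : ℝ) + 1 ≤ m := by exact_mod_cast h5
        have : 0 < (m : ℝ) + 1 - α * (i + 2) := by nlinarith
        have := mul_pos this h6
        linarith

lemma Vw_nonneg (α : ℝ) (h0 : 0 < α) (h1 : α < 1) (m i : ℕ) : 0 ≤ Vw α m i := by
  rcases Nat.lt_or_ge m i with h | h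
  · rw [Vw_eq_zero α m i h]
  · exact (Vw_pos α h0 h1 m i h).le

/-- algebraic step -/
lemma step_alg (α c d t0 t1 t2 t3 : ℝ) (hα : 0 ≤ α) (hc : α ≤ c) (hd : α ≤ d)
    (h0 : 0 ≤ t0) (h1 : 0 < t1) (h2 : 0 < t2) (h3 : 0 ≤ t3)
    (hA : t0 * t2 ≤ t1 ^ 2) (hB : t1 * t3 ≤ t2 ^ 2) :
    ((c - α) * t0 + (d + α) * t1) * ((c + α) * t2 + (d - α) * t3) ≤ (c * t1 + d * t2) ^ 2 := by
  have hX : t0 * t3 ≤ t1 * t2 := by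
    have : (t0 * t3) * (t1 * t2) ≤ (t1 * t2) * (t1 * t2) := by
      calc (t0 * t3) * (t1 * t2) = (t0 * t2) * (t1 * t3) := by ring
        _ ≤ t1 ^ 2 * t2 ^ 2 := by
          apply mul_le_mul hA hB (by positivity) (by positivity)
        _ = _ := by ring
    exact le_of_mul_le_mul_right this (by positivity)
  have e1 : 0 ≤ (c ^ 2 - α ^ 2) * (t1 ^ 2 - t0 * t2) :=
    mul_nonneg (by nlinarith) (by linarith)
  have e2 : 0 ≤ (d ^ 2 - α ^ 2) * (t2 ^ 2 - t1 * t3) :=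
    mul_nonneg (by nlinarith) (by linarith)
  have e3 : 0 ≤ ((c - α) * (d - α)) * (t1 * t2 - t0 * t3) :=
    mul_nonneg (mul_nonneg (by linarith) (by linarith)) (by linarith)
  have e4 : 0 ≤ (α * (t2 - t1)) ^ 2 := sq_nonneg _
  nlinarith [e1, e2, e3, e4]

/-- `D m i` : log-concavity inequality at index `i+1`. -/
def LCat (α : ℝ) (m i : ℕ) : Prop := Vw α m i * Vw α m (i + 2) ≤ Vw α m (i + 1) ^ 2

lemma LCat_of_lt (α : ℝ) (m i : ℕ) (h : m < i + 2) : LCat α m i := by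
  unfold LCat; rw [Vw_eq_zero α m (i + 2) h]; simp; positivity

/-- induction step at `i+1` (k ≥ 3 in one-based indexing). -/
lemma LCat_step (α : ℝ) (h0 : 0 < α) (h1 : α < 1) (m i : ℕ) (hm : α * (m + 2) ≤ m + 1)
    (hA : LCat α m i) (hB : LCat α m (i + 1)) : LCat α (m + 1) (i + 1) := by
  rcases Nat.lt_or_ge (m + 1) (i + 1 + 2) with h | h
  · exact LCat_of_lt _ _ _ h
  have hi : (i : ℝ) + 2 ≤ m := by exact_mod_cast (by omega : i + 2 ≤ m)
  unfold LCat at *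
  have := step_alg α (α * (i + 2)) (m + 1 - α * (i + 3)) (Vw α m i) (Vw α m (i + 1))
    (Vw α m (i + 2)) (Vw α m (i + 3)) h0.le (by nlinarith) (by nlinarith)
    (Vw_nonneg α h0 h1 _ _) (Vw_pos α h0 h1 _ _ (by omega)) (Vw_pos α h0 h1 _ _ (by omega))
    (Vw_nonneg α h0 h1 _ _) hA hB
  have r1 := Vw_succ α m i
  have r2 := Vw_succ α m (i + 1)
  have r3 := Vw_succ α m (i + 2)
  push_cast at r1 r2 r3
  rw [show i + 1 + 2 = i + 2 + 1 by ring, r1, r2, r3]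
  convert this using 1 <;> ring_nf

lemma LCat_step_zero (α : ℝ) (h0 : 0 < α) (h1 : α < 1) (m : ℕ) (hm : α * (m + 2) ≤ m + 1)
    (hB : LCat α m 0) : LCat α (m + 1) 0 := by
  rcases Nat.lt_or_ge (m + 1) 2 with h | h
  · exact LCat_of_lt _ _ _ (by omega)
  have hi : (1 : ℝ) ≤ m := by exact_mod_cast (by omega : 1 ≤ m)
  unfold LCat at *
  have := step_alg α α (m + 1 - α * 2) 0 (Vw α m 0)
    (Vw α m 1) (Vw α m 2) h0.le le_rfl (by nlinarith)
    le_rfl (Vw_pos α h0 h1 _ _ (by omega)) (Vw_pos α h0 h1 _ _ (by omega))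
    (Vw_nonneg α h0 h1 _ _) (by simp; positivity) hB
  have r1 := Vw_succ_zero α m
  have r2 := Vw_succ α m 0
  have r3 := Vw_succ α m 1
  push_cast at r1 r2 r3
  simp only [zero_add] at *
  rw [show 2 = 1 + 1 by rfl, r1, r2, r3]
  convert this using 1 <;> ring_nf

lemma Vw_vals_two (α : ℝ) : Vw α 2 0 = (1 - α) * (2 - α) ∧ Vw α 2 1 = 3 * α * (1 - α) ∧
    Vw α 2 2 = 2 * α ^ 2 := by
  refine ⟨?_, ?_, ?_⟩ <;>
    simp only [Vw, Fw, Finset.sum_range_succ, Finset.prod_range_succ, Finset.range_zero,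
      Finset.sum_empty, Finset.prod_empty, Nat.choose] <;> push_cast <;> ring

lemma LC_small (α : ℝ) (h0 : 0 < α) (h1 : α ≤ 5 / 7) (m : ℕ) (hm : 2 ≤ m) :
    ∀ i, LCat α m i := by
  induction m, hm using Nat.le_induction with
  | base =>
    intro i
    rcases i with _ | i
    · unfold LCat
      obtain ⟨a, b, c⟩ := Vw_vals_two α
      simp only [zero_add]
      rw [a, b, c]
      have : 0 ≤ α ^ 2 * (1 - α) * (5 - 7 * α) := by
        apply mul_nonneg (mul_nonneg (by positivity) (by linarith)) (by linarith)
      nlinarith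
    · exact LCat_of_lt _ _ _ (by omega)
  | succ m hm ih =>
    intro i
    have hm' : (2 : ℝ) ≤ m := by exact_mod_cast hm
    rcases i with _ | i
    · exact LCat_step_zero α h0 (by linarith) m (by nlinarith) (ih 0)
    · exact LCat_step α h0 (by linarith) m i (by nlinarith) (ih _) (ih _)

lemma F_pos_all (α : ℝ) (h0 : 5 / 7 < α) (h1 : α < 1) (m : ℕ) (hm : 2 ≤ m) :
    0 < Fw α m ∧ 0 < -Fw (2 * α) m ∧ 0 < Fw (3 * α) m := by
  induction m, hm using Nat.le_induction with
  | base =>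
    simp only [Fw, Finset.prod_range_succ, Finset.range_zero, Finset.prod_empty]
    push_cast
    refine ⟨?_, ?_, ?_⟩ <;> nlinarith
  | succ m hm ih =>
    obtain ⟨a, b, c⟩ := ih
    have hm' : (2 : ℝ) ≤ m := by exact_mod_cast hm
    simp only [Fw_succ]
    refine ⟨mul_pos a (by linarith), ?_, mul_pos c (by linarith)⟩
    rw [← neg_mul]
    exact mul_pos b (by linarith)

lemma eta_bound (α : ℝ) (h0 : 5 / 7 < α) (h1 : α ≤ 773 / 1000) (m : ℕ) (hm : m = 6 ∨ m = 7) :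
    Fw α m ≤ 13 * (-Fw (2 * α) m) := by
  have e2 : 6 / 10 * Fw α 2 ≤ -Fw (2 * α) 2 := by
    simp only [Fw, Finset.prod_range_succ, Finset.range_zero, Finset.prod_empty]
    push_cast
    nlinarith
  have st : ∀ (k : ℕ) (a b : ℝ), 2 ≤ k → 0 ≤ a → 0 ≤ b → a * Fw α k ≤ -Fw (2 * α) k →
      b * ((k : ℝ) + 1 - α) ≤ ((k : ℝ) + 1 - 2 * α) →
      (a * b) * Fw α (k + 1) ≤ -Fw (2 * α) (k + 1) := by
    intro k a b hk ha hb h hb2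
    have hk' : (2 : ℝ) ≤ k := by exact_mod_cast hk
    have hp := (F_pos_all α h0 (by linarith) k hk)
    rw [Fw_succ, Fw_succ]
    calc (a * b) * (Fw α k * ((k : ℝ) + 1 - α)) = (a * Fw α k) * (b * ((k : ℝ) + 1 - α)) := by ring
      _ ≤ (-Fw (2 * α) k) * ((k : ℝ) + 1 - 2 * α) :=
        mul_le_mul h hb2 (mul_nonneg hb (by linarith)) hp.2.1.le
      _ = _ := by ring
  have e3 := st 2 _ (6 / 10) le_rfl (by norm_num) (by norm_num) e2 (by push_cast; linarith)
  have e4 := st 3 _ (7 / 10) (by norm_num) (by norm_num) (by norm_num) e3 (by push_cast; linarith)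
  have e5 := st 4 _ (7 / 10) (by norm_num) (by norm_num) (by norm_num) e4 (by push_cast; linarith)
  have e6 := st 5 _ (7 / 10) (by norm_num) (by norm_num) (by norm_num) e5 (by push_cast; linarith)
  have e7 := st 6 _ (7 / 10) (by norm_num) (by norm_num) (by norm_num) e6 (by push_cast; linarith)
  norm_num at e6 e7
  rcases hm with rfl | rfl
  · have := (F_pos_all α h0 (by linarith) 6 (by norm_num)).1
    linarith
  · have := (F_pos_all α h0 (by linarith) 7 (by norm_num)).1
    linarith

set_option maxHeartbeats 1000000 in
lemma step3_alg (α n p q r t3 : ℝ) (h0 : 5 / 7 < α) (h1 : α ≤ 773 / 1000) (hn : 7 ≤ n)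
    (hp : 0 < p) (hq : 0 < q) (hr : 0 < r) (hD : q ^ 2 ≤ p * r)
    (hC : (n - 2 - α ^ 2) * (p * r) ≤ (n - 2) * q ^ 2)
    (hη : 9 ≤ n ∨ p ≤ 13 * q)
    (hB : (p + q) * t3 ≤ (p + 2 * q + r) ^ 2) :
    ((2 * α - α) * p + (n - 3 * α + α) * (p + q)) *
      ((2 * α + α) * (p + 2 * q + r) + (n - 3 * α - α) * t3) ≤
      (2 * α * (p + q) + (n - 3 * α) * (p + 2 * q + r)) ^ 2 := by
  have hα2 : α ^ 2 ≤ 3 / 5 := by nlinarith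
  obtain ⟨K, hK⟩ : ∃ K, K = n - 2 - α ^ 2 := ⟨_, rfl⟩
  have hK0 : 0 < K := by rw [hK]; linarith
  obtain ⟨w, hw⟩ : ∃ w, w = q + r := ⟨_, rfl⟩
  obtain ⟨t1, ht1⟩ : ∃ t1, t1 = p + q := ⟨_, rfl⟩
  have hw0 : 0 < w := by rw [hw]; linarith
  have ht0 : 0 < t1 := by rw [ht1]; linarith
  have hwp : q * t1 ≤ w * p := by rw [hw, ht1]; nlinarith
  -- quadratic form
  have hQ : α * (n - α) * p ^ 2 + α * (n - 4 * α) * (q * p) ≤ K * t1 ^ 2 := by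
    have hexp : K * t1 ^ 2 - (α * (n - α) * p ^ 2 + α * (n - 4 * α) * (q * p)) =
      (n * (1 - α) - 2) * p ^ 2 + (n * (2 - α) - 4 + 2 * α ^ 2) * (p * q) + K * q ^ 2 := by
      rw [hK, ht1]; ring
    have hc2 : 4 ≤ n * (2 - α) - 4 + 2 * α ^ 2 := by nlinarith
    have hpq : 0 < p * q := mul_pos hp hq
    have hKq : 0 ≤ K * q ^ 2 := by positivity
    rcases hη with h | h
    · have : 0 ≤ n * (1 - α) - 2 := by nlinarith
      have : 0 ≤ (n * (1 - α) - 2) * p ^ 2 := by positivity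
      nlinarith
    · have h5 : -(1 / 2) + 2 / 25 ≤ n * (1 - α) - 2 := by nlinarith
      have h6 : -(42 / 100) * p ^ 2 ≤ (n * (1 - α) - 2) * p ^ 2 :=
        mul_le_mul_of_nonneg_right (by linarith) (by positivity)
      have hc3 : (11 / 2) ≤ n * (2 - α) - 4 + 2 * α ^ 2 := by nlinarith
      have h7 : 11 / 2 * (p * q) ≤ (n * (2 - α) - 4 + 2 * α ^ 2) * (p * q) :=
        mul_le_mul_of_nonneg_right hc3 hpq.le
      have h8 : p * p ≤ p * (13 * q) := mul_le_mul_of_nonneg_left h hp.le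
      nlinarith
  have hA1 : q ^ 2 * t1 ^ 2 ≤ w ^ 2 * p ^ 2 := by
    have := mul_le_mul hwp hwp (by positivity) (by positivity)
    linear_combination this
  have hn1 : 0 ≤ α * (n - α) := mul_nonneg (by linarith) (by linarith)
  have hn4 : 0 ≤ α * (n - 4 * α) := mul_nonneg (by linarith) (by linarith)
  have hM : α * q ^ 2 * ((n - α) * t1 + (n - 4 * α) * w) ≤ K * w ^ 2 * t1 := by
    have h2 : (α * q ^ 2 * ((n - α) * t1 + (n - 4 * α) * w)) * t1 ≤ (K * w ^ 2 * t1) * t1 := by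
      have i1 : α * (n - α) * (q ^ 2 * t1 ^ 2) ≤ α * (n - α) * (w ^ 2 * p ^ 2) :=
        mul_le_mul_of_nonneg_left hA1 hn1
      have i2 : α * (n - 4 * α) * ((q * t1) * (q * w)) ≤ α * (n - 4 * α) * ((w * p) * (q * w)) :=
        mul_le_mul_of_nonneg_left (mul_le_mul_of_nonneg_right hwp (by positivity)) hn4
      have i3 : w ^ 2 * (α * (n - α) * p ^ 2 + α * (n - 4 * α) * (q * p)) ≤ w ^ 2 * (K * t1 ^ 2) :=
        mul_le_mul_of_nonneg_left hQ (by positivity)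
      calc (α * q ^ 2 * ((n - α) * t1 + (n - 4 * α) * w)) * t1 =
          α * (n - α) * (q ^ 2 * t1 ^ 2) + α * (n - 4 * α) * ((q * t1) * (q * w)) := by ring
        _ ≤ α * (n - α) * (w ^ 2 * p ^ 2) + α * (n - 4 * α) * ((w * p) * (q * w)) :=
          add_le_add i1 i2
        _ = w ^ 2 * (α * (n - α) * p ^ 2 + α * (n - 4 * α) * (q * p)) := by ring
        _ ≤ w ^ 2 * (K * t1 ^ 2) := i3
        _ = _ := by ring
    exact le_of_mul_le_mul_right h2 ht0
  obtain ⟨δ, hδ⟩ : ∃ δ, δ = p * r - q ^ 2 := ⟨_, rfl⟩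
  have hδ0 : 0 ≤ δ := by rw [hδ]; linarith
  have hKδ : K * δ ≤ α ^ 2 * q ^ 2 := by rw [hK, hδ]; linear_combination hC
  have hE : δ * ((n - α) * t1 + (n - 4 * α) * w) ≤ α * w ^ 2 * t1 := by
    have hS : 0 ≤ (n - α) * t1 + (n - 4 * α) * w :=
      add_nonneg (mul_nonneg (by linarith) ht0.le) (mul_nonneg (by linarith) hw0.le)
    have j1 : (K * δ) * ((n - α) * t1 + (n - 4 * α) * w) ≤
        (α ^ 2 * q ^ 2) * ((n - α) * t1 + (n - 4 * α) * w) := mul_le_mul_of_nonneg_right hKδ hS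
    have j2 : α * (α * q ^ 2 * ((n - α) * t1 + (n - 4 * α) * w)) ≤ α * (K * w ^ 2 * t1) :=
      mul_le_mul_of_nonneg_left hM (by linarith)
    have : K * (δ * ((n - α) * t1 + (n - 4 * α) * w)) ≤ K * (α * w ^ 2 * t1) := by
      calc K * (δ * ((n - α) * t1 + (n - 4 * α) * w)) =
          (K * δ) * ((n - α) * t1 + (n - 4 * α) * w) := by ring
        _ ≤ (α ^ 2 * q ^ 2) * ((n - α) * t1 + (n - 4 * α) * w) := j1
        _ = α * (α * q ^ 2 * ((n - α) * t1 + (n - 4 * α) * w)) := by ring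
        _ ≤ α * (K * w ^ 2 * t1) := j2
        _ = _ := by ring
    exact le_of_mul_le_mul_left this hK0
  obtain ⟨t2, ht2⟩ : ∃ t2, t2 = p + 2 * q + r := ⟨_, rfl⟩
  have hrel : t2 = t1 + w := by rw [ht2, ht1, hw]; ring
  have ht20 : 0 < t2 := by linarith
  rw [← ht1, ← ht2] at hB ⊢
  -- X bound
  have hX : -(t2 * δ) ≤ t1 * (t1 * t2 - p * t3) := by
    have : t1 ^ 2 - p * t2 = -δ := by rw [ht1, ht2, hδ]; ring
    have h3 : p * (t1 * t3) ≤ p * t2 ^ 2 := mul_le_mul_of_nonneg_left hB hp.le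
    have : t2 * (t1 ^ 2 - p * t2) = -(t2 * δ) := by rw [this]; ring
    linear_combination h3 - this
  have hX2 : α * (n - 4 * α) * (-(t2 * δ)) ≤ α * (n - 4 * α) * (t1 * (t1 * t2 - p * t3)) :=
    mul_le_mul_of_nonneg_left hX hn4
  have hdd : 0 ≤ ((n - 3 * α) ^ 2 - α ^ 2) * (t2 ^ 2 - t1 * t3) * t1 :=
    mul_nonneg (mul_nonneg (by nlinarith) (by linarith)) ht0.le
  have hE2 : α * (δ * ((n - α) * t1 + (n - 4 * α) * w)) ≤ α * (α * w ^ 2 * t1) :=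
    mul_le_mul_of_nonneg_left hE (by linarith)
  have hid : t1 * ((2 * α * t1 + (n - 3 * α) * t2) ^ 2 - ((2 * α - α) * p + (n - 3 * α + α) * t1) *
      ((2 * α + α) * t2 + (n - 3 * α - α) * t3)) =
      3 * α ^ 2 * (t1 ^ 2 - p * t2) * t1 + ((n - 3 * α) ^ 2 - α ^ 2) * (t2 ^ 2 - t1 * t3) * t1
      + α * (n - 4 * α) * (t1 * (t1 * t2 - p * t3)) + α ^ 2 * (t2 - t1) ^ 2 * t1 := by ring
  have h9 : t1 ^ 2 - p * t2 = -δ := by rw [ht1, ht2, hδ]; ring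
  rw [h9, show t2 - t1 = w by linarith] at hid
  rw [hrel] at hX2
  have : 0 ≤ t1 * ((2 * α * t1 + (n - 3 * α) * t2) ^ 2 -
      ((2 * α - α) * p + (n - 3 * α + α) * t1) *
      ((2 * α + α) * t2 + (n - 3 * α - α) * t3)) := by
    rw [hid]
    rw [hrel] at hdd ⊢
    linear_combination hdd + hX2 + hE2
  have := nonneg_of_mul_nonneg_right this ht0
  linarith

/-- The constraint deduced from the behaviour at the origin. -/
def Cstr (α : ℝ) (m : ℕ) : Prop :=
  ((m : ℝ) - 1 - α ^ 2) * (Fw α m * Fw (3 * α) m) ≤ ((m : ℝ) - 1) * Fw (2 * α) m ^ 2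

lemma alpha_le_of_Cstr (α : ℝ) (h0 : 5 / 7 < α) (h1 : α < 1) (hC3 : Cstr α 3) (hC7 : Cstr α 7) :
    α ≤ 773 / 1000 := by
  by_contra hcon
  push Not at hcon
  unfold Cstr at *
  simp only [Fw, Finset.prod_range_succ, Finset.range_zero, Finset.prod_empty] at hC3 hC7
  push_cast at hC3 hC7
  have hs : α < 783 / 1000 := by
    by_contra hcon2
    push Not at hcon2
    have h : 0 < -134 + 380 * α - 377 * α ^ 2 + 162 * α ^ 3 - 27 * α ^ 4 := by
      obtain ⟨t, rfl⟩ : ∃ t, α = 783 / 1000 + t := ⟨α - 783 / 1000, by ring⟩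
      have ht : 0 ≤ t := by linarith
      have ht1 : t ≤ 217 / 1000 := by linarith
      have a2 : t ^ 2 ≤ 217 / 1000 * t := by nlinarith
      have a3 : t ^ 3 ≤ (217 / 1000) ^ 2 * t := by nlinarith
      have a4 : t ^ 4 ≤ (217 / 1000) ^ 3 * t := by nlinarith [mul_nonneg ht ht]
      have b2 : 0 ≤ t ^ 2 := by positivity
      have b3 : 0 ≤ t ^ 3 := by positivity
      nlinarith
    have h2 : 0 < (1 - α) ^ 2 * α ^ 2 *
        (-134 + 380 * α - 377 * α ^ 2 + 162 * α ^ 3 - 27 * α ^ 4) :=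
      mul_pos (mul_pos (pow_pos (by linarith) 2) (pow_pos (by linarith) 2)) h
    nlinarith
  have h : 0 < -255813984 + 1414103616 * α - 3430992768 * α ^ 2 + 4845761184 * α ^ 3
      - 4444687734 * α ^ 4 + 2791767588 * α ^ 5 - 1231865589 * α ^ 6 + 384942642 * α ^ 7
      - 84664095 * α ^ 8 + 12829296 * α ^ 9 - 1282443 * α ^ 10 + 77274 * α ^ 11
      - 2187 * α ^ 12 := by
    obtain ⟨t, rfl⟩ : ∃ t, α = 773 / 1000 + t := ⟨α - 773 / 1000, by ring⟩
    have ht : 0 ≤ t := by linarith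
    have ht1 : t ≤ 1 / 100 := by linarith
    have ub : ∀ k : ℕ, t ^ (k + 1) ≤ (1 / 100) ^ k * t := fun k => by
      rw [pow_succ]; exact mul_le_mul_of_nonneg_right (pow_le_pow_left₀ ht ht1 k) ht
    have lb : ∀ k : ℕ, 0 ≤ t ^ k := fun k => pow_nonneg ht k
    have u2 := ub 1
    have u3 := ub 2
    have u4 := ub 3
    have u5 := ub 4
    have u6 := ub 5
    have u7 := ub 6
    have u8 := ub 7
    have u9 := ub 8
    have u10 := ub 9
    have u11 := ub 10
    have u12 := ub 11
    norm_num at u2 u3 u4 u5 u6 u7 u8 u9 u10 u11 u12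
    have l2 := lb 2
    have l3 := lb 3
    have l4 := lb 4
    have l5 := lb 5
    have l6 := lb 6
    have l7 := lb 7
    have l8 := lb 8
    have l9 := lb 9
    have l10 := lb 10
    have l11 := lb 11
    have l12 := lb 12
    ring_nf
    ring_nf at u2 u3 u4 u5 u6 u7 u8 u9 u10 u11 u12
    linarith
  have h2 := mul_pos (mul_pos (pow_pos (by linarith : 0 < 1 - α) 2)
    (pow_pos (by linarith : 0 < α) 2)) h
  have : ((7 : ℝ) - 1) * ((0 + 1 - 2 * α) * (1 + 1 - 2 * α) * (2 + 1 - 2 * α) * (3 + 1 - 2 * α) *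
    (4 + 1 - 2 * α) * (5 + 1 - 2 * α) * (6 + 1 - 2 * α)) ^ 2 -
    ((7 : ℝ) - 1 - α ^ 2) * (((0 + 1 - α) * (1 + 1 - α) * (2 + 1 - α) * (3 + 1 - α) *
    (4 + 1 - α) * (5 + 1 - α) * (6 + 1 - α)) * ((0 + 1 - 3 * α) * (1 + 1 - 3 * α) * (2 + 1 - 3 * α)
    * (3 + 1 - 3 * α) * (4 + 1 - 3 * α) * (5 + 1 - 3 * α) * (6 + 1 - 3 * α))) < 0 := by
    rw [← neg_pos]
    refine lt_of_lt_of_eq h2 ?_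
    ring
  norm_num at hC7 this
  linarith

lemma Vw_vals_six (α : ℝ) :
    Vw α 6 1 = 1764 * α - 4872 * α ^ 2 + 5145 * α ^ 3 - 2625 * α ^ 4 + 651 * α ^ 5 - 63 * α ^ 6 ∧
    Vw α 6 2 = 3248 * α ^ 2 - 8820 * α ^ 3 + 8750 * α ^ 4 - 3780 * α ^ 5 + 602 * α ^ 6 ∧
    Vw α 6 3 = 4410 * α ^ 3 - 10500 * α ^ 4 + 8190 * α ^ 5 - 2100 * α ^ 6 ∧
    Vw α 6 4 = 4200 * α ^ 4 - 7560 * α ^ 5 + 3360 * α ^ 6 ∧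
    Vw α 6 5 = 2520 * α ^ 5 - 2520 * α ^ 6 ∧
    Vw α 6 6 = 720 * α ^ 6 := by
  refine ⟨?_, ?_, ?_, ?_, ?_, ?_⟩ <;>
    simp only [Vw, Fw, Finset.sum_range_succ, Finset.prod_range_succ, Finset.range_zero,
      Finset.sum_empty, Finset.prod_empty, Nat.choose] <;> push_cast <;> ring

lemma LC_base (α : ℝ) (h0 : 5 / 7 < α) (h1 : α ≤ 773 / 1000) (i : ℕ) :
    LCat α 6 (i + 1) := by
  obtain ⟨a1, a2, a3, a4, a5, a6⟩ := Vw_vals_six α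
  have hs : 0 ≤ (1 - α) := by linarith
  have hα : 0 ≤ α := by linarith
  rcases i with _ | _ | _ | _ | i
  · unfold LCat
    simp only [zero_add, Nat.reduceAdd]
    rw [a1, a2, a3, ← sub_nonneg]
    have h : 0 ≤ 2770264 - 11746672 * α + 20076182 * α ^ 2 - 17801014 * α ^ 3 + 8671922 * α ^ 4
        - 2207842 * α ^ 5 + 230104 * α ^ 6 := by
      obtain ⟨t, rfl⟩ : ∃ t, α = 773 / 1000 - t := ⟨773 / 1000 - α, by ring⟩
      have ht : 0 ≤ t := by linarith
      ring_nf
      positivity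
    have := mul_nonneg (mul_nonneg (pow_nonneg hα 4) (pow_nonneg hs 2)) h
    refine le_of_le_of_eq this ?_
    ring
  · unfold LCat
    simp only [zero_add, Nat.reduceAdd]
    rw [a2, a3, a4, ← sub_nonneg]
    have h : 0 ≤ 5806500 - 19398120 * α + 23540580 * α ^ 2 - 12371520 * α ^ 3
        + 2387280 * α ^ 4 := by
      obtain ⟨t, rfl⟩ : ∃ t, α = 773 / 1000 - t := ⟨773 / 1000 - α, by ring⟩
      have ht : 0 ≤ t := by linarith
      ring_nf
      positivity
    have := mul_nonneg (mul_nonneg (pow_nonneg hα 6) (pow_nonneg hs 2)) h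
    refine le_of_le_of_eq this ?_
    ring
  · unfold LCat
    simp only [zero_add, Nat.reduceAdd]
    rw [a3, a4, a5, ← sub_nonneg]
    have h : 0 ≤ 6526800 - 12877200 * α + 5997600 * α ^ 2 := by
      obtain ⟨t, rfl⟩ : ∃ t, α = 773 / 1000 - t := ⟨773 / 1000 - α, by ring⟩
      have ht : 0 ≤ t := by linarith
      ring_nf
      positivity
    have := mul_nonneg (mul_nonneg (pow_nonneg hα 8) (pow_nonneg hs 2)) h
    refine le_of_le_of_eq this ?_
    ring
  · unfold LCat
    simp only [zero_add, Nat.reduceAdd]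
    rw [a4, a5, a6, ← sub_nonneg]
    have h : 0 ≤ 3326400 - 3931200 * α := by linarith
    have := mul_nonneg (mul_nonneg (pow_nonneg hα 10) hs) h
    refine le_of_le_of_eq this ?_
    ring
  · exact LCat_of_lt _ _ _ (by omega)

lemma LC_mid (α : ℝ) (h0 : 5 / 7 < α) (h1 : α < 1) (hC : ∀ m, 2 ≤ m → Cstr α m)
    (m : ℕ) (hm : 6 ≤ m) : ∀ i, LCat α m (i + 1) := by
  have hα := alpha_le_of_Cstr α h0 h1 (hC 3 (by norm_num)) (hC 7 (by norm_num))
  have hα0 : 0 < α := by linarith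
  induction m, hm using Nat.le_induction with
  | base => exact LC_base α h0 hα
  | succ m hm ih =>
    intro i
    have hm' : (6 : ℝ) ≤ m := by exact_mod_cast hm
    have hmm : α * (m + 2) ≤ m + 1 := by nlinarith
    rcases i with _ | i
    · by_cases hD : LCat α m 0
      · exact LCat_step α hα0 h1 m 0 hmm hD (ih 0)
      obtain ⟨hp, hq, hr⟩ := F_pos_all α h0 h1 m (by omega)
      have hCm := hC m (by omega)
      have hB := ih 0
      unfold LCat at hD hB ⊢
      unfold Cstr at hCm
      simp only [zero_add, Nat.reduceAdd] at hD hB ⊢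
      push Not at hD
      have r1 := Vw_succ α m 0
      have r2 := Vw_succ α m 1
      have r3 := Vw_succ α m 2
      push_cast at r1 r2 r3
      simp only [zero_add, Nat.reduceAdd] at r1 r2 r3
      rw [r1, r2, r3]
      rw [Vw_zero_right, Vw_one_right, Vw_two_right] at *
      have := step3_alg α (m + 1) (Fw α m) (-Fw (2 * α) m) (Fw (3 * α) m) (Vw α m 3) h0 hα
        (by linarith) hp hq hr (by nlinarith) (by nlinarith)
        (by
          rcases Nat.lt_or_ge m 8 with h | h
          · right; exact eta_bound α h0 hα m (by omega)
          · left
            have : (8 : ℝ) ≤ m := by exact_mod_cast h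
            linarith)
        (by convert hB using 1 <;> ring)
      convert this using 1 <;> ring
    · exact LCat_step α hα0 h1 m (i + 1) hmm (ih i) (ih (i + 1))

/-- Normalised rising products, tending to `1 / Γ(1 - s)`. -/
noncomputable def Gw (s : ℝ) (m : ℕ) : ℝ := (m : ℝ) ^ s * Fw s m / (m.factorial : ℝ)

lemma Fw_eq_zero (k m : ℕ) (h : k < m) : Fw ((k : ℝ) + 1) m = 0 := by
  unfold Fw
  exact Finset.prod_eq_zero (Finset.mem_range.mpr h) (by ring)

lemma Gw_tendsto (s : ℝ) : Tendsto (Gw s) atTop (𝓝 (1 / Real.Gamma (1 - s))) := by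
  by_cases hG : Real.Gamma (1 - s) = 0
  · rw [hG, div_zero]
    rw [Real.Gamma_eq_zero_iff] at hG
    obtain ⟨k, hk⟩ := hG
    have hs : s = (k : ℝ) + 1 := by linarith
    refine tendsto_const_nhds.congr' ?_
    filter_upwards [eventually_gt_atTop k] with m hm
    rw [Gw, hs, Fw_eq_zero k m hm]; simp
  · have h1 := (Real.GammaSeq_tendsto_Gamma (1 - s)).inv₀ hG
    have h2 : Tendsto (fun n : ℕ => (n : ℝ) / ((n : ℝ) + (1 - s))) atTop (𝓝 1) :=
      tendsto_natCast_div_add_atTop (1 - s)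
    have h3 := h1.mul h2
    rw [mul_one, ← one_div] at h3
    refine h3.congr' ?_
    filter_upwards [eventually_gt_atTop 0, eventually_gt_atTop ⌈s⌉₊] with n hn hns
    have hn' : (0 : ℝ) < n := by exact_mod_cast hn
    have hs' : s < n := lt_of_le_of_lt (Nat.le_ceil s) (by exact_mod_cast hns)
    have hF : ∏ j ∈ Finset.range (n + 1), (1 - s + (j : ℝ)) = Fw s (n + 1) := by
      unfold Fw
      exact Finset.prod_congr rfl (fun j _ => by ring)
    rw [Real.GammaSeq, hF, Fw_succ, Gw, Real.rpow_sub hn', Real.rpow_one]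
    have hf : (n.factorial : ℝ) ≠ 0 := by positivity
    have hp : (n : ℝ) ^ s ≠ 0 := by positivity
    have hd : (n : ℝ) + (1 - s) ≠ 0 := by linarith
    rw [show (n : ℝ) + 1 - s = (n : ℝ) + (1 - s) by ring]
    field_simp

lemma Hw_bound (s : ℝ) (L : ℕ) (hs : 0 ≤ s) (hL : s ≤ L) (m : ℕ) :
    ((m : ℝ) + 1) ^ s * |Fw s m| / (m.factorial : ℝ) ≤ ((L : ℝ) + 1) ^ s * Real.exp L := by
  rcases le_total m L with hm | hm
  · have h1 : |Fw s m| ≤ (L : ℝ) ^ m := by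
      unfold Fw
      rw [Finset.abs_prod]
      calc ∏ i ∈ Finset.range m, |(i : ℝ) + 1 - s| ≤ ∏ i ∈ Finset.range m, (L : ℝ) := by
            apply Finset.prod_le_prod
            · intros; positivity
            · intro i hi
              have : i + 1 ≤ L := by have := Finset.mem_range.mp hi; omega
              have : (i : ℝ) + 1 ≤ L := by exact_mod_cast this
              rw [abs_le]
              constructor
              · have : (0 : ℝ) ≤ i := by positivity
                linarith
              · linarith
        _ = _ := by simp
    have h2 : ((m : ℝ) + 1) ^ s ≤ ((L : ℝ) + 1) ^ s :=
      Real.rpow_le_rpow (by positivity) (by have : (m : ℝ) ≤ L := by exact_mod_cast hm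
                                            linarith) hs
    have h3 : (L : ℝ) ^ m / (m.factorial : ℝ) ≤ Real.exp L :=
      Real.pow_div_factorial_le_exp _ (by positivity) m
    rw [mul_div_assoc]
    apply mul_le_mul h2 _ (by positivity) (by positivity)
    refine le_trans ?_ h3
    gcongr
  · induction m, hm using Nat.le_induction with
    | base =>
      have h1 : |Fw s L| ≤ (L : ℝ) ^ L := by
        unfold Fw
        rw [Finset.abs_prod]
        calc ∏ i ∈ Finset.range L, |(i : ℝ) + 1 - s| ≤ ∏ i ∈ Finset.range L, (L : ℝ) := by
              apply Finset.prod_le_prod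
              · intros; positivity
              · intro i hi
                have : i + 1 ≤ L := by have := Finset.mem_range.mp hi; omega
                have : (i : ℝ) + 1 ≤ L := by exact_mod_cast this
                rw [abs_le]
                constructor
                · have : (0 : ℝ) ≤ i := by positivity
                  linarith
                · linarith
          _ = _ := by simp
      have h3 : (L : ℝ) ^ L / (L.factorial : ℝ) ≤ Real.exp L :=
        Real.pow_div_factorial_le_exp _ (by positivity) L
      rw [mul_div_assoc]
      apply mul_le_mul le_rfl _ (by positivity) (by positivity)
      refine le_trans ?_ h3
      gcongr
    | succ m hm ih =>
      refine le_trans ?_ ih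
      have hm' : (L : ℝ) ≤ m := by exact_mod_cast hm
      have hm0 : (0 : ℝ) < (m : ℝ) + 1 := by positivity
      rw [Fw_succ, abs_mul, abs_of_nonneg (by linarith : 0 ≤ (m : ℝ) + 1 - s), Nat.factorial_succ]
      push_cast
      have h1 : 1 - s / ((m : ℝ) + 1) ≤ Real.exp (-(s / ((m : ℝ) + 1))) := by
        have := Real.add_one_le_exp (-(s / ((m : ℝ) + 1)))
        linarith
      have h2 : (1 + 1 / ((m : ℝ) + 1)) ^ s ≤ Real.exp (s / ((m : ℝ) + 1)) := by
        have h : 1 + 1 / ((m : ℝ) + 1) ≤ Real.exp (1 / ((m : ℝ) + 1)) := by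
          have := Real.add_one_le_exp (1 / ((m : ℝ) + 1))
          linarith
        calc (1 + 1 / ((m : ℝ) + 1)) ^ s ≤ (Real.exp (1 / ((m : ℝ) + 1))) ^ s :=
              Real.rpow_le_rpow (by positivity) h hs
          _ = _ := by rw [← Real.exp_mul]; congr 1; ring
      have h3 : (1 + 1 / ((m : ℝ) + 1)) ^ s * (1 - s / ((m : ℝ) + 1)) ≤ 1 := by
        have h0 : 0 ≤ 1 - s / ((m : ℝ) + 1) := by
          rw [sub_nonneg, div_le_one hm0]; linarith
        calc _ ≤ Real.exp (s / ((m : ℝ) + 1)) * Real.exp (-(s / ((m : ℝ) + 1))) :=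
              mul_le_mul h2 h1 h0 (by positivity)
          _ = 1 := by rw [← Real.exp_add]; simp
      have h4 : ((m : ℝ) + 1 + 1) ^ s = ((m : ℝ) + 1) ^ s * (1 + 1 / ((m : ℝ) + 1)) ^ s := by
        rw [← Real.mul_rpow (by positivity) (by positivity)]
        congr 1; field_simp
      rw [h4]
      calc _ = (((m : ℝ) + 1) ^ s * |Fw s m| / (m.factorial : ℝ)) *
            ((1 + 1 / ((m : ℝ) + 1)) ^ s * (1 - s / ((m : ℝ) + 1))) := by
            have hf : (m.factorial : ℝ) ≠ 0 := by positivity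
            field_simp
        _ ≤ (((m : ℝ) + 1) ^ s * |Fw s m| / (m.factorial : ℝ)) * 1 :=
            mul_le_mul_of_nonneg_left h3 (by positivity)
        _ = _ := mul_one _

/-- Coefficient bound. -/
noncomputable def Bw (α : ℝ) (j : ℕ) : ℝ := ((j : ℝ) + 2) ^ (((j : ℝ) + 1) * α) * Real.exp (j + 1)

lemma Bw_pos (α : ℝ) (j : ℕ) : 0 < Bw α j := by unfold Bw; positivity

lemma Gw_bound (α : ℝ) (h0 : 0 < α) (h1 : α < 1) (j m : ℕ) :
    |Gw (((j : ℝ) + 1) * α) m| ≤ Bw α j := by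
  have hs : 0 ≤ ((j : ℝ) + 1) * α := by positivity
  have h := Hw_bound (((j : ℝ) + 1) * α) (j + 1) hs (by push_cast; nlinarith) m
  push_cast at h
  rw [show (j : ℝ) + 1 + 1 = j + 2 by ring] at h
  refine le_trans ?_ h
  unfold Gw
  rw [abs_div, abs_mul, abs_of_nonneg (by positivity : (0 : ℝ) ≤ (m : ℝ) ^ (((j : ℝ) + 1) * α)),
    Nat.abs_cast]
  gcongr
  linarith

lemma summ_B (α : ℝ) (h1 : α < 1) (X : ℝ) (hX : 1 ≤ X) :
    Summable (fun j : ℕ => X ^ j / (j.factorial : ℝ) * Bw α j) := by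
  have hX0 : 0 < X := by linarith
  have hlim : Tendsto (fun j : ℕ => X * Real.exp 4 * ((j : ℝ) + 2) ^ (-(1 - α))) atTop (𝓝 0) := by
    have ha : Tendsto (fun j : ℕ => ((j : ℝ) + 2)) atTop atTop :=
      tendsto_atTop_add_const_right _ _ tendsto_natCast_atTop_atTop
    have := ((tendsto_rpow_neg_atTop (by linarith : 0 < 1 - α)).comp ha).const_mul (X * Real.exp 4)
    simpa using this
  have hg : Summable (fun j : ℕ => (1 / 2 : ℝ) ^ j) := summable_geometric_two
  refine Summable.of_norm_bounded_eventually_nat hg ?_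
  filter_upwards [hlim.eventually (gt_mem_nhds (by norm_num : (0 : ℝ) < 1 / 2))] with j hj
  have hb := Bw_pos α j
  rw [Real.norm_of_nonneg (by positivity)]
  have hj2 : (0 : ℝ) < (j : ℝ) + 2 := by positivity
  have k1 : ((j : ℝ) + 2) ^ (j + 1) / ((j + 1).factorial : ℝ) ≤ Real.exp ((j : ℝ) + 2) :=
    Real.pow_div_factorial_le_exp _ (by positivity) _
  have k2 : (1 : ℝ) / (j.factorial : ℝ) ≤
      ((j : ℝ) + 1) * Real.exp ((j : ℝ) + 2) / ((j : ℝ) + 2) ^ (j + 1) := by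
    rw [Nat.factorial_succ] at k1
    push_cast at k1
    have hf : (0 : ℝ) < (j.factorial : ℝ) := by positivity
    rw [div_le_iff₀ (by positivity)] at k1
    rw [div_le_div_iff₀ hf (by positivity)]
    linarith
  have k3 : (j : ℝ) + 1 ≤ Real.exp j := Real.add_one_le_exp _
  have e1 : ((j : ℝ) + 2) ^ (((j : ℝ) + 1) * α) / ((j : ℝ) + 2) ^ (j + 1) =
      (((j : ℝ) + 2) ^ (-(1 - α))) ^ (j + 1) := by
    rw [← Real.rpow_natCast _ (j + 1), ← Real.rpow_natCast _ (j + 1), ← Real.rpow_sub hj2,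
      ← Real.rpow_mul hj2.le]
    congr 1; push_cast; ring
  calc X ^ j / (j.factorial : ℝ) * Bw α j = X ^ j * (1 / (j.factorial : ℝ)) * Bw α j := by ring
    _ ≤ X ^ (j + 1) * (Real.exp j * Real.exp ((j : ℝ) + 2) / ((j : ℝ) + 2) ^ (j + 1)) * Bw α j := by
        have k4 : X ^ j ≤ X ^ (j + 1) := pow_le_pow_right₀ hX (by omega)
        have k5 := k2.trans (div_le_div_of_nonneg_right
          (mul_le_mul_of_nonneg_right k3 (Real.exp_pos ((j : ℝ) + 2)).le)
          (by positivity : (0 : ℝ) ≤ ((j : ℝ) + 2) ^ (j + 1)))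
        exact mul_le_mul_of_nonneg_right (mul_le_mul k4 k5 (by positivity) (by positivity)) hb.le
    _ = X ^ (j + 1) * (Real.exp j * Real.exp ((j : ℝ) + 2) * Real.exp (j + 1)) *
        (((j : ℝ) + 2) ^ (((j : ℝ) + 1) * α) / ((j : ℝ) + 2) ^ (j + 1)) := by
        unfold Bw; ring
    _ ≤ X ^ (j + 1) * (Real.exp 4) ^ (j + 1) * (((j : ℝ) + 2) ^ (-(1 - α))) ^ (j + 1) := by
        rw [e1]
        gcongr
        rw [← Real.exp_add, ← Real.exp_add, ← Real.exp_nat_mul]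
        apply Real.exp_le_exp.mpr
        push_cast
        have : (0 : ℝ) ≤ j := by positivity
        linarith
    _ = (X * Real.exp 4 * ((j : ℝ) + 2) ^ (-(1 - α))) ^ (j + 1) := by rw [mul_pow, mul_pow]
    _ ≤ (1 / 2) ^ (j + 1) := by gcongr
    _ ≤ (1 / 2) ^ j := by
        apply pow_le_pow_of_le_one (by norm_num) (by norm_num) (by omega)

lemma desc_succ (u j : ℕ) :
    (u.descFactorial (j + 1) : ℝ) = ((u : ℝ) - j) * (u.descFactorial j : ℝ) := by
  rw [Nat.descFactorial_succ]
  rcases lt_or_ge u j with h | h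
  · rw [Nat.descFactorial_eq_zero_iff_lt.mpr h]; simp
  · push_cast [Nat.cast_sub h]; ring

lemma desc_tendsto (α x : ℝ) (h0 : 0 < α) (u : ℕ → ℕ)
    (hu : Tendsto (fun m : ℕ => (u m : ℝ) / (m : ℝ) ^ α) atTop (𝓝 x)) (j : ℕ) :
    Tendsto (fun m : ℕ => ((u m).descFactorial j : ℝ) / ((m : ℝ) ^ α) ^ j) atTop (𝓝 (x ^ j)) := by
  induction j with
  | zero => simp
  | succ j ih =>
    have hz : Tendsto (fun m : ℕ => (j : ℝ) / (m : ℝ) ^ α) atTop (𝓝 0) :=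
      tendsto_const_nhds.div_atTop ((tendsto_rpow_atTop h0).comp tendsto_natCast_atTop_atTop)
    have := (hu.sub hz).mul ih
    rw [sub_zero, ← pow_succ'] at this
    refine this.congr (fun m => ?_)
    rw [desc_succ, pow_succ', ← sub_div, div_mul_div_comm]

lemma V_series (α : ℝ) (m i : ℕ) (hm : 0 < m) :
    (m : ℝ) ^ α / (m.factorial : ℝ) * Vw α m i =
    ∑' j : ℕ, (-1 : ℝ) ^ j * ((i.descFactorial j : ℝ) / ((m : ℝ) ^ α) ^ j / (j.factorial : ℝ)) *
      Gw (((j : ℝ) + 1) * α) m := by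
  have hm' : (0 : ℝ) < m := by exact_mod_cast hm
  rw [tsum_eq_sum (s := Finset.range (i + 1))]
  · unfold Vw
    rw [Finset.mul_sum]
    refine Finset.sum_congr rfl (fun j _ => ?_)
    have e : (i.choose j : ℝ) = (i.descFactorial j : ℝ) / (j.factorial : ℝ) := by
      rw [Nat.descFactorial_eq_factorial_mul_choose]
      have : (j.factorial : ℝ) ≠ 0 := by positivity
      push_cast; field_simp
    have e2 : (m : ℝ) ^ (((j : ℝ) + 1) * α) = ((m : ℝ) ^ α) ^ j * (m : ℝ) ^ α := by
      rw [← pow_succ, ← Real.rpow_natCast, ← Real.rpow_mul hm'.le]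
      congr 1; push_cast; ring
    rw [Gw, e, e2]
    have : (m : ℝ) ^ α ≠ 0 := by positivity
    field_simp
  · intro j hj
    have : i < j := by simp at hj; omega
    rw [Nat.descFactorial_eq_zero_iff_lt.mpr this]; simp

/-- The density. -/
noncomputable def fw (α x : ℝ) : ℝ := ∑' j : ℕ,
  (-1 : ℝ) ^ j * (x ^ j / (j.factorial : ℝ)) * (1 / Real.Gamma (1 - ((j : ℝ) + 1) * α))

lemma V_tendsto (α x : ℝ) (h0 : 0 < α) (h1 : α < 1) (u : ℕ → ℕ)
    (hu : Tendsto (fun m : ℕ => (u m : ℝ) / (m : ℝ) ^ α) atTop (𝓝 x)) :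
    Tendsto (fun m : ℕ => (m : ℝ) ^ α / (m.factorial : ℝ) * Vw α m (u m)) atTop (𝓝 (fw α x)) := by
  have hX : 1 ≤ |x| + 1 := by linarith [abs_nonneg x]
  have key : Tendsto (fun m : ℕ => ∑' j : ℕ, (-1 : ℝ) ^ j *
      (((u m).descFactorial j : ℝ) / ((m : ℝ) ^ α) ^ j / (j.factorial : ℝ)) *
      Gw (((j : ℝ) + 1) * α) m) atTop (𝓝 (fw α x)) := by
    refine tendsto_tsum_of_dominated_convergence (summ_B α h1 (|x| + 1) hX) ?_ ?_
    · intro j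
      exact (((desc_tendsto α x h0 u hu j).div_const _).const_mul _).mul (Gw_tendsto _)
    · have hx : x < |x| + 1 := by linarith [le_abs_self x]
      filter_upwards [hu.eventually (gt_mem_nhds hx)] with m hm j
      rw [norm_mul, norm_mul, norm_pow, norm_neg, norm_one, one_pow, one_mul]
      refine mul_le_mul ?_ (Gw_bound α h0 h1 j m) (norm_nonneg _) (by positivity)
      rw [Real.norm_of_nonneg (by positivity)]
      gcongr
      calc ((u m).descFactorial j : ℝ) / ((m : ℝ) ^ α) ^ j ≤ (u m : ℝ) ^ j / ((m : ℝ) ^ α) ^ j := by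
            gcongr
            exact_mod_cast Nat.descFactorial_le_pow _ _
        _ = ((u m : ℝ) / (m : ℝ) ^ α) ^ j := by rw [div_pow]
        _ ≤ _ := by gcongr
  refine key.congr' ?_
  filter_upwards [eventually_gt_atTop 0] with m hm
  rw [V_series α m _ hm]

lemma disc_concave (b : ℕ → ℝ) (N : ℕ)
    (h : ∀ i, i + 2 ≤ N → b (i + 2) - b (i + 1) ≤ b (i + 1) - b i) (k : ℕ) (hk : k ≤ N) :
    ((N : ℝ) - k) * b 0 + k * b N ≤ N * b k := by
  rcases hk.eq_or_lt with rfl | hlt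
  · simp
  have s1 : ∀ k, k + 1 ≤ N → (k : ℝ) * (b (k + 1) - b k) ≤ b k - b 0 := by
    intro k
    induction k with
    | zero => intro _; simp
    | succ k ih =>
      intro hk
      have h1 := ih (by omega)
      have h2 := h k (by omega)
      have h3 : (k : ℝ) * (b (k + 2) - b (k + 1)) ≤ k * (b (k + 1) - b k) :=
        mul_le_mul_of_nonneg_left h2 (by positivity)
      push_cast
      rw [show k + 1 + 1 = k + 2 from rfl]
      linarith
  have s2 : ∀ j, k + j + 1 ≤ N → b (k + j + 1) - b (k + j) ≤ b (k + 1) - b k := by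
    intro j
    induction j with
    | zero => intro _; simp
    | succ j ih => intro hj; exact (h (k + j) (by omega)).trans (ih (by omega))
  have s3 : ∀ j, k + j ≤ N → b (k + j) - b k ≤ j * (b (k + 1) - b k) := by
    intro j
    induction j with
    | zero => intro _; simp
    | succ j ih =>
      intro hj
      have h1 := ih (by omega)
      have h2 := s2 j (by omega)
      push_cast
      rw [← add_assoc]
      linarith
  have t1 := s1 k hlt
  have t3 := s3 (N - k) (by omega)
  rw [Nat.cast_sub hk, Nat.add_sub_cancel' hk] at t3
  have hkN : (0 : ℝ) ≤ (N : ℝ) - k := by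
    have : (k : ℝ) ≤ N := by exact_mod_cast hk
    linarith
  have u1 := mul_le_mul_of_nonneg_left t1 hkN
  have u3 := mul_le_mul_of_nonneg_left t3 (by positivity : (0 : ℝ) ≤ k)
  linarith

lemma V_ineq (α : ℝ) (h0 : 0 < α) (h1 : α < 1) (m : ℕ) (c : ℝ) (hc : 0 < c)
    (h : ∀ i, LCat α m (i + 1)) (k1 k k2 : ℕ) (a1 : 1 ≤ k1) (a2 : k1 ≤ k) (a3 : k ≤ k2)
    (a4 : k1 < k2) (a5 : k2 ≤ m) :
    (c * Vw α m k1) ^ (1 - ((k : ℝ) - k1) / ((k2 : ℝ) - k1)) *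
      (c * Vw α m k2) ^ (((k : ℝ) - k1) / ((k2 : ℝ) - k1)) ≤ c * Vw α m k := by
  have hpos : ∀ i, i ≤ m → 0 < c * Vw α m i := fun i hi => mul_pos hc (Vw_pos α h0 h1 m i hi)
  have hd := disc_concave (fun i => Real.log (c * Vw α m (k1 + i))) (k2 - k1) (by
    intro i hi
    obtain ⟨l, rfl⟩ : ∃ l, k1 = l + 1 := ⟨k1 - 1, by omega⟩
    have p0 := hpos (l + 1 + i) (by omega)
    have p1 := hpos (l + 1 + (i + 1)) (by omega)
    have p2 := hpos (l + 1 + (i + 2)) (by omega)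
    have hl := h (l + i)
    unfold LCat at hl
    have hl2 : (c * Vw α m (l + 1 + i)) * (c * Vw α m (l + 1 + (i + 2))) ≤
        (c * Vw α m (l + 1 + (i + 1))) ^ 2 := by
      rw [show l + 1 + i = l + i + 1 by ring, show l + 1 + (i + 2) = l + i + 1 + 2 by ring,
        show l + 1 + (i + 1) = l + i + 1 + 1 by ring]
      have := mul_le_mul_of_nonneg_left hl (by positivity : 0 ≤ c ^ 2)
      linarith
    have := Real.log_le_log (mul_pos p0 p2) hl2
    rw [Real.log_mul p0.ne' p2.ne', Real.log_pow] at this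
    push_cast at this
    linarith) (k - k1) (by omega)
  simp only [add_zero] at hd
  rw [Nat.add_sub_cancel' a2, Nat.add_sub_cancel' a4.le, Nat.cast_sub a2, Nat.cast_sub a4.le] at hd
  have q1 := hpos k1 (by omega)
  have q2 := hpos k2 a5
  have q := hpos k (by omega)
  have hD : (0 : ℝ) < (k2 : ℝ) - k1 := by
    have : (k1 : ℝ) < k2 := by exact_mod_cast a4
    linarith
  rw [← Real.log_le_log_iff (by positivity) q, Real.log_mul (by positivity) (by positivity),
    Real.log_rpow q1, Real.log_rpow q2]
  rw [← mul_le_mul_iff_right₀ hD]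
  refine le_trans (le_of_eq ?_) hd
  field_simp

lemma floor_tendsto (α x : ℝ) (h0 : 0 < α) (hx : 0 ≤ x) :
    Tendsto (fun m : ℕ => ((⌊x * (m : ℝ) ^ α⌋₊ + 1 : ℕ) : ℝ) / (m : ℝ) ^ α) atTop (𝓝 x) := by
  have ht : Tendsto (fun m : ℕ => (m : ℝ) ^ α) atTop atTop :=
    (tendsto_rpow_atTop h0).comp tendsto_natCast_atTop_atTop
  have h1 := (tendsto_nat_floor_mul_div_atTop hx).comp ht
  have h2 : Tendsto (fun m : ℕ => (1 : ℝ) / (m : ℝ) ^ α) atTop (𝓝 0) :=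
    tendsto_const_nhds.div_atTop ht
  have h3 := h1.add h2
  rw [add_zero] at h3
  refine h3.congr (fun m => ?_)
  simp only [Function.comp]
  push_cast
  rw [← add_div]

lemma fw_nonneg (α x : ℝ) (h0 : 0 < α) (h1 : α < 1) (hx : 0 ≤ x) : 0 ≤ fw α x :=
  ge_of_tendsto' (V_tendsto α x h0 h1 _ (floor_tendsto α x h0 hx))
    (fun m => mul_nonneg (by positivity) (Vw_nonneg α h0 h1 _ _))

lemma fw_LC_lt (α : ℝ) (h0 : 0 < α) (h1 : α < 1) (h : ∀ m, 6 ≤ m → ∀ i, LCat α m (i + 1))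
    (x y t : ℝ) (hx : 0 ≤ x) (hxy : x < y) (t0 : 0 < t) (t1 : t < 1) :
    fw α x ^ (1 - t) * fw α y ^ t ≤ fw α ((1 - t) * x + t * y) := by
  obtain ⟨z, hz⟩ : ∃ z, z = (1 - t) * x + t * y := ⟨_, rfl⟩
  have hxz : x ≤ z := by rw [hz]; nlinarith
  have hzy : z ≤ y := by rw [hz]; nlinarith
  rw [← hz]
  have ux := floor_tendsto α x h0 hx
  have uz := floor_tendsto α z h0 (hx.trans hxz)
  have uy := floor_tendsto α y h0 (hx.trans hxy.le)
  have vx := V_tendsto α x h0 h1 _ ux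
  have vz := V_tendsto α z h0 h1 _ uz
  have vy := V_tendsto α y h0 h1 _ uy
  have hθ := (uz.sub ux).div (uy.sub ux) (by linarith : y - x ≠ 0)
  have hzt : (z - x) / (y - x) = t := by
    rw [div_eq_iff (by linarith : y - x ≠ 0), hz]; ring
  rw [hzt] at hθ
  have hlim := (vx.rpow (hθ.const_sub 1) (Or.inr (by linarith))).mul (vy.rpow hθ (Or.inr t0))
  refine le_of_tendsto_of_tendsto hlim vz ?_
  have hsmall : Tendsto (fun m : ℕ => ((⌊y * (m : ℝ) ^ α⌋₊ + 1 : ℕ) : ℝ) / (m : ℝ) ^ α *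
      (m : ℝ) ^ (-(1 - α))) atTop (𝓝 0) := by
    have := uy.mul ((tendsto_rpow_neg_atTop (by linarith : 0 < 1 - α)).comp
      tendsto_natCast_atTop_atTop)
    rw [mul_zero] at this
    exact this
  filter_upwards [eventually_ge_atTop 6, hsmall.eventually (gt_mem_nhds one_pos),
    (uy.sub ux).eventually (lt_mem_nhds (by linarith : 0 < y - x))] with m hm hs hlt
  have hm0 : (0 : ℝ) < m := by have : 0 < m := by omega
                               exact_mod_cast this
  have hp : (0 : ℝ) < (m : ℝ) ^ α := by positivity
  have b1 : ⌊x * (m : ℝ) ^ α⌋₊ + 1 < ⌊y * (m : ℝ) ^ α⌋₊ + 1 := by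
    have : (((⌊x * (m : ℝ) ^ α⌋₊ + 1 : ℕ) : ℝ)) < ((⌊y * (m : ℝ) ^ α⌋₊ + 1 : ℕ) : ℝ) := by
      rw [← sub_div] at hlt
      have := (div_pos_iff_of_pos_right hp).mp hlt
      linarith
    exact_mod_cast this
  have b2 : ⌊y * (m : ℝ) ^ α⌋₊ + 1 ≤ m := by
    have e : (m : ℝ) ^ (-(1 - α)) = (m : ℝ) ^ α / m := by
      rw [show -(1 - α) = α - 1 by ring, Real.rpow_sub hm0, Real.rpow_one]
    rw [e, div_mul_div_cancel₀ hp.ne', div_lt_one hm0] at hs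
    exact_mod_cast hs.le
  have b3 : ⌊x * (m : ℝ) ^ α⌋₊ + 1 ≤ ⌊z * (m : ℝ) ^ α⌋₊ + 1 := by gcongr
  have b4 : ⌊z * (m : ℝ) ^ α⌋₊ + 1 ≤ ⌊y * (m : ℝ) ^ α⌋₊ + 1 := by gcongr
  have := V_ineq α h0 h1 m ((m : ℝ) ^ α / (m.factorial : ℝ)) (by positivity) (h m hm) _ _ _
    (by omega) b3 b4 b1 b2
  simp only [Pi.sub_apply, Pi.div_apply, ← sub_div, div_div_div_cancel_right₀ hp.ne']
  exact this

lemma fw_LC (α : ℝ) (h0 : 0 < α) (h1 : α < 1) (h : ∀ m, 6 ≤ m → ∀ i, LCat α m (i + 1)) :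
    LogConcaveOn' (fw α) (Set.Ici 0) := by
  intro x hx y hy t ht
  have hx : 0 ≤ x := hx
  have hy : 0 ≤ y := hy
  obtain ⟨t0, t1⟩ := ht
  rcases t0.eq_or_lt with rfl | t0
  · simp
  rcases t1.eq_or_lt with rfl | t1
  · simp
  rcases lt_trichotomy x y with hxy | rfl | hxy
  · exact fw_LC_lt α h0 h1 h x y t hx hxy t0 t1
  · rw [← Real.rpow_add_of_nonneg (fw_nonneg α x h0 h1 hx) (by linarith) t0.le,
      show (1 - t) * x + t * x = x by ring]
    simp
  · have := fw_LC_lt α h0 h1 h y x (1 - t) hy hxy (by linarith) (by linarith)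
    rw [show 1 - (1 - t) = t by ring] at this
    rw [mul_comm (fw α x ^ (1 - t)), show (1 - t) * x + t * y = t * y + (1 - t) * x by ring]
    exact this

lemma wright_eq (α x : ℝ) : wright (-α) (1 - α) (-x) = fw α x := by
  unfold wright fw
  refine tsum_congr (fun n => ?_)
  rw [show 1 - α + -α * (n : ℝ) = 1 - ((n : ℝ) + 1) * α by ring, neg_pow x n, one_div,
    div_eq_mul_inv, div_eq_mul_inv, mul_inv]
  ring

lemma a_pos (α : ℝ) (h0 : 2 / 3 < α) (h1 : α < 1) :
    0 < 1 / Real.Gamma (1 - α) ∧ 0 < 1 / Real.Gamma (1 - 3 * α) := by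
  constructor
  · exact one_div_pos.mpr (Real.Gamma_pos_of_pos (by linarith))
  · have e1 := Real.Gamma_add_one (by linarith : 1 - 3 * α ≠ 0)
    have e2 := Real.Gamma_add_one (by linarith : 1 - 3 * α + 1 ≠ 0)
    have hp : 0 < Real.Gamma (1 - 3 * α + 1 + 1) := Real.Gamma_pos_of_pos (by linarith)
    rw [e2, e1, ← mul_assoc] at hp
    have hneg : 0 < (1 - 3 * α + 1) * (1 - 3 * α) := mul_pos_of_neg_of_neg (by linarith) (by linarith)
    exact one_div_pos.mpr ((mul_pos_iff_of_pos_left hneg).mp hp)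

lemma Cstr_of (α : ℝ) (h0 : 5 / 7 < α) (h1 : α < 1)
    (hE : 1 / Real.Gamma (1 - α) * (1 / Real.Gamma (1 - 3 * α)) ≤ (1 / Real.Gamma (1 - 2 * α)) ^ 2)
    (m : ℕ) (hm : 2 ≤ m) : Cstr α m := by
  obtain ⟨a0, a2⟩ := a_pos α (by linarith) h1
  have hα2 : α ^ 2 < 1 := by nlinarith
  let Z : ℕ → ℝ := fun k => Fw (2 * α) (k + 2) ^ 2 / (Fw α (k + 2) * Fw (3 * α) (k + 2)) *
    (((k : ℝ) + 1) / ((k : ℝ) + 1 - α ^ 2))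
  have hanti : Antitone Z := by
    refine antitone_nat_of_succ_le (fun k => ?_)
    obtain ⟨p1, p2, p3⟩ := F_pos_all α h0 h1 (k + 2) (by omega)
    have hk : (0 : ℝ) ≤ k := by positivity
    simp only [Z]
    rw [show k + 1 + 2 = (k + 2) + 1 by ring, Fw_succ (2 * α) (k + 2), Fw_succ α (k + 2),
      Fw_succ (3 * α) (k + 2)]
    push_cast
    obtain ⟨n, hn⟩ : ∃ n : ℝ, n = k + 3 := ⟨_, rfl⟩
    rw [show (k : ℝ) + 2 + 1 = n by rw [hn]; ring, show (k : ℝ) + 1 + 1 = n - 1 by rw [hn]; ring,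
      show (k : ℝ) + 1 = n - 2 by rw [hn]; ring]
    have hn3 : 3 ≤ n := by linarith
    have d1 : 0 < n - α := by linarith
    have d2 : 0 < n - 3 * α := by linarith
    have d3 : 0 < n - 1 - α ^ 2 := by linarith
    have d4 : 0 < n - 2 - α ^ 2 := by linarith
    have hxy : (n - 1) * (n - 2 - α ^ 2) ≤ (n - α) * (n - 3 * α) := by
      have : 0 ≤ (1 - α) * ((3 - α) * n - 2 * (1 + α)) :=
        mul_nonneg (by linarith) (by nlinarith)
      nlinarith
    have hkey : (n - 2 * α) ^ 2 / ((n - α) * (n - 3 * α)) * ((n - 1) / (n - 1 - α ^ 2)) ≤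
        (n - 2) / (n - 2 - α ^ 2) := by
      rw [div_mul_div_comm, div_le_div_iff₀ (by positivity) d4]
      have := mul_le_mul_of_nonneg_left hxy (sq_nonneg α)
      linear_combination this
    calc _ = Fw (2 * α) (k + 2) ^ 2 / (Fw α (k + 2) * Fw (3 * α) (k + 2)) *
          ((n - 2 * α) ^ 2 / ((n - α) * (n - 3 * α)) * ((n - 1) / (n - 1 - α ^ 2))) := by
          field_simp
      _ ≤ _ := mul_le_mul_of_nonneg_left hkey (by positivity)
  have hZ : Tendsto Z atTop (𝓝 ((1 / Real.Gamma (1 - 2 * α)) ^ 2 /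
      (1 / Real.Gamma (1 - α) * (1 / Real.Gamma (1 - 3 * α))) * 1)) := by
    have g := (((Gw_tendsto (2 * α)).pow 2).div ((Gw_tendsto α).mul (Gw_tendsto (3 * α)))
      (mul_pos a0 a2).ne').comp (tendsto_add_atTop_nat 2)
    have g2 : Tendsto (fun k : ℕ => ((k : ℝ) + 1) / ((k : ℝ) + 1 - α ^ 2)) atTop (𝓝 1) := by
      have := (tendsto_natCast_div_add_atTop (-α ^ 2)).comp (tendsto_add_atTop_nat 1)
      refine this.congr (fun k => ?_)
      simp only [Function.comp]
      push_cast
      congr 1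
    refine (g.mul g2).congr (fun k => ?_)
    simp only [Z, Function.comp, Pi.div_apply, Pi.pow_apply, Pi.mul_apply]
    congr 1
    unfold Gw
    have hk0 : (0 : ℝ) < ((k + 2 : ℕ) : ℝ) := by positivity
    have e1 : ((k + 2 : ℕ) : ℝ) ^ (2 * α) = (((k + 2 : ℕ) : ℝ) ^ α) ^ 2 := by
      rw [← Real.rpow_natCast, ← Real.rpow_mul hk0.le]; congr 1; push_cast; ring
    have e2 : ((k + 2 : ℕ) : ℝ) ^ (3 * α) = (((k + 2 : ℕ) : ℝ) ^ α) ^ 3 := by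
      rw [← Real.rpow_natCast, ← Real.rpow_mul hk0.le]; congr 1; push_cast; ring
    rw [e1, e2]
    obtain ⟨p1, p2, p3⟩ := F_pos_all α h0 h1 (k + 2) (by omega)
    have hr : ((k + 2 : ℕ) : ℝ) ^ α ≠ 0 := by positivity
    have hf : ((k + 2).factorial : ℝ) ≠ 0 := by positivity
    field_simp
  have hge := hanti.le_of_tendsto hZ (m - 2)
  rw [mul_one] at hge
  have h1le : 1 ≤ Z (m - 2) := le_trans ((one_le_div (mul_pos a0 a2)).mpr hE) hge
  obtain ⟨k, rfl⟩ : ∃ k, m = k + 2 := ⟨m - 2, by omega⟩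
  simp only [Z, Nat.add_sub_cancel] at h1le
  obtain ⟨p1, p2, p3⟩ := F_pos_all α h0 h1 (k + 2) (by omega)
  have hk : (0 : ℝ) ≤ k := by positivity
  have hd : 0 < (k : ℝ) + 1 - α ^ 2 := by linarith
  rw [div_mul_div_comm, one_le_div (mul_pos (mul_pos p1 p3) hd)] at h1le
  unfold Cstr
  push_cast
  rw [show (k : ℝ) + 2 - 1 = k + 1 by ring]
  linarith

lemma a_bound (α : ℝ) (h0 : 0 < α) (h1 : α < 1) (j : ℕ) :
    |1 / Real.Gamma (1 - ((j : ℝ) + 1) * α)| ≤ Bw α j :=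
  le_of_tendsto' (Gw_tendsto _).abs (Gw_bound α h0 h1 j)

lemma fw_taylor (α : ℝ) (h0 : 0 < α) (h1 : α < 1) : ∃ C : ℝ, ∀ h, 0 ≤ h → h ≤ 1 →
    |fw α h - (1 / Real.Gamma (1 - α) - 1 / Real.Gamma (1 - 2 * α) * h +
      1 / Real.Gamma (1 - 3 * α) / 2 * h ^ 2)| ≤ C * h ^ 3 := by
  have hs := summ_B α h1 1 le_rfl
  simp only [one_pow] at hs
  have hs3 := (summable_nat_add_iff 3).mpr hs
  refine ⟨∑' j : ℕ, 1 / ((j + 3).factorial : ℝ) * Bw α (j + 3), fun h hh hh1 => ?_⟩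
  have hb : ∀ j : ℕ, ‖(-1 : ℝ) ^ j * (h ^ j / (j.factorial : ℝ)) *
      (1 / Real.Gamma (1 - ((j : ℝ) + 1) * α))‖ ≤ h ^ j * (1 / (j.factorial : ℝ) * Bw α j) := by
    intro j
    rw [norm_mul, norm_mul, norm_pow, norm_neg, norm_one, one_pow, one_mul,
      Real.norm_of_nonneg (by positivity : 0 ≤ h ^ j / (j.factorial : ℝ)), ← mul_assoc,
      mul_one_div]
    exact mul_le_mul_of_nonneg_left (a_bound α h0 h1 j) (by positivity)
  have hB : ∀ j : ℕ, 0 ≤ 1 / (j.factorial : ℝ) * Bw α j := fun j =>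
    mul_nonneg (by positivity) (Bw_pos α j).le
  have hsum : Summable (fun j : ℕ => (-1 : ℝ) ^ j * (h ^ j / (j.factorial : ℝ)) *
      (1 / Real.Gamma (1 - ((j : ℝ) + 1) * α))) := by
    refine Summable.of_norm_bounded hs (fun j => (hb j).trans ?_)
    exact mul_le_of_le_one_left (hB j) (pow_le_one₀ hh hh1)
  have hsplit := hsum.sum_add_tsum_nat_add 3
  have hfw : fw α h - (1 / Real.Gamma (1 - α) - 1 / Real.Gamma (1 - 2 * α) * h +
      1 / Real.Gamma (1 - 3 * α) / 2 * h ^ 2) =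
      ∑' j : ℕ, (-1 : ℝ) ^ (j + 3) * (h ^ (j + 3) / ((j + 3).factorial : ℝ)) *
      (1 / Real.Gamma (1 - (((j + 3 : ℕ) : ℝ) + 1) * α)) := by
    unfold fw
    rw [← hsplit]
    simp only [Finset.sum_range_succ, Finset.range_zero, Finset.sum_empty, Nat.factorial]
    norm_num
    ring
  rw [hfw]
  refine tsum_of_norm_bounded (hs3.hasSum.mul_right (h ^ 3)) (fun j => (hb (j + 3)).trans ?_)
  rw [mul_comm]
  refine mul_le_mul_of_nonneg_left ?_ (hB _)
  exact pow_le_pow_of_le_one hh hh1 (by omega)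

lemma E_of_LC (α : ℝ) (h0 : 0 < α) (h1 : α < 1) (hLC : LogConcaveOn' (fw α) (Set.Ici 0)) :
    1 / Real.Gamma (1 - α) * (1 / Real.Gamma (1 - 3 * α)) ≤ (1 / Real.Gamma (1 - 2 * α)) ^ 2 := by
  obtain ⟨C, hC⟩ := fw_taylor α h0 h1
  obtain ⟨a0, ha0⟩ : ∃ a, a = 1 / Real.Gamma (1 - α) := ⟨_, rfl⟩
  obtain ⟨a1, ha1⟩ : ∃ a, a = 1 / Real.Gamma (1 - 2 * α) := ⟨_, rfl⟩
  obtain ⟨a2, ha2⟩ : ∃ a, a = 1 / Real.Gamma (1 - 3 * α) := ⟨_, rfl⟩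
  rw [← ha0, ← ha1, ← ha2]
  simp only [← ha0, ← ha1, ← ha2] at hC
  have hf0 : fw α 0 = a0 := by
    have := hC 0 le_rfl zero_le_one
    simp only [mul_zero, sub_zero, ne_eq, OfNat.ofNat_ne_zero, not_false_eq_true, zero_pow,
      add_zero] at this
    have := abs_nonpos_iff.mp this
    linarith
  let s : ℝ → ℝ := fun h => (fw α h - (a0 - a1 * h + a2 / 2 * h ^ 2)) / h ^ 2
  have hs : ∀ h, 0 < h → fw α h = a0 - a1 * h + (a2 / 2 + s h) * h ^ 2 := by
    intro h hh
    simp only [s]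
    field_simp
    ring
  have hsb : ∀ h, 0 < h → h ≤ 1 → |s h| ≤ C * h := by
    intro h hh hh1
    simp only [s]
    rw [abs_div, abs_of_nonneg (by positivity : 0 ≤ h ^ 2), div_le_iff₀ (by positivity)]
    refine (hC h hh.le hh1).trans (le_of_eq (by ring))
  let u : ℕ → ℝ := fun n => 1 / ((n : ℝ) + 1) / 2
  have hu : Tendsto u atTop (𝓝 0) := by
    have := (tendsto_one_div_add_atTop_nhds_zero_nat (𝕜 := ℝ)).div_const 2
    rwa [zero_div] at this
  have hu0 : ∀ n, 0 < u n := fun n => by simp only [u]; positivity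
  have hu1 : ∀ n, 2 * u n ≤ 1 := fun n => by
    simp only [u]
    have : 1 / ((n : ℝ) + 1) ≤ 1 := by
      rw [div_le_one (by positivity)]
      have : (0 : ℝ) ≤ n := by positivity
      linarith
    linarith
  have hsu : Tendsto (fun n => s (u n)) atTop (𝓝 0) := by
    refine squeeze_zero_norm (a := fun n => C * u n) (fun n => ?_) (by simpa using hu.const_mul C)
    exact hsb _ (hu0 n) (by linarith [hu1 n, hu0 n])
  have hsu2 : Tendsto (fun n => s (2 * u n)) atTop (𝓝 0) := by
    refine squeeze_zero_norm (a := fun n => C * (2 * u n)) (fun n => ?_)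
      (by simpa using (hu.const_mul 2).const_mul C)
    exact hsb _ (by linarith [hu0 n]) (hu1 n)
  have hP : Tendsto (fun n => a1 ^ 2 + 2 * a0 * (a2 / 2 + s (u n)) -
      2 * a1 * (a2 / 2 + s (u n)) * u n + (a2 / 2 + s (u n)) ^ 2 * u n ^ 2 -
      4 * a0 * (a2 / 2 + s (2 * u n))) atTop (𝓝 (a1 ^ 2 + 2 * a0 * (a2 / 2 + 0) -
      2 * a1 * (a2 / 2 + 0) * 0 + (a2 / 2 + 0) ^ 2 * 0 ^ 2 - 4 * a0 * (a2 / 2 + 0))) := by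
    have q := hsu.const_add (a2 / 2)
    have q2 := hsu2.const_add (a2 / 2)
    exact ((((q.const_mul (2 * a0)).const_add (a1 ^ 2)).sub ((q.const_mul (2 * a1)).mul hu)).add
      ((q.pow 2).mul (hu.pow 2))).sub (q2.const_mul (4 * a0))
  have hfin := ge_of_tendsto' hP (fun n => (?_ : (0 : ℝ) ≤ _))
  · linarith
  have hh := hu0 n
  have hlc := hLC 0 (Set.mem_Ici.mpr le_rfl) (2 * u n) (Set.mem_Ici.mpr (by linarith)) (1 / 2)
    ⟨by norm_num, by norm_num⟩
  rw [show (1 - 1 / 2) * 0 + 1 / 2 * (2 * u n) = u n by ring,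
    show (1 : ℝ) - 1 / 2 = 1 / 2 by norm_num, ← Real.sqrt_eq_rpow, ← Real.sqrt_eq_rpow] at hlc
  have n0 := fw_nonneg α 0 h0 h1 le_rfl
  have n2 := fw_nonneg α (2 * u n) h0 h1 (by linarith)
  have hsq : fw α 0 * fw α (2 * u n) ≤ fw α (u n) ^ 2 := by
    have := mul_self_le_mul_self (by positivity) hlc
    rw [mul_mul_mul_comm, Real.mul_self_sqrt n0, Real.mul_self_sqrt n2] at this
    linarith
  rw [hf0, hs _ hh, hs _ (by linarith : 0 < 2 * u n)] at hsq
  have : 0 ≤ (u n) ^ 2 * (a1 ^ 2 + 2 * a0 * (a2 / 2 + s (u n)) -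
      2 * a1 * (a2 / 2 + s (u n)) * u n + (a2 / 2 + s (u n)) ^ 2 * u n ^ 2 -
      4 * a0 * (a2 / 2 + s (2 * u n))) := by
    linear_combination hsq
  exact nonneg_of_mul_nonneg_right this (by positivity)

lemma cont_invGamma : Continuous (fun s : ℝ => 1 / Real.Gamma s) := by
  have h := Complex.differentiable_one_div_Gamma.continuous
  have h2 := Complex.continuous_re.comp (h.comp Complex.continuous_ofReal)
  refine h2.congr (fun s => ?_)
  simp only [Function.comp]
  rw [Complex.Gamma_ofReal, ← Complex.ofReal_inv, Complex.ofReal_re, one_div]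

lemma invGamma_rec (s : ℝ) (hs : s ≠ 0) :
    1 / Real.Gamma s = s * (1 / Real.Gamma (s + 1)) := by
  rw [Real.Gamma_add_one hs]
  rcases eq_or_ne (Real.Gamma s) 0 with h | h
  · simp [h]
  · field_simp

/-- The function whose sign decides log-concavity at the origin. -/
noncomputable def Ew (a : ℝ) : ℝ := (1 / Real.Gamma (1 - 2 * a)) ^ 2 -
  1 / Real.Gamma (1 - a) * (1 / Real.Gamma (1 - 3 * a))

lemma Ew_cont : Continuous Ew := by
  unfold Ew
  have h1 : Continuous fun a : ℝ => 1 / Real.Gamma (1 - 2 * a) :=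
    cont_invGamma.comp (by fun_prop : Continuous fun a : ℝ => 1 - 2 * a)
  have h2 : Continuous fun a : ℝ => 1 / Real.Gamma (1 - a) :=
    cont_invGamma.comp (by fun_prop : Continuous fun a : ℝ => 1 - a)
  have h3 : Continuous fun a : ℝ => 1 / Real.Gamma (1 - 3 * a) :=
    cont_invGamma.comp (by fun_prop : Continuous fun a : ℝ => 1 - 3 * a)
  exact (h1.pow 2).sub (h2.mul h3)

lemma Ew_two_thirds : 0 < Ew (2 / 3) := by
  unfold Ew
  have h1 : Real.Gamma (1 - 3 * (2 / 3)) = 0 := by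
    rw [Real.Gamma_eq_zero_iff]; exact ⟨1, by norm_num⟩
  have h2 : Real.Gamma (1 - 2 * (2 / 3)) ≠ 0 := by
    refine Real.Gamma_ne_zero (fun m hm => ?_)
    have : (3 * m : ℝ) = 1 := by linarith
    have : 3 * m = 1 := by exact_mod_cast this
    omega
  rw [h1]
  have : 1 / Real.Gamma (1 - 2 * (2 / 3)) ≠ 0 := one_div_ne_zero h2
  simp only [div_zero, mul_zero, sub_zero]
  positivity

lemma Ew_near_one (a : ℝ) (ha : a < 1) : ∃ b, a < b ∧ b < 1 ∧ Ew b < 0 := by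
  let H : ℝ → ℝ := fun e => (2 * (2 * e - 1) * (1 / Real.Gamma (2 * e + 1))) ^ 2 -
    1 / Real.Gamma (e + 1) * (3 * (3 * e - 1) * (3 * e - 2) * (1 / Real.Gamma (3 * e + 1)))
  have hH : Continuous H := by
    have h1 : Continuous fun a : ℝ => 1 / Real.Gamma (2 * a + 1) :=
      cont_invGamma.comp (by fun_prop : Continuous fun a : ℝ => 2 * a + 1)
    have h2 : Continuous fun a : ℝ => 1 / Real.Gamma (a + 1) :=
      cont_invGamma.comp (by fun_prop : Continuous fun a : ℝ => a + 1)
    have h3 : Continuous fun a : ℝ => 1 / Real.Gamma (3 * a + 1) :=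
      cont_invGamma.comp (by fun_prop : Continuous fun a : ℝ => 3 * a + 1)
    have p1 : Continuous fun e : ℝ => 2 * (2 * e - 1) := by fun_prop
    have p2 : Continuous fun e : ℝ => 3 * (3 * e - 1) * (3 * e - 2) := by fun_prop
    exact ((p1.mul h1).pow 2).sub (h2.mul (p2.mul h3))
  have hH0 : H 0 < 0 := by
    simp only [H]; norm_num [Real.Gamma_one]
  have hev : ∀ᶠ e in 𝓝[>] (0 : ℝ), H e < 0 :=
    (hH.tendsto 0).eventually (gt_mem_nhds hH0) |>.filter_mono nhdsWithin_le_nhds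
  have hev2 : ∀ᶠ e in 𝓝[>] (0 : ℝ), e < min (1 - a) (1 / 10) :=
    (gt_mem_nhds (lt_min (by linarith) (by norm_num))).filter_mono nhdsWithin_le_nhds
  obtain ⟨e, h1, h2, h3⟩ := (hev.and (hev2.and self_mem_nhdsWithin)).exists
  have h3 : 0 < e := h3
  have h4 := lt_of_lt_of_le h2 (min_le_left _ _)
  have h5 := lt_of_lt_of_le h2 (min_le_right _ _)
  refine ⟨1 - e, by linarith, by linarith, ?_⟩
  have e1 : 1 / Real.Gamma (1 - 2 * (1 - e)) =
      (2 * e - 1) * ((2 * e) * (1 / Real.Gamma (2 * e + 1))) := by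
    rw [show 1 - 2 * (1 - e) = 2 * e - 1 by ring, invGamma_rec _ (by linarith),
      show 2 * e - 1 + 1 = 2 * e by ring, invGamma_rec _ (by linarith)]
  have e2 : 1 / Real.Gamma (1 - (1 - e)) = e * (1 / Real.Gamma (e + 1)) := by
    rw [show 1 - (1 - e) = e by ring, invGamma_rec _ (by linarith)]
  have e3 : 1 / Real.Gamma (1 - 3 * (1 - e)) =
      (3 * e - 2) * ((3 * e - 1) * ((3 * e) * (1 / Real.Gamma (3 * e + 1)))) := by
    rw [show 1 - 3 * (1 - e) = 3 * e - 2 by ring, invGamma_rec _ (by linarith),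
      show 3 * e - 2 + 1 = 3 * e - 1 by ring, invGamma_rec _ (by linarith),
      show 3 * e - 1 + 1 = 3 * e by ring, invGamma_rec _ (by linarith)]
  have : Ew (1 - e) = e ^ 2 * H e := by
    unfold Ew
    rw [e1, e2, e3]
    simp only [H]
    ring
  rw [this]
  exact mul_neg_of_pos_of_neg (by positivity) h1

/-- Theorem B: for `α ∈ (0,1)`, the Wright density `x ↦ φ(-α, 1-α, -x)` is
log-concave on `[0,∞)` iff `α ≤ α_*`, where `α_*` is the unique solution in `(0,1)`
of `1/Γ(1-2a)² = 1/(Γ(1-a)Γ(1-3a))`. -/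
theorem wright_logConcave_iff (α αs : ℝ) (hα : α ∈ Set.Ioo (0 : ℝ) 1)
    (hαs : αs ∈ Set.Ioo (0 : ℝ) 1)
    (heq : 1 / Real.Gamma (1 - 2 * αs) ^ 2
      = 1 / (Real.Gamma (1 - αs) * Real.Gamma (1 - 3 * αs)))
    (huniq : ∀ a ∈ Set.Ioo (0 : ℝ) 1,
      1 / Real.Gamma (1 - 2 * a) ^ 2
        = 1 / (Real.Gamma (1 - a) * Real.Gamma (1 - 3 * a)) → a = αs) :
    LogConcaveOn' (fun x => wright (-α) (1 - α) (-x)) (Set.Ici 0) ↔ α ≤ αs := by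
  obtain ⟨h0, h1⟩ := hα
  have hfun : (fun x => wright (-α) (1 - α) (-x)) = fw α := funext (wright_eq α)
  have hun : ∀ a, 0 < a → a < 1 → Ew a = 0 → a = αs := by
    intro a ha0 ha1 hE
    refine huniq a ⟨ha0, ha1⟩ ?_
    unfold Ew at hE
    rw [one_div_pow, one_div_mul_one_div] at hE
    linarith
  have hE0 : Ew αs = 0 := by
    unfold Ew
    rw [one_div_pow, one_div_mul_one_div]
    linarith
  rw [hfun]
  constructor
  · intro hLC
    have hE := E_of_LC α h0 h1 hLC
    by_contra hcon
    push Not at hcon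
    obtain ⟨b, hb1, hb2, hb3⟩ := Ew_near_one α h1
    have hE' : 0 ≤ Ew α := by unfold Ew; linarith
    obtain ⟨c, hc, hc0⟩ := intermediate_value_Icc' hb1.le Ew_cont.continuousOn
      (show (0 : ℝ) ∈ Set.Icc (Ew b) (Ew α) from ⟨hb3.le, hE'⟩)
    have := hun c (by linarith [hc.1]) (by linarith [hc.2]) hc0
    linarith [hc.1]
  · intro hle
    refine fw_LC α h0 h1 (fun m hm i => ?_)
    rcases le_or_gt α (5 / 7) with h57 | h57
    · exact LC_small α h0 h57 m (by omega) (i + 1)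
    · have hE : 0 ≤ Ew α := by
        by_contra hneg
        push Not at hneg
        obtain ⟨c, hc, hc0⟩ := intermediate_value_Icc' (by linarith : (2 / 3 : ℝ) ≤ α)
          Ew_cont.continuousOn
          (show (0 : ℝ) ∈ Set.Icc (Ew α) (Ew (2 / 3)) from ⟨hneg.le, Ew_two_thirds.le⟩)
        have hcs := hun c (by linarith [hc.1]) (by linarith [hc.2]) hc0
        have : c = α := le_antisymm hc.2 (by linarith)
        rw [this] at hc0
        linarith
      refine LC_mid α h57 h1 (fun k hk => Cstr_of α h57 h1 ?_ k hk) m hm i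
      unfold Ew at hE
      linarith
end

section
/- For every α ∈ (0,1) and β ≥ 0, the function f(x) = φ(-α, β, -x) is unimodal on [0,∞): there exists m ≥ 0 such that f is nondecreasing on [0,m] and nonincreasing on [m,∞). Moreover, if β ≥ α then one may take m = 0 (f is nonincreasing on all of [0,∞)), while if β < α then every such m is strictly positive (f is not nonincreasing on [0,∞)). -/
namespace WrightAux
section
open Real Set Filter Topology MeasureTheory




theorem rGamma_rec (z : ℝ) : (Gamma z)⁻¹ = z * (Gamma (z + 1))⁻¹ := by
  rcases eq_or_ne z 0 with rfl | hz
  · simp [Real.Gamma_zero]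
  · rw [Real.Gamma_add_one hz, mul_inv, ← mul_assoc, mul_inv_cancel₀ hz, one_mul]

theorem rGamma_refl {z : ℝ} (hz : z < 1) :
    (Gamma z)⁻¹ = sin (π * z) / π * Gamma (1 - z) := by
  have h := Real.Gamma_mul_Gamma_one_sub z
  have h1 : 0 < Gamma (1 - z) := Gamma_pos_of_pos (by linarith)
  rcases eq_or_ne (Gamma z) 0 with h0 | h0
  · rw [h0, zero_mul] at h
    have h2 : sin (π * z) = 0 := by
      rcases div_eq_zero_iff.1 h.symm with h | h
      · exact absurd h pi_ne_zero
      · exact h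
    rw [h0, h2]; simp
  · have h2 : sin (π * z) ≠ 0 := by
      intro h3
      rw [h3, div_zero] at h
      exact (mul_ne_zero h0 h1.ne') h
    rw [eq_div_iff h2] at h
    have := pi_ne_zero
    field_simp
    linarith

theorem rGamma_abs_le {z : ℝ} (hz : z < 1) : |(Gamma z)⁻¹| ≤ Gamma (1 - z) := by
  have h1 : 0 < Gamma (1 - z) := Gamma_pos_of_pos (by linarith)
  rw [rGamma_refl hz, abs_mul, abs_of_pos h1]
  have : |sin (π * z) / π| ≤ 1 := by
    rw [abs_div, abs_of_pos pi_pos, div_le_one pi_pos]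
    exact (abs_sin_le_one _).trans (by linarith [pi_gt_three])
  nlinarith

theorem continuous_rGamma : Continuous (fun z : ℝ => (Gamma z)⁻¹) := by
  have h := Complex.differentiable_one_div_Gamma.continuous
  have h2 : Continuous (fun z : ℝ => (((Complex.Gamma (z : ℂ))⁻¹).re)) :=
    Complex.continuous_re.comp (h.comp Complex.continuous_ofReal)
  convert h2 using 2 with z
  rw [Complex.Gamma_ofReal, ← Complex.ofReal_inv, Complex.ofReal_re]

theorem Gamma_add_le {α y : ℝ} (h0 : 0 < α) (h1 : α < 1) (hy : 0 < y) :
    Gamma (y + α) ≤ y ^ α * Gamma y := by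
  have h := Real.Gamma_mul_add_mul_le_rpow_Gamma_mul_rpow_Gamma (s := y) (t := y + 1)
    (a := 1 - α) (b := α) hy (by linarith) (by linarith) h0 (by ring)
  have hg := Gamma_pos_of_pos hy
  rw [Real.Gamma_add_one hy.ne', mul_rpow hy.le hg.le] at h
  calc Gamma (y + α) = Gamma ((1 - α) * y + α * (y + 1)) := by ring_nf
    _ ≤ _ := h
    _ = y ^ α * (Gamma y ^ (1 - α) * Gamma y ^ α) := by ring
    _ = _ := by rw [← rpow_add hg]; simp

theorem summable_Gamma {α a : ℝ} (h0 : 0 < α) (h1 : α < 1) (ha : 0 < a) (X : ℝ) (hX : 0 ≤ X) :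
    Summable (fun n : ℕ => X ^ n / (n.factorial : ℝ) * Gamma (a + α * n)) := by
  have hlim : Tendsto (fun n : ℕ => X * ((a + α * n) ^ α / ((n : ℝ) + 1))) atTop (𝓝 (X * 0)) := by
    apply Tendsto.const_mul
    have hA : Tendsto (fun n : ℕ => (a + α * n) / ((n : ℝ) + 1)) atTop (𝓝 α) := by
      have e : (fun n : ℕ => (a + α * n) / ((n : ℝ) + 1))
          = fun n : ℕ => α + (a - α) * (1 / ((n : ℝ) + 1)) := by
        ext n; have : (n : ℝ) + 1 ≠ 0 := by positivity
        field_simp; ring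
      rw [e]
      simpa using (tendsto_one_div_add_atTop_nhds_zero_nat (𝕜 := ℝ)).const_mul (a - α) |>.const_add α
    have hB : Tendsto (fun n : ℕ => ((n : ℝ) + 1) ^ (-(1 - α))) atTop (𝓝 0) := by
      apply (tendsto_rpow_neg_atTop (by linarith : 0 < 1 - α)).comp
      exact tendsto_atTop_add_const_right _ _ tendsto_natCast_atTop_atTop
    have hC := (hA.rpow_const (p := α) (Or.inl h0.ne')).mul hB
    rw [mul_zero] at hC
    refine hC.congr fun n => ?_
    have hn : (0 : ℝ) < (n : ℝ) + 1 := by positivity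
    rw [div_rpow (by positivity) hn.le, show -(1 - α) = α - 1 by ring, rpow_sub hn, rpow_one]
    have := rpow_pos_of_pos hn α
    field_simp
  rw [mul_zero] at hlim
  apply summable_of_ratio_norm_eventually_le (r := 1 / 2) (by norm_num)
  filter_upwards [hlim.eventually_le_const (by norm_num : (0 : ℝ) < 1 / 2)] with n hn
  have hy : 0 < a + α * n := by positivity
  have hg := Gamma_pos_of_pos hy
  have hg' : 0 < Gamma (a + α * (n + 1 : ℕ)) := Gamma_pos_of_pos (by positivity)
  rw [norm_of_nonneg (by positivity), norm_of_nonneg (by positivity)]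
  have hle := Gamma_add_le h0 h1 hy
  have e : a + α * ((n + 1 : ℕ) : ℝ) = a + α * n + α := by push_cast; ring
  rw [e, Nat.factorial_succ, pow_succ]
  push_cast
  have hf : (0 : ℝ) < n.factorial := by positivity
  calc X ^ n * X / (((n : ℝ) + 1) * n.factorial) * Gamma (a + α * n + α)
      ≤ X ^ n * X / (((n : ℝ) + 1) * n.factorial) * ((a + α * n) ^ α * Gamma (a + α * n)) := by
        gcongr
    _ = (X * ((a + α * n) ^ α / ((n : ℝ) + 1))) * (X ^ n / n.factorial * Gamma (a + α * n)) := by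
        field_simp
    _ ≤ _ := by gcongr

theorem exists_bound {α : ℝ} (h0 : 0 < α) (h1 : α < 1) (B : ℝ) (hB : 0 < B) :
    ∃ u : ℕ → ℝ, (∀ n, 0 ≤ u n) ∧
      (∀ n : ℕ, ∀ β ∈ Icc (-B) B, |(Gamma (β + -α * n))⁻¹| ≤ u n) ∧
      ∀ X : ℝ, 0 ≤ X → Summable (fun n : ℕ => X ^ n / (n.factorial : ℝ) * u n) := by
  have hc : ∀ n : ℕ, ∃ C : ℝ, ∀ β ∈ Icc (-B) B, |(Gamma (β + -α * n))⁻¹| ≤ C := by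
    intro n
    have : Continuous (fun β : ℝ => (Gamma (β + -α * n))⁻¹) :=
      continuous_rGamma.comp (by fun_prop)
    obtain ⟨C, hC⟩ := (isCompact_Icc (a := -B) (b := B)).exists_bound_of_continuousOn
      this.continuousOn
    exact ⟨C, hC⟩
  choose C hC using hc
  have hCn : ∀ n, 0 ≤ C n := fun n =>
    (abs_nonneg _).trans (hC n 0 ⟨by linarith, hB.le⟩)
  refine ⟨fun n => if 2 ≤ 1 - B + α * n then Gamma (1 + B + α * n) else C n, ?_, ?_, ?_⟩
  · intro n
    dsimp only
    split_ifs
    · exact Gamma_nonneg_of_nonneg (by positivity)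
    · exact hCn n
  · intro n β hβ
    dsimp only
    split_ifs with h
    · refine (rGamma_abs_le (by linarith [hβ.2])).trans ?_
      apply Gamma_strictMonoOn_Ici.monotoneOn
      · simp only [mem_Ici]; linarith [hβ.2]
      · simp only [mem_Ici]; linarith
      · linarith [hβ.1]
    · exact hC n β hβ
  · intro X hX
    have hs := summable_Gamma h0 h1 (by linarith : 0 < 1 + B) X hX
    obtain ⟨N, hN⟩ := exists_nat_gt ((1 + B) / α)
    rw [← summable_nat_add_iff N] at hs ⊢
    refine hs.congr fun n => ?_
    dsimp only
    rw [if_pos]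
    rw [div_lt_iff₀ h0] at hN
    push_cast
    nlinarith [(Nat.cast_nonneg n : (0 : ℝ) ≤ n)]

/-- The function of the theorem. -/
noncomputable def f (α β x : ℝ) : ℝ := wright (-α) β (-x)

theorem f_eq (α β x : ℝ) :
    f α β x = ∑' n : ℕ, (-x) ^ n / (n.factorial : ℝ) * (Gamma (β + -α * n))⁻¹ := by
  unfold f wright
  congr 1; ext n
  rw [div_mul_eq_div_div, div_eq_mul_inv (_ / _)]

theorem f_hasSum {α : ℝ} (h0 : 0 < α) (h1 : α < 1) (β x : ℝ) :
    HasSum (fun n : ℕ => (-x) ^ n / (n.factorial : ℝ) * (Gamma (β + -α * n))⁻¹) (f α β x) := by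
  rw [f_eq]
  apply Summable.hasSum
  obtain ⟨u, hu0, hu, hs⟩ := exists_bound h0 h1 (|β| + 1) (by positivity)
  refine Summable.of_norm_bounded (hs |x| (abs_nonneg x)) fun n => ?_
  rw [norm_mul, norm_div, norm_pow, norm_neg, Real.norm_natCast]
  gcongr
  · exact le_rfl
  · exact hu n β ⟨by linarith [neg_abs_le β], by linarith [le_abs_self β]⟩

theorem f_continuous_beta {α : ℝ} (h0 : 0 < α) (h1 : α < 1) (x : ℝ) :
    Continuous (fun β => f α β x) := by
  rw [continuous_iff_continuousAt]
  intro β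
  obtain ⟨u, hu0, hu, hs⟩ := exists_bound h0 h1 (|β| + 1) (by positivity)
  have : ContinuousOn (fun β => f α β x) (Icc (-(|β| + 1)) (|β| + 1)) := by
    simp_rw [f_eq]
    apply continuousOn_tsum (u := fun n : ℕ => |x| ^ n / (n.factorial : ℝ) * u n)
    · intro n
      apply Continuous.continuousOn
      exact continuous_const.mul (continuous_rGamma.comp (by fun_prop))
    · exact hs _ (abs_nonneg _)
    · intro n b hb
      rw [norm_mul, norm_div, norm_pow, norm_neg, Real.norm_natCast]
      gcongr
      · exact le_rfl
      · exact hu n b hb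
  exact this.continuousAt (Icc_mem_nhds (by linarith [neg_abs_le β]) (by linarith [le_abs_self β]))

theorem f_hasDerivAt {α : ℝ} (h0 : 0 < α) (h1 : α < 1) (β x : ℝ) :
    HasDerivAt (f α β) (-(f α (β - α) x)) x := by
  obtain ⟨u, hu0, hu, hs⟩ := exists_bound h0 h1 (|β - α| + 1) (by positivity)
  set X := |x| + 1
  have hX : 0 ≤ X := by positivity
  have hfun : f α β = fun y => ∑' n : ℕ, (-y) ^ n / (n.factorial : ℝ) * (Gamma (β + -α * n))⁻¹ := by
    ext y; exact f_eq α β y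
  rw [hfun]
  have key := hasDerivAt_tsum_of_isPreconnected (𝕜 := ℝ)
    (u := fun n : ℕ => n.casesOn 0 (fun m => X ^ m / (m.factorial : ℝ) * u m))
    (g := fun (n : ℕ) (y : ℝ) => (-y) ^ n / (n.factorial : ℝ) * (Gamma (β + -α * n))⁻¹)
    (g' := fun (n : ℕ) (y : ℝ) => (n : ℝ) * (-y) ^ (n - 1) * (-1) / (n.factorial : ℝ)
      * (Gamma (β + -α * n))⁻¹)
    (t := Metric.ball 0 X) (y₀ := 0) (y := x) ?_ Metric.isOpen_ball
    (convex_ball _ _).isPreconnected ?_ ?_ ?_ ?_ ?_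
  · refine HasDerivAt.congr_deriv key (Eq.symm ?_)
    rw [Summable.tsum_eq_zero_add]
    · simp only [Nat.cast_zero, zero_mul, zero_div, zero_add]
      rw [← (f_hasSum h0 h1 (β - α) x).tsum_eq, ← tsum_neg]
      congr 1; ext m
      rw [Nat.factorial_succ]
      have e : β + -α * ((m + 1 : ℕ) : ℝ) = β - α + -α * m := by push_cast; ring
      rw [e]
      push_cast
      have : (m : ℝ) + 1 ≠ 0 := by positivity
      field_simp
    · rw [← summable_nat_add_iff 1]
      have := (f_hasSum h0 h1 (β - α) x).summable.neg
      refine this.congr fun m => ?_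
      rw [Nat.factorial_succ]
      have e : β + -α * ((m + 1 : ℕ) : ℝ) = β - α + -α * m := by push_cast; ring
      rw [e]
      push_cast
      have : (m : ℝ) + 1 ≠ 0 := by positivity
      field_simp
  · rw [← summable_nat_add_iff 1]
    exact hs X hX
  · intro n y _
    have := (((hasDerivAt_id y).neg.pow n).div_const (n.factorial : ℝ)).mul_const
      (Gamma (β + -α * n))⁻¹
    simpa using this
  · intro n y hy
    rcases n with _ | m
    · simp
    · have hy' : |y| ≤ X := by
        have := mem_ball_zero_iff.1 hy
        exact this.le
      have e : β + -α * ((m + 1 : ℕ) : ℝ) = β - α + -α * m := by push_cast; ring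
      rw [e, Nat.factorial_succ]
      have hm : (m : ℝ) + 1 ≠ 0 := by positivity
      have e2 : ((m + 1 : ℕ) : ℝ) * (-y) ^ (m + 1 - 1) * (-1) / ((((m + 1) * m.factorial : ℕ)) : ℝ)
        * (Gamma (β - α + -α * m))⁻¹ = -((-y) ^ m / (m.factorial : ℝ) * (Gamma (β - α + -α * m))⁻¹) := by
        push_cast
        field_simp
      rw [e2, norm_neg, norm_mul, norm_div, norm_pow, norm_neg, Real.norm_natCast]
      show _ ≤ X ^ m / (m.factorial : ℝ) * u m
      gcongr
      · exact hy'
      · exact hu m _ ⟨by linarith [neg_abs_le (β - α)], by linarith [le_abs_self (β - α)]⟩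
  · simp only [Metric.mem_ball, dist_self]; positivity
  · exact (f_hasSum h0 h1 β 0).summable
  · simp only [Metric.mem_ball, dist_zero_right, norm_eq_abs]; linarith

theorem f_rec {α : ℝ} (h0 : 0 < α) (h1 : α < 1) (β x : ℝ) :
    f α β x = β * f α (β + 1) x + α * x * f α (β + 1 - α) x := by
  have hA := (f_hasSum h0 h1 (β + 1) x).mul_left β
  have hB := (f_hasSum h0 h1 (β + 1 - α) x).mul_left (α * x)
  have hB' : HasSum (fun n : ℕ => (-α * n) * ((-x) ^ n / (n.factorial : ℝ) *
      (Gamma (β + 1 + -α * n))⁻¹)) (α * x * f α (β + 1 - α) x) := by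
    rw [← hasSum_nat_add_iff' 1]
    simp only [Finset.range_one, Finset.sum_singleton, Nat.cast_zero, mul_zero, zero_mul, sub_zero]
    refine hB.congr_fun ?_ |> id
    intro m
    rw [Nat.factorial_succ]
    have e : β + 1 + -α * ((m + 1 : ℕ) : ℝ) = β + 1 - α + -α * m := by push_cast; ring
    rw [e]
    push_cast
    have : (m : ℝ) + 1 ≠ 0 := by positivity
    field_simp
    ring
  refine (f_hasSum h0 h1 β x).unique ?_
  refine (hA.add hB').congr_fun ?_ |> id
  intro n
  rw [rGamma_rec (β + -α * n), show β + -α * n + 1 = β + 1 + -α * n by ring]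
  ring

theorem f_zero (α β : ℝ) : f α β 0 = (Gamma β)⁻¹ := by
  rw [f_eq, tsum_eq_single 0]
  · simp
  · intro n hn; simp [hn]


theorem exp_image_univ : Real.exp '' univ = Ioi 0 := by
  rw [image_univ, Real.range_exp]

theorem integrable_expexp {a b : ℝ} (ha : 0 < a) (hb : 0 < b) :
    Integrable (fun v : ℝ => exp (-b * exp v + a * v)) := by
  have h := integrableOn_rpow_mul_exp_neg_mul_rpow (p := 1) (s := a - 1) (b := b)
    (by linarith) one_pos hb
  rw [← exp_image_univ, integrableOn_image_iff_integrableOn_abs_deriv_smul (f' := Real.exp)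
    MeasurableSet.univ (fun x _ => (Real.hasDerivAt_exp x).hasDerivWithinAt)
    Real.exp_injective.injOn, integrableOn_univ] at h
  refine h.congr (Eventually.of_forall fun v => ?_)
  simp only [abs_exp, smul_eq_mul, rpow_one]
  rw [← Real.exp_mul, ← Real.exp_add, ← Real.exp_add]
  congr 1; ring

theorem integral_expexp {a : ℝ} (ha : 0 < a) :
    ∫ v : ℝ, exp (-exp v + a * v) = Gamma a := by
  rw [Gamma_eq_integral ha, ← exp_image_univ,
    integral_image_eq_integral_abs_deriv_smul (f' := Real.exp)
    MeasurableSet.univ (fun x _ => (Real.hasDerivAt_exp x).hasDerivWithinAt)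
    Real.exp_injective.injOn, setIntegral_univ]
  congr 1; ext v
  simp only [abs_exp, smul_eq_mul]
  rw [← Real.exp_mul, ← Real.exp_add, ← Real.exp_add]
  congr 1; ring

theorem integrable_bound {α k x : ℝ} (h1 : α < 1) (hα : 0 < α) (hk : 0 < k) (hx : 0 < x) :
    Integrable (fun v : ℝ => exp (-(1 / 2) * exp v + x * exp (α * v) + k * v)) := by
  set v0 := log (4 * x) / (1 - α) with hv0
  set C := x * exp (α * v0) with hC
  have hb : ∀ v : ℝ, x * exp (α * v) ≤ C + 1 / 4 * exp v := by
    intro v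
    rcases le_total v v0 with h | h
    · have : exp (α * v) ≤ exp (α * v0) := exp_le_exp.2 (by nlinarith)
      have := exp_pos v
      nlinarith
    · have h2 : log (4 * x) ≤ (1 - α) * v := by
        rw [hv0, div_le_iff₀ (by linarith)] at h; linarith
      have h3 : 4 * x ≤ exp ((1 - α) * v) := by
        rw [← Real.exp_log (by linarith : 0 < 4 * x)]; exact exp_le_exp.2 h2
      have h4 : exp v = exp ((1 - α) * v) * exp (α * v) := by
        rw [← Real.exp_add]; congr 1; ring
      have h5 := exp_pos (α * v)
      have h6 : 0 < C := by positivity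
      rw [h4]
      nlinarith
  refine Integrable.mono' ((integrable_expexp hk (by norm_num : (0 : ℝ) < 1 / 4)).const_mul (exp C))
    (by fun_prop) (Eventually.of_forall fun v => ?_)
  rw [norm_of_nonneg (exp_pos _).le, ← Real.exp_add]
  apply exp_le_exp.2
  linarith [hb v]

/-- The (logarithmic) integrand. -/
noncomputable def W (α k x : ℝ) (z : ℂ) : ℂ :=
  Complex.exp (Complex.exp z - x * Complex.exp (α * z) + k * z)

theorem re_ab (a b : ℝ) : ((a : ℂ) + (b : ℂ) * Complex.I).re = a := by simp

theorem im_ab (a b : ℝ) : ((a : ℂ) + (b : ℂ) * Complex.I).im = b := by simp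

theorem W_polar (α k x v θ : ℝ) : W α k x (v + θ * Complex.I) =
    Complex.exp (((exp v * cos θ - x * exp (α * v) * cos (α * θ) + k * v : ℝ) : ℂ) +
      ((exp v * sin θ - x * exp (α * v) * sin (α * θ) + k * θ : ℝ) : ℂ) * Complex.I) := by
  unfold W
  congr 1
  have e : (α : ℂ) * (v + θ * Complex.I) = ((α * v : ℝ) : ℂ) + ((α * θ : ℝ) : ℂ) * Complex.I := by
    push_cast; ring
  rw [e, Complex.exp_add, Complex.exp_add, Complex.exp_mul_I, Complex.exp_mul_I]
  push_cast
  ring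

theorem W_norm (α k x v θ : ℝ) : ‖W α k x (v + θ * Complex.I)‖ =
    exp (exp v * cos θ - x * exp (α * v) * cos (α * θ) + k * v) := by
  rw [W_polar, Complex.norm_exp, re_ab]

theorem W_im (α k x v θ : ℝ) : (W α k x (v + θ * Complex.I)).im =
    exp (exp v * cos θ - x * exp (α * v) * cos (α * θ) + k * v) *
      sin (exp v * sin θ - x * exp (α * v) * sin (α * θ) + k * θ) := by
  rw [W_polar, Complex.exp_im, re_ab, im_ab]

theorem W_differentiable (α k x : ℝ) : Differentiable ℂ (W α k x) := by
  unfold W; fun_prop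

theorem W_continuous (α k x : ℝ) : Continuous (W α k x) := (W_differentiable α k x).continuous

theorem W_hasSum_im (α k x v : ℝ) :
    HasSum (fun n : ℕ => (-x) ^ n / (n.factorial : ℝ) * sin (π * (k + α * n)) *
      exp (-exp v + (k + α * n) * v)) (W α k x (v + π * Complex.I)).im := by
  have h := NormedSpace.expSeries_div_hasSum_exp (𝔸 := ℂ)
    (-(x : ℂ) * Complex.exp (α * (v + π * Complex.I)))
  rw [← Complex.exp_eq_exp_ℂ] at h
  have h2 := h.mul_left (Complex.exp (Complex.exp (v + π * Complex.I) + k * (v + π * Complex.I)))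
  rw [← Complex.exp_add] at h2
  have h3 := Complex.imCLM.hasSum h2
  convert h3 using 1
  · ext n
    simp only [Function.comp, Complex.imCLM_apply]
    rw [mul_pow, ← Complex.exp_nat_mul]
    have e : Complex.exp (Complex.exp (v + π * Complex.I) + k * (v + π * Complex.I)) *
        ((-(x : ℂ)) ^ n * Complex.exp (n * (α * (v + π * Complex.I))) / (n.factorial : ℂ))
        = (((-x) ^ n / (n.factorial : ℝ) : ℝ) : ℂ) *
          Complex.exp (((-exp v + (k + α * n) * v : ℝ) : ℂ) + ((π * (k + α * n) : ℝ) : ℂ) * Complex.I) := by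
      have e2 : Complex.exp (((-exp v + (k + α * n) * v : ℝ) : ℂ) + ((π * (k + α * n) : ℝ) : ℂ) * Complex.I)
        = Complex.exp (Complex.exp (v + π * Complex.I) + k * (v + π * Complex.I)) *
          Complex.exp (n * (α * (v + π * Complex.I))) := by
        rw [← Complex.exp_add, Complex.exp_add (v : ℂ), Complex.exp_pi_mul_I]
        congr 1
        push_cast
        ring
      rw [e2]
      push_cast
      ring
    rw [e, Complex.im_ofReal_mul, Complex.exp_im, re_ab, im_ab]
    ring
  · unfold W
    rw [Complex.imCLM_apply]
    congr 2
    ring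

theorem f_eq_integral {α γ : ℝ} (h0 : 0 < α) (h1 : α < 1) (hγ : γ < 1) (x : ℝ) :
    ∫ v : ℝ, (W α (1 - γ) x (v + π * Complex.I)).im = π * f α γ x := by
  have hpos : ∀ n : ℕ, 0 < 1 - γ + α * n := fun n => by
    have : 0 ≤ α * n := by positivity
    linarith
  have key := hasSum_integral_of_summable_integral_norm (μ := (volume : Measure ℝ))
    (F := fun (n : ℕ) (v : ℝ) => (-x) ^ n / (n.factorial : ℝ) * sin (π * (1 - γ + α * n)) *
      exp (-exp v + (1 - γ + α * n) * v)) ?_ ?_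
  · have e : (fun v : ℝ => (W α (1 - γ) x (v + π * Complex.I)).im) = fun v : ℝ =>
        ∑' n : ℕ, (-x) ^ n / (n.factorial : ℝ) * sin (π * (1 - γ + α * n)) *
      exp (-exp v + (1 - γ + α * n) * v) := by
      ext v; exact (W_hasSum_im α (1 - γ) x v).tsum_eq.symm
    rw [e]
    refine key.unique ?_
    refine ((f_hasSum h0 h1 γ x).mul_left π).congr_fun ?_ |> id
    intro n
    rw [integral_const_mul, integral_expexp (hpos n), rGamma_refl (by
      have := hpos n; linarith)]
    have e1 : sin (π * (1 - γ + α * n)) = sin (π * (γ + -α * n)) := by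
      rw [← Real.sin_pi_sub]; congr 1; ring
    rw [e1, show 1 - (γ + -α * n) = 1 - γ + α * n by ring]
    have := pi_ne_zero
    field_simp
  · intro n
    have := integrable_expexp (hpos n) one_pos
    simp only [neg_mul, one_mul] at this
    exact this.const_mul _
  · refine Summable.of_nonneg_of_le (fun n => integral_nonneg fun v => norm_nonneg _) (fun n => ?_)
      (summable_Gamma h0 h1 (by linarith : 0 < 1 - γ) |x| (abs_nonneg x))
    simp_rw [norm_mul]
    rw [integral_const_mul]
    simp_rw [norm_of_nonneg (exp_pos _).le]
    rw [integral_expexp (hpos n), norm_div, norm_pow, norm_neg, Real.norm_natCast]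
    have hg := Gamma_pos_of_pos (hpos n)
    have : ‖sin (π * (1 - γ + α * n))‖ ≤ 1 := abs_sin_le_one _
    calc _ ≤ ‖x‖ ^ n / (n.factorial : ℝ) * 1 * Gamma (1 - γ + α * n) := by gcongr
      _ = _ := by rw [mul_one, norm_eq_abs]


theorem W_norm_le {α k x : ℝ} (h0 : 0 < α) (hk : 0 < k) (hx : 0 < x) {v : ℝ} {z : ℂ}
    (hz : z.re ≤ v) : ‖W α k x z‖ ≤ exp (exp v + x * exp (α * v) + k * v) := by
  have e : z = (z.re : ℂ) + (z.im : ℂ) * Complex.I := (Complex.re_add_im z).symm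
  rw [e, W_norm]
  apply exp_le_exp.2
  have h1 : exp z.re * cos z.im ≤ exp v :=
    (mul_le_of_le_one_right (exp_pos _).le (cos_le_one _)).trans (exp_le_exp.2 hz)
  have h2 : x * exp (α * z.re) * -cos (α * z.im) ≤ x * exp (α * v) :=
    (mul_le_of_le_one_right (by positivity) (by linarith [neg_one_le_cos (α * z.im)])).trans
      (mul_le_mul_of_nonneg_left (exp_le_exp.2 (by nlinarith)) hx.le)
  have h3 : k * z.re ≤ k * v := by nlinarith
  linarith

theorem tendsto_bound {α k x : ℝ} (h0 : 0 < α) (hk : 0 < k) :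
    Tendsto (fun v : ℝ => exp (exp v + x * exp (α * v) + k * v)) atBot (𝓝 0) := by
  apply Real.tendsto_exp_atBot.comp
  have hA : Tendsto (fun v : ℝ => exp v + x * exp (α * v)) atBot (𝓝 (0 + x * 0)) :=
    Real.tendsto_exp_atBot.add ((Real.tendsto_exp_atBot.comp
      (tendsto_id.const_mul_atBot h0)).const_mul x)
  exact hA.add_atBot (tendsto_id.const_mul_atBot hk)

theorem W_integrableOn {α k x : ℝ} (h0 : 0 < α) (hk : 0 < k) (hx : 0 < x) (θ u : ℝ) :
    IntegrableOn (fun v : ℝ => W α k x (v + θ * Complex.I)) (Iic u) := by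
  have h := (integrableOn_exp_mul_Iic hk u).const_mul (exp (exp u + x * exp (α * u)))
  refine Integrable.mono' h ((W_continuous α k x).comp (by fun_prop)).aestronglyMeasurable ?_
  refine (ae_restrict_iff' measurableSet_Iic).2 (Eventually.of_forall fun v hv => ?_)
  refine (W_norm_le h0 hk hx (v := v) (by simp)).trans ?_
  rw [← Real.exp_add]
  apply exp_le_exp.2
  have hv' : v ≤ u := hv
  have h1 : exp v ≤ exp u := exp_le_exp.2 hv'
  have h2 : exp (α * v) ≤ exp (α * u) := exp_le_exp.2 (by nlinarith)
  nlinarith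

theorem exists_primitive {α k x : ℝ} (h0 : 0 < α) (hk : 0 < k) (hx : 0 < x) :
    ∃ P : ℂ → ℂ, (∀ z, HasDerivAt P (W α k x z) z) ∧
      ∀ θ u : ℝ, P (u + θ * Complex.I) = ∫ v in Iic u, W α k x (v + θ * Complex.I) := by
  obtain ⟨P, hP⟩ := (W_differentiable α k x).isExactOn_univ
  have hP : ∀ z, HasDerivAt P (W α k x z) z := fun z => hP z (mem_univ z)
  have hline : ∀ θ v : ℝ, HasDerivAt (fun v : ℝ => P (v + θ * Complex.I))
      (W α k x (v + θ * Complex.I)) v := by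
    intro θ v
    have h1 : HasDerivAt (fun v : ℝ => (v : ℂ) + θ * Complex.I) 1 v :=
      (Complex.ofRealCLM.hasDerivAt (x := v)).add_const _
    have := (hP (v + θ * Complex.I)).comp v h1
    simpa [Function.comp_def] using this
  obtain ⟨l, hl⟩ : ∃ l, Tendsto (fun v : ℝ => P (v + (0 : ℝ) * Complex.I)) atBot (𝓝 l) :=
    ⟨_, tendsto_limUnder_of_hasDerivAt_of_integrableOn_Iic (a := 0) (fun v _ => hline 0 v)
      (W_integrableOn h0 hk hx 0 0)⟩
  have hlim : ∀ θ : ℝ, Tendsto (fun v : ℝ => P (v + θ * Complex.I)) atBot (𝓝 l) := by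
    intro θ
    have hd : Tendsto (fun v : ℝ => P (v + θ * Complex.I) - P (v + (0 : ℝ) * Complex.I)) atBot
        (𝓝 0) := by
      have hb := (tendsto_bound (α := α) (k := k) (x := x) h0 hk).mul_const |θ|
      rw [zero_mul] at hb
      refine squeeze_zero_norm (fun v => ?_) hb
      have hm := Convex.norm_image_sub_le_of_norm_hasDerivWithin_le (𝕜 := ℂ) (f := P)
        (f' := W α k x) (s := {z : ℂ | z.re ≤ v}) (C := exp (exp v + x * exp (α * v) + k * v))
        (x := v + (0 : ℝ) * Complex.I) (y := v + θ * Complex.I)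
        (fun z _ => (hP z).hasDerivWithinAt) (fun z hz => W_norm_le h0 hk hx hz)
        (convex_halfSpace_re_le v) (by simp) (by simp)
      simpa using hm
    simpa using hd.add hl
  refine ⟨fun z => P z - l, fun z => (hP z).sub_const l, fun θ u => ?_⟩
  rw [integral_Iic_of_hasDerivAt_of_tendsto' (fun v _ => hline θ v)
    (W_integrableOn h0 hk hx θ u) (hlim θ)]

noncomputable def l (α θ : ℝ) : ℝ := (log (sin (α * θ)) - log (sin θ)) / (1 - α)
noncomputable def R (α θ : ℝ) : ℝ :=
  (α * (cos (α * θ) / sin (α * θ)) - cos θ / sin θ) / (1 - α)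
noncomputable def E (α θ : ℝ) : ℝ := exp (α * l α θ) * (sin ((1 - α) * θ) / sin θ)
noncomputable def h (α k θ : ℝ) : ℝ :=
  exp (k * l α θ) * (R α θ * sin (k * θ) + cos (k * θ))

section
variable {α θ : ℝ}

theorem sin_pos' (hθ : θ ∈ Ioo 0 π) : 0 < sin θ := sin_pos_of_pos_of_lt_pi hθ.1 hθ.2

theorem sin_pos_mul (h0 : 0 < α) (h1 : α < 1) (hθ : θ ∈ Ioo 0 π) : 0 < sin (α * θ) :=
  sin_pos_of_pos_of_lt_pi (mul_pos h0 hθ.1) (by nlinarith [hθ.1, hθ.2])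

theorem l_hasDerivAt (h0 : 0 < α) (h1 : α < 1) (hθ : θ ∈ Ioo 0 π) :
    HasDerivAt (l α) (R α θ) θ := by
  have hs := sin_pos' hθ
  have hs2 := sin_pos_mul h0 h1 hθ
  have e1 : HasDerivAt (fun t => α * t) α θ := by simpa using (hasDerivAt_id θ).const_mul α
  have := ((e1.sin.log hs2.ne').sub ((Real.hasDerivAt_sin θ).log hs.ne')).div_const (1 - α)
  refine HasDerivAt.congr_deriv this ?_
  unfold R
  ring

theorem exp_l (h0 : 0 < α) (h1 : α < 1) (hθ : θ ∈ Ioo 0 π) :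
    exp (l α θ) = exp (α * l α θ) * (sin (α * θ) / sin θ) := by
  have hs := sin_pos' hθ
  have hs2 := sin_pos_mul h0 h1 hθ
  have : sin (α * θ) / sin θ = exp ((1 - α) * l α θ) := by
    unfold l
    rw [mul_div_cancel₀ _ (by linarith), Real.exp_sub, Real.exp_log hs2, Real.exp_log hs]
  rw [this, ← Real.exp_add]
  congr 1; ring

theorem contour_phase (h0 : 0 < α) (h1 : α < 1) (hθ : θ ∈ Ioo 0 π) {x : ℝ} (hx : 0 < x) :
    exp (log x / (1 - α) + l α θ) * sin θ
      = x * exp (α * (log x / (1 - α) + l α θ)) * sin (α * θ) ∧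
    exp (log x / (1 - α) + l α θ) * cos θ
      - x * exp (α * (log x / (1 - α) + l α θ)) * cos (α * θ)
      = -(exp (log x / (1 - α)) * E α θ) := by
  have hs := sin_pos' hθ
  set L := log x / (1 - α) with hL
  have hxL : x * exp (α * L) = exp L := by
    have : x = exp ((1 - α) * L) := by
      rw [hL, mul_div_cancel₀ _ (by linarith), Real.exp_log hx]
    nth_rewrite 1 [this]
    rw [← Real.exp_add]; congr 1; ring
  have e2 : x * exp (α * (L + l α θ)) = exp L * exp (α * l α θ) := by
    rw [mul_add, Real.exp_add, ← mul_assoc, hxL]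
  rw [e2, Real.exp_add, exp_l h0 h1 hθ]
  constructor
  · field_simp
  · unfold E
    have : sin ((1 - α) * θ) = sin θ * cos (α * θ) - cos θ * sin (α * θ) := by
      rw [← Real.sin_sub]; congr 1; ring
    rw [this]
    field_simp
    ring

theorem l_tendsto_zero (h0 : 0 < α) :
    Tendsto (l α) (𝓝[>] 0) (𝓝 (log α / (1 - α))) := by
  have hA : Tendsto (fun t : ℝ => t⁻¹ * sin t) (𝓝[>] 0) (𝓝 1) := by
    have := (Real.hasDerivAt_sin 0).tendsto_slope_zero_right
    simpa using this
  have hB : Tendsto (fun t : ℝ => t⁻¹ * sin (α * t)) (𝓝[>] 0) (𝓝 α) := by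
    have e1 : HasDerivAt (fun t => α * t) α 0 := by simpa using (hasDerivAt_id (0 : ℝ)).const_mul α
    have := e1.sin.tendsto_slope_zero_right
    simpa using this
  have hC := ((hB.log h0.ne').sub (hA.log one_ne_zero)).div_const (1 - α)
  rw [Real.log_one, sub_zero] at hC
  refine hC.congr' ?_
  have hz : ∀ᶠ t in 𝓝[>] (0 : ℝ), t < min (π / α) π :=
    nhdsWithin_le_nhds (eventually_lt_nhds (lt_min (div_pos pi_pos h0) pi_pos))
  filter_upwards [hz, self_mem_nhdsWithin] with t ht ht0
  have ht0 : 0 < t := ht0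
  have h1 : 0 < sin t := sin_pos_of_pos_of_lt_pi ht0 (ht.trans_le (min_le_right _ _))
  have h2 : 0 < sin (α * t) := sin_pos_of_pos_of_lt_pi (by positivity) (by
    have := ht.trans_le (min_le_left _ _)
    rw [lt_div_iff₀ h0] at this; linarith)
  unfold l
  rw [Real.log_mul (by positivity) h2.ne', Real.log_mul (by positivity) h1.ne']
  congr 1; ring

theorem l_tendsto_pi (h0 : 0 < α) (h1 : α < 1) : Tendsto (l α) (𝓝[<] π) atTop := by
  have hs : Tendsto (fun t => sin t) (𝓝[<] π) (𝓝[>] 0) := by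
    rw [tendsto_nhdsWithin_iff]
    constructor
    · have := (Real.continuous_sin.tendsto π)
      rw [Real.sin_pi] at this
      exact this.mono_left nhdsWithin_le_nhds
    · filter_upwards [Ioo_mem_nhdsLT pi_pos] with t ht
      exact sin_pos' ht
  have hl := Real.tendsto_log_nhdsGT_zero.comp hs
  have hα : 0 < sin (α * π) := sin_pos_of_pos_of_lt_pi (by positivity) (by nlinarith [pi_pos])
  have hc : Tendsto (fun t => log (sin (α * t))) (𝓝[<] π) (𝓝 (log (sin (α * π)))) := by
    apply Tendsto.mono_left _ nhdsWithin_le_nhds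
    have : ContinuousAt (fun t => log (sin (α * t))) π :=
      ContinuousAt.log (by fun_prop) hα.ne'
    exact this
  have := hc.add_atTop (tendsto_neg_atBot_atTop.comp hl)
  have h2 := this.atTop_div_const (by linarith : 0 < 1 - α)
  refine h2.congr fun t => ?_
  simp [l, sub_eq_add_neg]

end

theorem key_rep {α γ x : ℝ} (h0 : 0 < α) (h1 : α < 1) (hγ : γ < 1) (hx : 0 < x) :
    ∃ F : ℝ → ℝ, (∀ θ ∈ Ioo 0 π, HasDerivAt F
        (exp ((1 - γ) * (log x / (1 - α))) * exp (-(exp (log x / (1 - α)) * E α θ))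
          * h α (1 - γ) θ) θ) ∧
      Tendsto F (𝓝[>] 0) (𝓝 0) ∧ Tendsto F (𝓝[<] π) (𝓝 (π * f α γ x)) := by
  have hk : 0 < 1 - γ := by linarith
  rw [← f_eq_integral h0 h1 hγ x]
  set k := 1 - γ
  set L := log x / (1 - α) with hL
  obtain ⟨P, hP, hPi⟩ := exists_primitive (α := α) (k := k) (x := x) h0 hk hx
  refine ⟨fun θ => (P ((L + l α θ : ℝ) + θ * Complex.I)).im, ?_, ?_, ?_⟩
  · intro θ hθ
    have hu : HasDerivAt (fun θ => L + l α θ) (R α θ) θ := (l_hasDerivAt h0 h1 hθ).const_add L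
    have hz : HasDerivAt (fun θ : ℝ => ((L + l α θ : ℝ) : ℂ) + θ * Complex.I)
        ((R α θ : ℂ) + 1 * Complex.I) θ :=
      hu.ofReal_comp.add ((Complex.ofRealCLM.hasDerivAt (x := θ)).mul_const Complex.I)
    have hPd := (hP ((L + l α θ : ℝ) + θ * Complex.I)).comp θ hz
    have him := Complex.imCLM.hasFDerivAt.comp_hasDerivAt θ hPd
    refine HasDerivAt.congr_deriv him ?_
    rw [Complex.imCLM_apply, W_polar]
    obtain ⟨c1, c2⟩ := contour_phase h0 h1 hθ hx
    rw [c2, c1, sub_self, zero_add, Complex.mul_im, Complex.exp_re, Complex.exp_im, re_ab, im_ab]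
    have hre : ((R α θ : ℂ) + 1 * Complex.I).re = R α θ := by simp
    have him2 : ((R α θ : ℂ) + 1 * Complex.I).im = 1 := by simp
    rw [hre, him2, Real.exp_add, mul_add k, Real.exp_add]
    unfold h
    ring
  · have hc : Tendsto (fun θ : ℝ => ((L + l α θ : ℝ) : ℂ) + θ * Complex.I) (𝓝[>] 0)
        (𝓝 (((L + log α / (1 - α) : ℝ) : ℂ) + (0 : ℝ) * Complex.I)) := by
      apply Tendsto.add
      · exact (Complex.continuous_ofReal.tendsto _).comp ((l_tendsto_zero h0).const_add L)
      · apply Tendsto.mul_const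
        exact (Complex.continuous_ofReal.tendsto _).comp (tendsto_id.mono_left nhdsWithin_le_nhds)
    have hcont := (hP (((L + log α / (1 - α) : ℝ) : ℂ) + (0 : ℝ) * Complex.I)).continuousAt
    have := (Complex.continuous_im.tendsto _).comp (hcont.tendsto.comp hc)
    have hv : (P (((L + log α / (1 - α) : ℝ) : ℂ) + (0 : ℝ) * Complex.I)).im = 0 := by
      rw [hPi]
      have := integral_im (𝕜 := ℂ) (W_integrableOn (α := α) (k := k) (x := x) h0 hk hx 0
        (L + log α / (1 - α)))
      simp only [RCLike.im_eq_complex_im] at this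
      rw [← this]
      simp_rw [W_im]
      simp
    rw [hv] at this
    exact this
  · have hF : (fun θ : ℝ => (P ((L + l α θ : ℝ) + θ * Complex.I)).im) = fun θ : ℝ =>
        ∫ v, (Iic (L + l α θ)).indicator (fun v : ℝ => (W α k x (v + θ * Complex.I)).im) v := by
      ext θ
      rw [hPi, integral_indicator measurableSet_Iic]
      have := integral_im (𝕜 := ℂ) (W_integrableOn (α := α) (k := k) (x := x) h0 hk hx θ
        (L + l α θ))
      simp only [RCLike.im_eq_complex_im] at this
      rw [← this]
    rw [hF]
    apply tendsto_integral_filter_of_dominated_convergence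
      (fun v : ℝ => exp (-(1 / 2) * exp v + x * exp (α * v) + k * v))
    · refine Eventually.of_forall fun θ => ?_
      apply AEStronglyMeasurable.indicator _ measurableSet_Iic
      exact (Complex.continuous_im.comp ((W_continuous α k x).comp
        (by fun_prop))).aestronglyMeasurable
    · have hcos : ∀ᶠ θ in 𝓝[<] π, cos θ < -(1 / 2) := by
        apply nhdsWithin_le_nhds
        apply (Real.continuous_cos.tendsto π).eventually_lt_const
        rw [Real.cos_pi]; norm_num
      filter_upwards [hcos] with θ hθ
      refine Eventually.of_forall fun v => ?_
      refine (norm_indicator_le_norm_self _ _).trans ?_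
      refine (Complex.abs_im_le_norm _).trans ?_
      rw [W_norm]
      apply exp_le_exp.2
      have a1 : exp v * cos θ ≤ -(1 / 2) * exp v := by nlinarith [exp_pos v]
      have a2 : x * exp (α * v) * -cos (α * θ) ≤ x * exp (α * v) :=
        mul_le_of_le_one_right (by positivity) (by linarith [neg_one_le_cos (α * θ)])
      linarith
    · exact integrable_bound h1 h0 hk hx
    · refine Eventually.of_forall fun v => ?_
      have hlt : ∀ᶠ θ in 𝓝[<] π, v ≤ L + l α θ :=
        (tendsto_atTop_add_const_left _ L (l_tendsto_pi h0 h1)).eventually_ge_atTop v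
      have hc : Continuous (fun θ : ℝ => (W α k x (v + θ * Complex.I)).im) :=
        Complex.continuous_im.comp ((W_continuous α k x).comp (by fun_prop))
      refine ((hc.tendsto π).mono_left nhdsWithin_le_nhds).congr' ?_
      filter_upwards [hlt] with θ hθ
      rw [indicator_of_mem]
      exact hθ


theorem le_of_deriv_nonneg {F g : ℝ → ℝ} {a b : ℝ} (hF : ∀ θ ∈ Ioo 0 π, HasDerivAt F (g θ) θ)
    (hg : ∀ θ ∈ Ioo 0 π, 0 ≤ g θ) (ha : Tendsto F (𝓝[>] 0) (𝓝 a))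
    (hb : Tendsto F (𝓝[<] π) (𝓝 b)) : a ≤ b := by
  have hm : MonotoneOn F (Ioo 0 π) := by
    apply monotoneOn_of_deriv_nonneg (convex_Ioo _ _)
      (fun θ hθ => (hF θ hθ).continuousAt.continuousWithinAt)
    · intro θ hθ
      rw [interior_Ioo] at hθ
      exact (hF θ hθ).differentiableAt.differentiableWithinAt
    · intro θ hθ
      rw [interior_Ioo] at hθ
      rw [(hF θ hθ).deriv]
      exact hg θ hθ
  have hmid : π / 2 ∈ Ioo 0 π := ⟨by positivity, by linarith [pi_pos]⟩
  have h1 : a ≤ F (π / 2) := by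
    apply le_of_tendsto ha
    filter_upwards [Ioo_mem_nhdsGT hmid.1] with t ht
    exact hm ⟨ht.1, ht.2.trans hmid.2⟩ hmid ht.2.le
  have h2 : F (π / 2) ≤ b := by
    apply ge_of_tendsto hb
    filter_upwards [Ioo_mem_nhdsLT hmid.2] with t ht
    exact hm hmid ⟨hmid.1.trans ht.1, ht.2⟩ ht.1.le
  exact h1.trans h2

section
variable {α θ : ℝ}

theorem mul_sin_le (h0 : 0 < α) (h1 : α < 1) (hθ : θ ∈ Ioo 0 π) :
    α * sin θ ≤ sin (α * θ) := by
  have := strictConcaveOn_sin_Icc.concaveOn.2 (⟨le_rfl, pi_pos.le⟩ : (0 : ℝ) ∈ Icc 0 π)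
    (⟨hθ.1.le, hθ.2.le⟩ : θ ∈ Icc 0 π) (by linarith : 0 ≤ 1 - α) h0.le (by ring)
  simpa using this

theorem sr_num_nonneg (h0 : 0 < α) (h1 : α < 1) (hθ : θ ∈ Ioo 0 π) :
    0 ≤ α * cos (α * θ) * sin θ - sin (α * θ) * cos θ := by
  have hd : ∀ t : ℝ, HasDerivAt (fun t => α * cos (α * t) * sin t - sin (α * t) * cos t)
      ((1 - α ^ 2) * sin (α * t) * sin t) t := by
    intro t
    have e1 : HasDerivAt (fun t => α * t) α t := by simpa using (hasDerivAt_id t).const_mul α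
    have := ((e1.cos.const_mul α).mul (Real.hasDerivAt_sin t)).sub
      (e1.sin.mul (Real.hasDerivAt_cos t))
    refine HasDerivAt.congr_deriv this ?_
    ring
  have hm : MonotoneOn (fun t => α * cos (α * t) * sin t - sin (α * t) * cos t) (Icc 0 π) := by
    apply monotoneOn_of_deriv_nonneg (convex_Icc _ _)
      (fun θ hθ => (hd θ).continuousAt.continuousWithinAt)
      (fun θ hθ => (hd θ).differentiableAt.differentiableWithinAt)
    intro t ht
    rw [interior_Icc] at ht
    rw [(hd t).deriv]
    have := sin_pos' ht
    have := sin_pos_mul h0 h1 ht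
    have : 0 ≤ 1 - α ^ 2 := by nlinarith
    positivity
  have := hm (left_mem_Icc.2 pi_pos.le) ⟨hθ.1.le, hθ.2.le⟩ hθ.1.le
  simpa using this

theorem sr_mono (h0 : 0 < α) (h1 : α < 1) :
    MonotoneOn (fun t => sin (α * t) / sin t) (Ioo 0 π) := by
  have hd : ∀ t ∈ Ioo 0 π, HasDerivAt (fun t => sin (α * t) / sin t)
      ((α * cos (α * t) * sin t - sin (α * t) * cos t) / sin t ^ 2) t := by
    intro t ht
    have e1 : HasDerivAt (fun t => α * t) α t := by simpa using (hasDerivAt_id t).const_mul α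
    have := e1.sin.div (Real.hasDerivAt_sin t) (sin_pos' ht).ne'
    refine HasDerivAt.congr_deriv this ?_
    ring
  apply monotoneOn_of_deriv_nonneg (convex_Ioo _ _)
    (fun θ hθ => (hd θ hθ).continuousAt.continuousWithinAt)
  · intro θ hθ
    rw [interior_Ioo] at hθ
    exact (hd θ hθ).differentiableAt.differentiableWithinAt
  · intro θ hθ
    rw [interior_Ioo] at hθ
    rw [(hd θ hθ).deriv]
    exact div_nonneg (sr_num_nonneg h0 h1 hθ) (sq_nonneg _)

theorem l_eq (h0 : 0 < α) (h1 : α < 1) (hθ : θ ∈ Ioo 0 π) :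
    l α θ = log (sin (α * θ) / sin θ) / (1 - α) := by
  rw [Real.log_div (sin_pos_mul h0 h1 hθ).ne' (sin_pos' hθ).ne']
  rfl

theorem l_mono (h0 : 0 < α) (h1 : α < 1) : MonotoneOn (l α) (Ioo 0 π) := by
  intro a ha b hb hab
  rw [l_eq h0 h1 ha, l_eq h0 h1 hb]
  have : 0 < 1 - α := by linarith
  have := div_pos (sin_pos_mul h0 h1 ha) (sin_pos' ha)
  have := sr_mono h0 h1 ha hb hab
  gcongr

theorem E_mono (h0 : 0 < α) (h1 : α < 1) : MonotoneOn (E α) (Ioo 0 π) := by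
  intro a ha b hb hab
  have h1' : 0 < 1 - α := by linarith
  have h2' : 1 - α < 1 := by linarith
  have := div_pos (sin_pos_mul h1' h2' ha) (sin_pos' ha)
  have hl := l_mono h0 h1 ha hb hab
  have := sr_mono h1' h2' ha hb hab
  unfold E
  apply mul_le_mul _ this (by positivity) (exp_pos _).le
  gcongr

theorem E_lower (h0 : 0 < α) (h1 : α < 1) (hθ : θ ∈ Ioo 0 π) :
    exp (α * (log α / (1 - α))) * (1 - α) ≤ E α θ := by
  have h1' : 0 < 1 - α := by linarith
  have h2' : 1 - α < 1 := by linarith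
  unfold E
  apply mul_le_mul _ _ h1'.le (exp_pos _).le
  · rw [l_eq h0 h1 hθ]
    have : α ≤ sin (α * θ) / sin θ := by
      rw [le_div_iff₀ (sin_pos' hθ)]; exact mul_sin_le h0 h1 hθ
    gcongr
  · rw [le_div_iff₀ (sin_pos' hθ)]; exact mul_sin_le h1' h2' hθ

theorem cot_sub (h0 : 0 < α) (h1 : α < 1) (hθ : θ ∈ Ioo 0 π) :
    cos (α * θ) / sin (α * θ) - cos θ / sin θ
      = sin ((1 - α) * θ) / (sin (α * θ) * sin θ) := by
  have hs := sin_pos' hθ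
  have hs2 := sin_pos_mul h0 h1 hθ
  have : sin ((1 - α) * θ) = sin θ * cos (α * θ) - cos θ * sin (α * θ) := by
    rw [← Real.sin_sub]; congr 1; ring
  rw [this]
  field_simp

theorem R_lower (h0 : 0 < α) (h1 : α < 1) (hθ : θ ∈ Ioo 0 π) :
    -(cos θ / sin θ) ≤ R α θ := by
  have hs := sin_pos' hθ
  have hs2 := sin_pos_mul h0 h1 hθ
  have h1' : 0 < 1 - α := by linarith
  have hs3 := sin_pos_mul h1' (by linarith) hθ
  have h4 : 0 < cos (α * θ) / sin (α * θ) - cos θ / sin θ := by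
    rw [cot_sub h0 h1 hθ]; positivity
  unfold R
  rw [le_div_iff₀ h1']
  nlinarith

theorem h_nonneg {k : ℝ} (h0 : 0 < α) (h1 : α < 1) (hθ : θ ∈ Ioo 0 π) (hk : 0 < k) (hk1 : k ≤ 1) :
    0 ≤ h α k θ := by
  have hs := sin_pos' hθ
  have hR := R_lower h0 h1 hθ
  have hsk : 0 ≤ sin (k * θ) := sin_nonneg_of_nonneg_of_le_pi (by nlinarith [hθ.1])
    (by nlinarith [hθ.1, hθ.2])
  have hsk1 : 0 ≤ sin ((1 - k) * θ) := sin_nonneg_of_nonneg_of_le_pi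
    (mul_nonneg (by linarith) hθ.1.le) (by nlinarith [hθ.1, hθ.2])
  have : sin ((1 - k) * θ) = sin θ * cos (k * θ) - cos θ * sin (k * θ) := by
    rw [← Real.sin_sub]; congr 1; ring
  rw [this] at hsk1
  unfold h
  apply mul_nonneg (exp_pos _).le
  have h3 : -(cos θ / sin θ) * sin (k * θ) + cos (k * θ)
      = (sin θ * cos (k * θ) - cos θ * sin (k * θ)) / sin θ := by
    field_simp
    ring
  have h4 := div_nonneg hsk1 hs.le
  nlinarith

theorem h_eq_cos {k : ℝ} : h α k θ = exp (k * l α θ) / cos (arctan (R α θ))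
    * cos (k * θ - arctan (R α θ)) := by
  have hc := cos_arctan_pos (R α θ)
  have ht : sin (arctan (R α θ)) = R α θ * cos (arctan (R α θ)) := by
    conv_rhs => rw [← Real.tan_arctan (R α θ)]
    rw [Real.arctan_tan (neg_pi_div_two_lt_arctan _) (arctan_lt_pi_div_two _),
      Real.tan_mul_cos hc.ne']
  rw [Real.cos_sub, ht]
  unfold h
  field_simp
  ring

theorem R_hasDerivAt (h0 : 0 < α) (h1 : α < 1) (hθ : θ ∈ Ioo 0 π) :
    HasDerivAt (R α) ((1 + (cos θ / sin θ) ^ 2 - α ^ 2 * (1 + (cos (α * θ) / sin (α * θ)) ^ 2))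
      / (1 - α)) θ := by
  have hs := sin_pos' hθ
  have hs2 := sin_pos_mul h0 h1 hθ
  have e1 : HasDerivAt (fun t => α * t) α θ := by simpa using (hasDerivAt_id θ).const_mul α
  have := (((e1.cos.div e1.sin hs2.ne').const_mul α).sub
    ((Real.hasDerivAt_cos θ).div (Real.hasDerivAt_sin θ) hs.ne')).div_const (1 - α)
  refine HasDerivAt.congr_deriv this ?_
  congr 1
  field_simp
  ring

theorem phase_mono (h0 : 0 < α) (h1 : α < 1) :
    MonotoneOn (fun t => t - arctan (R α t)) (Ioo 0 π) := by
  have hd := fun t (ht : t ∈ Ioo 0 π) => (hasDerivAt_id t).sub (R_hasDerivAt h0 h1 ht).arctan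
  apply monotoneOn_of_deriv_nonneg (convex_Ioo _ _)
    (fun θ hθ => (hd θ hθ).continuousAt.continuousWithinAt)
  · intro θ hθ
    rw [interior_Ioo] at hθ
    exact (hd θ hθ).differentiableAt.differentiableWithinAt
  · intro θ hθ
    rw [interior_Ioo] at hθ
    refine le_of_le_of_eq ?_ (hd θ hθ).deriv.symm
    have hs := sin_pos' hθ
    have hs2 := sin_pos_mul h0 h1 hθ
    have h1' : 0 < 1 - α := by linarith
    have hs3 := mul_sin_le h1' (by linarith) hθ
    have hc := cot_sub h0 h1 hθ
    have hp : 1 + (cos (α * θ) / sin (α * θ)) ^ 2 = (1 / sin (α * θ)) ^ 2 := by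
      have := Real.sin_sq_add_cos_sq (α * θ)
      field_simp
      linarith
    have hpq : (1 - α) * (1 / sin (α * θ)) ≤ cos (α * θ) / sin (α * θ) - cos θ / sin θ := by
      rw [hc]
      rw [le_div_iff₀ (by positivity)]
      field_simp
      linarith
    have hsq : (1 - α) ^ 2 * (1 + (cos (α * θ) / sin (α * θ)) ^ 2)
        ≤ (cos (α * θ) / sin (α * θ) - cos θ / sin θ) ^ 2 := by
      rw [hp, ← mul_pow]
      exact pow_le_pow_left₀ (by positivity) hpq 2
    unfold R
    generalize cos (α * θ) / sin (α * θ) = p at *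
    generalize cos θ / sin θ = q at *
    rw [sub_nonneg, one_div, inv_mul_le_iff₀ (by positivity), mul_one, div_le_iff₀ h1']
    have e : (1 + ((α * p - q) / (1 - α)) ^ 2) * (1 - α)
        = ((1 - α) ^ 2 + (α * p - q) ^ 2) / (1 - α) := by
      field_simp
    rw [e, le_div_iff₀ h1']
    nlinarith

theorem phase_le (h0 : 0 < α) (h1 : α < 1) (hθ : θ ∈ Ioo 0 π) :
    θ - arctan (R α θ) ≤ π / 2 := by
  have h2 : tan (θ - π / 2) = -(cos θ / sin θ) := by
    rw [Real.tan_eq_sin_div_cos, Real.sin_sub_pi_div_two, Real.cos_sub_pi_div_two, neg_div]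
  have h3 := Real.arctan_mono (R_lower h0 h1 hθ)
  rw [← h2, Real.arctan_tan (by linarith [hθ.1]) (by linarith [hθ.2])] at h3
  linarith

theorem h_cross {k θ₁ θ₂ : ℝ} (h0 : 0 < α) (h1 : α < 1) (hk : 1 < k) (hk2 : k ≤ 2)
    (hθ₁ : θ₁ ∈ Ioo 0 π) (hθ₂ : θ₂ ∈ Ioo 0 π) (hlt : θ₁ < θ₂) (hh : 0 ≤ h α k θ₂) :
    0 ≤ h α k θ₁ := by
  rw [h_eq_cos] at hh ⊢
  have hc2 := cos_arctan_pos (R α θ₂)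
  have hc1 := cos_arctan_pos (R α θ₁)
  have hcos : 0 ≤ cos (k * θ₂ - arctan (R α θ₂)) := by
    by_contra hneg
    push Not at hneg
    have : 0 < exp (k * l α θ₂) / cos (arctan (R α θ₂)) := by positivity
    nlinarith
  apply mul_nonneg (by positivity)
  have hp := phase_mono h0 h1 hθ₁ hθ₂ hlt.le
  have hp2 := phase_le h0 h1 hθ₂
  simp only at hp
  have hb : (k - 1) * θ₂ < π := by nlinarith [hθ₂.1, hθ₂.2]
  have hle : k * θ₂ - arctan (R α θ₂) ≤ π / 2 := by
    by_contra hgt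
    push Not at hgt
    exact absurd (Real.cos_neg_of_pi_div_two_lt_of_lt hgt (by linarith)) (not_lt.2 hcos)
  apply Real.cos_nonneg_of_neg_pi_div_two_le_of_le
  · have := arctan_lt_pi_div_two (R α θ₁)
    nlinarith [hθ₁.1]
  · nlinarith
end

theorem compare {α γ x₁ x₂ A₁ A₂ : ℝ} (h0 : 0 < α) (h1 : α < 1) (hγ : γ < 1) (hx₁ : 0 < x₁)
    (hx₂ : 0 < x₂) (hh : ∀ θ ∈ Ioo 0 π, 0 ≤ (A₂ * exp (-(exp (log x₂ / (1 - α)) * E α θ))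
      - A₁ * exp (-(exp (log x₁ / (1 - α)) * E α θ))) * h α (1 - γ) θ) :
    A₁ / exp ((1 - γ) * (log x₁ / (1 - α))) * f α γ x₁
      ≤ A₂ / exp ((1 - γ) * (log x₂ / (1 - α))) * f α γ x₂ := by
  obtain ⟨F₁, hd₁, ha₁, hb₁⟩ := key_rep h0 h1 hγ hx₁
  obtain ⟨F₂, hd₂, ha₂, hb₂⟩ := key_rep h0 h1 hγ hx₂
  set c₁ := exp ((1 - γ) * (log x₁ / (1 - α))) with hc₁
  set c₂ := exp ((1 - γ) * (log x₂ / (1 - α))) with hc₂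
  have p₁ : 0 < c₁ := exp_pos _
  have p₂ : 0 < c₂ := exp_pos _
  have := le_of_deriv_nonneg
    (fun θ hθ => ((hd₂ θ hθ).const_mul (A₂ / c₂)).sub ((hd₁ θ hθ).const_mul (A₁ / c₁)))
    (fun θ hθ => by
      refine (hh θ hθ).trans_eq ?_
      field_simp)
    ((ha₂.const_mul (A₂ / c₂)).sub (ha₁.const_mul (A₁ / c₁)))
    ((hb₂.const_mul (A₂ / c₂)).sub (hb₁.const_mul (A₁ / c₁)))
  have h2 : 0 ≤ π * (A₂ / c₂ * f α γ x₂ - A₁ / c₁ * f α γ x₁) := by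
    refine le_trans (by simp) (this.trans_eq ?_)
    ring
  have := nonneg_of_mul_nonneg_right h2 pi_pos
  linarith

theorem f_nonneg_of_h {α γ x : ℝ} (h0 : 0 < α) (h1 : α < 1) (hγ : γ < 1) (hx : 0 < x)
    (hh : ∀ θ ∈ Ioo 0 π, 0 ≤ h α (1 - γ) θ) : 0 ≤ f α γ x := by
  obtain ⟨F, hd, ha, hb⟩ := key_rep h0 h1 hγ hx
  have := le_of_deriv_nonneg hd (fun θ hθ => mul_nonneg (by positivity) (hh θ hθ)) ha hb
  exact nonneg_of_mul_nonneg_right this pi_pos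

theorem f_nonneg_small {α γ x : ℝ} (h0 : 0 < α) (h1 : α < 1) (hγ0 : 0 ≤ γ) (hγ : γ < 1)
    (hx : 0 < x) : 0 ≤ f α γ x :=
  f_nonneg_of_h h0 h1 hγ hx fun _ hθ => h_nonneg h0 h1 hθ (by linarith) (by linarith)

theorem f_cross {α γ x₁ x₂ : ℝ} (h0 : 0 < α) (h1 : α < 1) (hγ0 : -1 ≤ γ) (hγ : γ < 0)
    (hx₁ : 0 < x₁) (hx : x₁ < x₂) (hf : 0 ≤ f α γ x₁) : 0 ≤ f α γ x₂ := by
  have hx₂ := hx₁.trans hx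
  by_cases hall : ∀ θ ∈ Ioo 0 π, 0 ≤ h α (1 - γ) θ
  · exact f_nonneg_of_h h0 h1 (by linarith) hx₂ hall
  push Not at hall
  obtain ⟨θb, hθb, hb⟩ := hall
  set S : Set ℝ := E α '' {θ | θ ∈ Ioo 0 π ∧ 0 ≤ h α (1 - γ) θ} with hS
  have hcr := fun {a b : ℝ} (ha : a ∈ Ioo 0 π) (hb : b ∈ Ioo 0 π) (hab : a < b) hh =>
    h_cross (k := 1 - γ) h0 h1 (by linarith) (by linarith) ha hb hab hh
  have hbdd : BddAbove S := by
    refine ⟨E α θb, ?_⟩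
    rintro _ ⟨θ, ⟨hθ, hh⟩, rfl⟩
    apply E_mono h0 h1 hθ hθb
    by_contra hlt
    push Not at hlt
    exact absurd (hcr hθb hθ hlt hh) (not_le.2 hb)
  have hEpos : ∀ θ ∈ Ioo 0 π, 0 < E α θ := fun θ hθ =>
    lt_of_lt_of_le (mul_pos (exp_pos _) (by linarith)) (E_lower h0 h1 hθ)
  have hlo : ∀ θ ∈ Ioo 0 π, E α θ < sSup S → 0 ≤ h α (1 - γ) θ := by
    intro θ hθ hE
    rcases S.eq_empty_or_nonempty with he | hne
    · rw [he, Real.sSup_empty] at hE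
      exact absurd hE (hEpos θ hθ).not_gt
    · obtain ⟨_, ⟨θ', ⟨hθ', hh'⟩, rfl⟩, hlt⟩ := exists_lt_of_lt_csSup hne hE
      have : θ < θ' := by
        by_contra hge
        push Not at hge
        exact absurd (E_mono h0 h1 hθ' hθ hge) (not_le.2 hlt)
      exact hcr hθ hθ' this hh'
  have hhi : ∀ θ ∈ Ioo 0 π, sSup S < E α θ → h α (1 - γ) θ ≤ 0 := by
    intro θ hθ hE
    by_contra hpos
    push Not at hpos
    exact absurd (le_csSup hbdd ⟨θ, ⟨hθ, hpos.le⟩, rfl⟩) (not_le.2 hE)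
  have hy : exp (log x₁ / (1 - α)) < exp (log x₂ / (1 - α)) := by
    apply exp_lt_exp.2
    have : 0 < 1 - α := by linarith
    have := Real.log_lt_log hx₁ hx
    gcongr
  have key := compare (γ := γ) (A₁ := exp (sSup S * exp (log x₁ / (1 - α))))
    (A₂ := exp (sSup S * exp (log x₂ / (1 - α)))) h0 h1 (by linarith) hx₁ hx₂ (by
      intro θ hθ
      rw [← Real.exp_add, ← Real.exp_add]
      rcases lt_trichotomy (E α θ) (sSup S) with hlt | heq | hgt
      · apply mul_nonneg _ (hlo θ hθ hlt)
        rw [sub_nonneg]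
        apply exp_le_exp.2
        nlinarith
      · rw [heq]
        apply le_of_eq
        ring_nf
      · apply mul_nonneg_of_nonpos_of_nonpos _ (hhi θ hθ hgt)
        rw [sub_nonpos]
        apply exp_le_exp.2
        nlinarith)
  have h3 : 0 ≤ exp (sSup S * exp (log x₂ / (1 - α)))
      / exp ((1 - γ) * (log x₂ / (1 - α))) * f α γ x₂ :=
    le_trans (mul_nonneg (by positivity) hf) key
  exact nonneg_of_mul_nonneg_right h3 (by positivity)

theorem f_decay_small {α γ : ℝ} (h0 : 0 < α) (h1 : α < 1) (hγ0 : 0 ≤ γ) (hγ : γ < 1) (N : ℕ) :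
    Tendsto (fun x => x ^ N * f α γ x) atTop (𝓝 0) := by
  set E0 := exp (α * (log α / (1 - α))) * (1 - α) with hE0
  have h1' : 0 < 1 - α := by linarith
  have hE0pos : 0 < E0 := mul_pos (exp_pos _) h1'
  set s : ℝ := N * (1 - α) + (1 - γ) with hs
  have hY : Tendsto (fun x : ℝ => exp (log x / (1 - α))) atTop atTop :=
    Real.tendsto_exp_atTop.comp (Real.tendsto_log_atTop.atTop_div_const h1')
  have hlim := ((tendsto_rpow_mul_exp_neg_mul_atTop_nhds_zero s E0 hE0pos).comp hY).const_mul
    (exp E0 * f α γ 1)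
  rw [mul_zero] at hlim
  refine squeeze_zero' ?_ ?_ hlim
  · filter_upwards [eventually_gt_atTop 0] with x hx
    exact mul_nonneg (by positivity) (f_nonneg_small h0 h1 hγ0 hγ hx)
  · filter_upwards [eventually_ge_atTop 1] with x hx1
    have hx : 0 < x := by linarith
    set L := log x / (1 - α) with hL
    have hLpos : 0 ≤ L := div_nonneg (Real.log_nonneg hx1) h1'.le
    have hy1 : 1 ≤ exp L := Real.one_le_exp hLpos
    have key := compare (γ := γ) (x₁ := x) (x₂ := 1) (A₁ := 1) (A₂ := exp (-(E0 * (exp L - 1))))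
      h0 h1 hγ hx one_pos (by
        intro θ hθ
        apply mul_nonneg _ (h_nonneg h0 h1 hθ (by linarith) (by linarith))
        rw [Real.log_one, zero_div, Real.exp_zero, ← Real.exp_add, one_mul, one_mul, sub_nonneg, ← hL]
        apply exp_le_exp.2
        have := E_lower h0 h1 hθ
        rw [← hE0] at this
        nlinarith)
    rw [Real.log_one, zero_div, mul_zero, Real.exp_zero, div_one, ← hL,
      one_div, ← Real.exp_neg] at key
    have hxN : x ^ N = exp (N * (1 - α) * L) := by
      rw [hL, mul_assoc, mul_div_cancel₀ _ h1'.ne', mul_comm, Real.exp_mul, Real.exp_log hx,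
        Real.rpow_natCast]
    have e1 : f α γ x = exp ((1 - γ) * L) * (exp (-((1 - γ) * L)) * f α γ x) := by
      rw [← mul_assoc, ← Real.exp_add, add_neg_cancel, Real.exp_zero, one_mul]
    calc x ^ N * f α γ x
        ≤ x ^ N * (exp ((1 - γ) * L) * (exp (-(E0 * (exp L - 1))) * f α γ 1)) := by
          nth_rewrite 1 [e1]
          gcongr
      _ = exp E0 * f α γ 1 * (exp L ^ s * exp (-E0 * exp L)) := by
          rw [hxN, ← Real.exp_mul]
          have : exp (-(E0 * (exp L - 1))) = exp E0 * exp (-E0 * exp L) := by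
            rw [← Real.exp_add]; congr 1; ring
          have h2 : exp (L * s) = exp (N * (1 - α) * L) * exp ((1 - γ) * L) := by
            rw [← Real.exp_add]; congr 1; rw [hs]; ring
          rw [this, h2]; ring

theorem f_decay {α : ℝ} (h0 : 0 < α) (h1 : α < 1) (n : ℕ) : ∀ δ : ℝ, 0 ≤ δ → δ < 1 + n * α →
    (∀ m j : ℕ, δ ≠ 1 + m * α + j) → ∀ N : ℕ, Tendsto (fun x => x ^ N * f α δ x) atTop (𝓝 0) := by
  induction n with
  | zero =>
    intro δ hδ hδ1 _ N
    exact f_decay_small h0 h1 hδ (by simpa using hδ1) N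
  | succ n ih =>
    intro δ hδ hδ1 hS N
    push_cast at hδ1
    rcases lt_or_ge δ 1 with hlt | hge
    · exact f_decay_small h0 h1 hδ hlt N
    have hne : δ - 1 ≠ 0 := by
      have := hS 0 0
      intro h
      apply this
      push_cast
      linarith
    have hnn : (0 : ℝ) ≤ n * α := by positivity
    have i1 := ih (δ - 1) (by linarith) (by linarith) (fun m j hmj => hS m (j + 1) (by
      push_cast; linarith)) N
    have i2 := ih (δ - α) (by linarith) (by linarith) (fun m j hmj => hS (m + 1) j (by
      push_cast; linarith)) (N + 1)
    have hlim := (i1.sub (i2.const_mul α)).div_const (δ - 1)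
    simp only [mul_zero, sub_zero, zero_div] at hlim
    refine hlim.congr fun x => ?_
    have hr := f_rec h0 h1 (δ - 1) x
    rw [sub_add_cancel] at hr
    rw [hr]
    field_simp
    ring

theorem f_antitone {α δ a : ℝ} (h0 : 0 < α) (h1 : α < 1)
    (hp : ∀ x, a < x → 0 ≤ f α (δ - α) x) : AntitoneOn (f α δ) (Ici a) := by
  apply antitoneOn_of_deriv_nonpos (convex_Ici a)
    (fun x _ => (f_hasDerivAt h0 h1 δ x).continuousAt.continuousWithinAt)
    (fun x _ => (f_hasDerivAt h0 h1 δ x).differentiableAt.differentiableWithinAt)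
  intro x hx
  rw [interior_Ici] at hx
  rw [(f_hasDerivAt h0 h1 δ x).deriv]
  have := hp x hx
  linarith

theorem f_nonneg_generic {α : ℝ} (h0 : 0 < α) (h1 : α < 1) (n : ℕ) :
    ∀ δ : ℝ, 0 ≤ δ → δ < 1 + n * α →
    (∀ m j : ℕ, δ ≠ 1 + m * α + j) → ∀ x, 0 < x → 0 ≤ f α δ x := by
  induction n with
  | zero =>
    intro δ hδ hδ1 _ x hx
    exact f_nonneg_small h0 h1 hδ (by simpa using hδ1) hx
  | succ n ih =>
    intro δ hδ hδ1 hS x hx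
    have hd := f_decay h0 h1 (n + 1) δ hδ hδ1 hS 0
    push_cast at hδ1
    rcases lt_or_ge δ 1 with hlt | hge
    · exact f_nonneg_small h0 h1 hδ hlt hx
    have ha := f_antitone (a := 0) h0 h1 (ih (δ - α) (by linarith) (by linarith)
      (fun m j hmj => hS (m + 1) j (by push_cast; linarith)))
    simp only [pow_zero, one_mul] at hd
    apply le_of_tendsto hd
    filter_upwards [eventually_ge_atTop x] with z hz
    exact ha (mem_Ici.2 hx.le) (mem_Ici.2 (hx.le.trans hz)) hz

theorem f_nonneg {α δ x : ℝ} (h0 : 0 < α) (h1 : α < 1) (hδ : 0 ≤ δ) (hx : 0 < x) :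
    0 ≤ f α δ x := by
  rcases hδ.eq_or_lt with rfl | hδ
  · exact f_nonneg_small h0 h1 le_rfl one_pos hx
  set S : Set ℝ := range (fun p : ℕ × ℕ => 1 + (p.1 : ℝ) * α + p.2) with hS
  have hdense : Dense Sᶜ := (countable_range _).dense_compl ℝ
  have hcl : IsClosed {d : ℝ | 0 ≤ f α d x} :=
    isClosed_le continuous_const (f_continuous_beta h0 h1 x)
  have hsub : Ioi 0 ∩ Sᶜ ⊆ {d : ℝ | 0 ≤ f α d x} := by
    rintro d ⟨hd, hdS⟩
    obtain ⟨n, hn⟩ := exists_nat_gt (d / α)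
    rw [div_lt_iff₀ h0] at hn
    exact f_nonneg_generic h0 h1 n d (le_of_lt hd) (by linarith)
      (fun m j hmj => hdS ⟨(m, j), hmj.symm⟩) x hx
  exact hcl.closure_subset_iff.2 hsub (hdense.open_subset_closure_inter isOpen_Ioi hδ)

theorem f_not_antitone {α β : ℝ} (h0 : 0 < α) (h1 : α < 1) (hβ : 0 ≤ β) (hlt : β < α) :
    ¬ AntitoneOn (f α β) (Ici 0) := by
  intro ha
  have hd := (f_hasDerivAt h0 h1 β 0).hasDerivWithinAt (s := Ici 0)
  have hw := hd.derivWithin (uniqueDiffOn_Ici (0 : ℝ) 0 self_mem_Ici)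
  have hle := ha.derivWithin_nonpos (x := 0)
  rw [hw, f_zero] at hle
  have hG : Gamma (β - α) < 0 := by
    have hr := Real.Gamma_add_one (s := β - α) (by linarith)
    have hp : 0 < Gamma (β - α + 1) := Real.Gamma_pos_of_pos (by linarith)
    rw [hr] at hp
    by_contra hge
    push Not at hge
    nlinarith
  have := inv_lt_zero.2 hG
  linarith

theorem f_exists_mode {α β : ℝ} (h0 : 0 < α) (h1 : α < 1) (hβ : 0 ≤ β) (hlt : β < α) :
    ∃ m : ℝ, 0 ≤ m ∧ MonotoneOn (f α β) (Icc 0 m) ∧ AntitoneOn (f α β) (Ici m) := by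
  set A : Set ℝ := {x | 0 < x ∧ 0 ≤ f α (β - α) x} with hA
  have hne : A.Nonempty := by
    by_contra hemp
    rw [not_nonempty_iff_eq_empty] at hemp
    have hneg : ∀ x, 0 < x → f α (β - α) x < 0 := by
      intro x hx
      by_contra hge
      push Not at hge
      have : x ∈ A := ⟨hx, hge⟩
      rw [hemp] at this
      exact this
    have hm : StrictMonoOn (f α β) (Ici 0) := by
      apply strictMonoOn_of_deriv_pos (convex_Ici 0)
        (fun x _ => (f_hasDerivAt h0 h1 β x).continuousAt.continuousWithinAt)
      intro x hx
      rw [interior_Ici] at hx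
      rw [(f_hasDerivAt h0 h1 β x).deriv]
      have := hneg x hx
      linarith
    have hpos : 0 < f α β 2 :=
      (f_nonneg h0 h1 hβ one_pos).trans_lt (hm (by simp) (by simp) (by norm_num))
    have hd := f_decay_small h0 h1 hβ (by linarith) 0
    simp only [pow_zero, one_mul] at hd
    have := ge_of_tendsto hd (b := f α β 2) (by
      filter_upwards [eventually_ge_atTop 2] with z hz
      exact hm.monotoneOn (by simp) (mem_Ici.2 (by linarith)) hz)
    linarith
  have hbdd : BddBelow A := ⟨0, fun x hx => hx.1.le⟩
  refine ⟨sInf A, le_csInf hne fun x hx => hx.1.le, ?_, ?_⟩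
  · apply monotoneOn_of_deriv_nonneg (convex_Icc _ _)
      (fun x _ => (f_hasDerivAt h0 h1 β x).continuousAt.continuousWithinAt)
      (fun x _ => (f_hasDerivAt h0 h1 β x).differentiableAt.differentiableWithinAt)
    intro x hx
    rw [interior_Icc] at hx
    rw [(f_hasDerivAt h0 h1 β x).deriv]
    by_contra hlt'
    push Not at hlt'
    exact absurd (csInf_le hbdd (⟨hx.1, by linarith⟩ : x ∈ A)) (not_le.2 hx.2)
  · apply f_antitone h0 h1
    intro x hx
    obtain ⟨a, ha, hax⟩ := exists_lt_of_csInf_lt hne hx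
    exact f_cross h0 h1 (by linarith) (by linarith) ha.1 hax ha.2

end
end WrightAux

/-- Theorem A: for `α ∈ (0,1)` and `β ≥ 0`, the function `x ↦ φ(-α, β, -x)` is
unimodal on `[0,∞)`; if `β ≥ α` the mode can be taken at `0`, while if `β < α`
every mode is strictly positive and the function is not nonincreasing on `[0,∞)`. -/
theorem wright_unimodal (α β : ℝ) (hα : α ∈ Set.Ioo (0 : ℝ) 1) (hβ : 0 ≤ β) :
    (∃ m : ℝ, 0 ≤ m ∧
        MonotoneOn (fun x => wright (-α) β (-x)) (Set.Icc 0 m) ∧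
        AntitoneOn (fun x => wright (-α) β (-x)) (Set.Ici m)) ∧
    (α ≤ β → AntitoneOn (fun x => wright (-α) β (-x)) (Set.Ici 0)) ∧
    (β < α →
      (¬ AntitoneOn (fun x => wright (-α) β (-x)) (Set.Ici 0)) ∧
      ∀ m : ℝ, 0 ≤ m →
        MonotoneOn (fun x => wright (-α) β (-x)) (Set.Icc 0 m) →
        AntitoneOn (fun x => wright (-α) β (-x)) (Set.Ici m) → 0 < m) := by
  obtain ⟨h0, h1⟩ := hα
  refine ⟨?_, ?_, ?_⟩
  · rcases le_or_gt α β with hle | hlt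
    · refine ⟨0, le_rfl, ?_, WrightAux.f_antitone h0 h1 fun x hx =>
        WrightAux.f_nonneg h0 h1 (by linarith) hx⟩
      intro a ha b hb _
      have ea : a = 0 := le_antisymm ha.2 ha.1
      have eb : b = 0 := le_antisymm hb.2 hb.1
      rw [ea, eb]
    · exact WrightAux.f_exists_mode h0 h1 hβ hlt
  · intro hle
    exact WrightAux.f_antitone h0 h1 fun x hx => WrightAux.f_nonneg h0 h1 (by linarith) hx
  · intro hlt
    have hn := WrightAux.f_not_antitone h0 h1 hβ hlt
    refine ⟨hn, fun m hm _ ha => ?_⟩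
    rcases hm.eq_or_lt with rfl | hpos
    · exact absurd ha hn
    · exact hpos
end

section
/- For every α ∈ (0,1) and every β ∈ ℝ, the function x ↦ φ(-α, β, -x) is differentiable on ℝ and its derivative satisfies d/dx φ(-α, β, -x) = − φ(-α, β − α, -x) for every x ∈ ℝ. In particular, for β ≥ α and x > 0 this derivative is strictly negative. -/
open Filter Topology

/-- Coefficient of `z^k` in `(1-z)^(-a)`. -/
noncomputable def wb (k : ℕ) (a : ℝ) : ℝ :=
  (∏ j ∈ Finset.range k, (a + j)) / (k.factorial : ℝ)

lemma wb_succ (k : ℕ) (a : ℝ) : wb (k + 1) a = wb k a * ((a + k) / (k + 1)) := by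
  unfold wb
  rw [Finset.prod_range_succ, Nat.factorial_succ]
  push_cast
  have : (k.factorial : ℝ) ≠ 0 := by positivity
  have : (k : ℝ) + 1 ≠ 0 := by positivity
  field_simp

lemma wb_succ' (k : ℕ) (a : ℝ) : wb (k + 1) a = a * wb k (a + 1) / (k + 1) := by
  unfold wb
  rw [Finset.prod_range_succ', Nat.factorial_succ]
  push_cast
  have : (k.factorial : ℝ) ≠ 0 := by positivity
  have : (k : ℝ) + 1 ≠ 0 := by positivity
  have h : ∀ j : ℕ, a + ((j : ℝ) + 1) = a + 1 + j := fun j => by ring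
  simp only [h]
  field_simp
  ring

lemma wb_small (m : ℝ) (k : ℕ) (hk : k ≤ ⌈m⌉₊) :
    |wb k (-m)| ≤ (Nat.choose ⌈m⌉₊ k : ℝ) := by
  induction k with
  | zero => simp [wb]
  | succ k ih =>
    have ih := ih (by omega)
    rw [wb_succ, abs_mul]
    have h1 : (k : ℝ) < m := Nat.lt_ceil.mp (by omega)
    have h2 : m ≤ (⌈m⌉₊ : ℝ) := Nat.le_ceil m
    have h3 : (Nat.choose ⌈m⌉₊ (k+1) : ℝ) * (k + 1) = Nat.choose ⌈m⌉₊ k * ((⌈m⌉₊ : ℝ) - k) := by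
      have := Nat.choose_succ_right_eq ⌈m⌉₊ k
      rw [← Nat.cast_sub (by omega)]
      exact_mod_cast this
    have hk1 : (0:ℝ) < k + 1 := by positivity
    have h4 : |(-m + k) / ((k:ℝ) + 1)| ≤ ((⌈m⌉₊ : ℝ) - k) / (k + 1) := by
      rw [abs_div, abs_of_pos hk1, abs_of_neg (by linarith)]
      gcongr
      linarith
    calc _ ≤ (Nat.choose ⌈m⌉₊ k : ℝ) * (((⌈m⌉₊ : ℝ) - k) / (k + 1)) := by gcongr
      _ = _ := by rw [← mul_div_assoc, ← h3]; field_simp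

lemma harm_succ (k : ℕ) : ((harmonic (k+1) : ℚ) : ℝ) = (harmonic k : ℚ) + 1 / ((k:ℝ) + 1) := by
  rw [harmonic_succ]; push_cast; simp

lemma harm_mono : Monotone (fun k => ((harmonic k : ℚ) : ℝ)) := by
  apply monotone_nat_of_le_succ
  intro n
  rw [harm_succ]
  have : (0:ℝ) ≤ 1 / ((n:ℝ)+1) := by positivity
  linarith

lemma wb_bound (m : ℝ) (hm : 0 ≤ m) (k : ℕ) :
    |wb k (-m)| ≤ 2 ^ ⌈m⌉₊ *
      Real.exp ((m + 1) * (((harmonic ⌈m⌉₊ : ℚ) : ℝ) - ((harmonic k : ℚ) : ℝ))) := by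
  have small : ∀ k : ℕ, k ≤ ⌈m⌉₊ → |wb k (-m)| ≤ 2 ^ ⌈m⌉₊ *
      Real.exp ((m + 1) * (((harmonic ⌈m⌉₊ : ℚ) : ℝ) - ((harmonic k : ℚ) : ℝ))) := by
    intro k hk
    have h1 : |wb k (-m)| ≤ 2 ^ ⌈m⌉₊ := by
      refine (wb_small m k hk).trans ?_
      exact_mod_cast Nat.choose_le_two_pow ⌈m⌉₊ k
    have h2 := harm_mono hk
    have h3 : 1 ≤ Real.exp ((m + 1) * (((harmonic ⌈m⌉₊ : ℚ) : ℝ) - ((harmonic k : ℚ) : ℝ))) := by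
      apply Real.one_le_exp
      apply mul_nonneg (by linarith)
      simp only at h2
      linarith
    nlinarith [show (0:ℝ) < 2 ^ ⌈m⌉₊ by positivity]
  rcases le_total k ⌈m⌉₊ with hk | hk
  · exact small k hk
  · induction k, hk using Nat.le_induction with
    | base => exact small _ le_rfl
    | succ k hk ih =>
      rw [wb_succ, abs_mul, harm_succ]
      have h1 : m ≤ k := (Nat.le_ceil m).trans (by exact_mod_cast hk)
      have hk1 : (0:ℝ) < k + 1 := by positivity
      have h4 : |(-m + k) / ((k:ℝ) + 1)| ≤ Real.exp (-((m + 1) / (k + 1))) := by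
        rw [abs_of_nonneg (div_nonneg (by linarith) hk1.le)]
        have := Real.add_one_le_exp (-((m + 1) / ((k:ℝ) + 1)))
        refine le_trans (le_of_eq ?_) this
        field_simp
        ring
      calc _ ≤ _ := mul_le_mul ih h4 (abs_nonneg _) (by positivity)
        _ = _ := by
          rw [mul_assoc, ← Real.exp_add]
          congr 2
          ring

lemma invGammaSeq (s : ℝ) (k : ℕ) (hk : 1 ≤ k) :
    (Real.GammaSeq s k)⁻¹ = (k : ℝ) ^ (-s) * (k + 1) * wb (k + 1) s := by
  unfold Real.GammaSeq wb
  rw [Nat.factorial_succ, inv_div, Real.rpow_neg (by positivity)]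
  push_cast
  have : (k.factorial : ℝ) ≠ 0 := by positivity
  have : (k : ℝ) + 1 ≠ 0 := by positivity
  have hk' : (0:ℝ) < k := by exact_mod_cast hk
  have : (k : ℝ) ^ s ≠ 0 := by positivity
  field_simp

lemma invGammaSeq_bound (m : ℝ) (hm : 0 ≤ m) (N : ℕ) (hN : ⌈m⌉₊ ≤ N)
    (k : ℕ) (hk : 1 ≤ k) :
    |(Real.GammaSeq (-m) k)⁻¹| ≤ 2 ^ N * Real.exp ((m + 1) * (1 + Real.log N)) := by
  rw [invGammaSeq _ _ hk, neg_neg]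
  have hk' : (0:ℝ) < k := by exact_mod_cast hk
  have hk1 : (0:ℝ) < k + 1 := by positivity
  rw [abs_mul, abs_of_nonneg (by positivity)]
  have h1 := wb_bound m hm (k + 1)
  have h2 := log_add_one_le_harmonic (k + 1)
  have h3 := harmonic_le_one_add_log N
  have h4 := harm_mono hN
  simp only at h4
  have h5 : Real.log ((k:ℝ) + 1) ≤ Real.log ((k + 1 + 1 : ℕ) : ℝ) := by
    apply Real.log_le_log hk1
    push_cast; linarith
  have h6 : |wb (k + 1) (-m)| ≤
      2 ^ N * Real.exp ((m + 1) * (1 + Real.log N - Real.log ((k:ℝ)+1))) := by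
    refine h1.trans ?_
    gcongr
    · norm_num
    · linarith
    · linarith
  have h7 : (k : ℝ) ^ m * (k + 1) ≤ Real.exp ((m + 1) * Real.log ((k:ℝ)+1)) := by
    have : Real.exp ((m + 1) * Real.log ((k:ℝ)+1)) = ((k:ℝ)+1) ^ m * (k + 1) := by
      rw [mul_comm, ← Real.rpow_def_of_pos hk1, Real.rpow_add hk1, Real.rpow_one]
    rw [this]
    gcongr
    linarith
  calc _ ≤ _ := mul_le_mul h7 h6 (abs_nonneg _) (by positivity)
    _ = _ := by
      rw [mul_left_comm, ← Real.exp_add]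
      congr 2
      ring

lemma tendsto_invGammaSeq (s : ℝ) :
    Tendsto (fun k => (Real.GammaSeq s k)⁻¹) atTop (𝓝 (Real.Gamma s)⁻¹) := by
  by_cases h : Real.Gamma s = 0
  · obtain ⟨m, rfl⟩ := (Real.Gamma_eq_zero_iff s).mp h
    rw [h, inv_zero]
    apply tendsto_const_nhds.congr'
    filter_upwards [eventually_ge_atTop m] with k hk
    unfold Real.GammaSeq
    rw [Finset.prod_eq_zero (i := m) (Finset.mem_range.mpr (by omega)) (by simp)]
    simp
  · exact (Real.GammaSeq_tendsto_Gamma s).inv₀ h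

lemma summable_aux (α : ℝ) (hα : α < 1) (K : ℕ) (r : ℝ) (hr : 0 ≤ r) :
    Summable (fun n : ℕ => r ^ n / (n.factorial : ℝ) * (2 ^ (n + K + 1) *
      Real.exp ((α * n + K + 1) * (1 + Real.log ((n + K + 1 : ℕ) : ℝ))))) := by
  have hg : Summable (fun n : ℕ => Real.exp (-n : ℝ)) := by
    simpa using Real.summable_exp_neg_nat
  refine Summable.of_norm_bounded_eventually_nat hg ?_
  have hlog : Tendsto (fun n : ℕ => Real.log ((n + K + 1 : ℕ) : ℝ)) atTop atTop :=
    Real.tendsto_log_atTop.comp (tendsto_natCast_atTop_atTop.comp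
      (tendsto_atTop_mono (fun n => by simp only [id]; omega) tendsto_id))
  have hn : Tendsto (fun n : ℕ => (n : ℝ)) atTop atTop := tendsto_natCast_atTop_atTop
  have hδ : 0 < (1 - α) / 2 := by linarith
  filter_upwards [hlog.eventually_ge_atTop ((Real.log (r + 1) + Real.log 2 + α + 3) / ((1-α)/2)),
    hn.eventually_ge_atTop (((K:ℝ)+1) / ((1-α)/2)),
    hn.eventually_ge_atTop (((K:ℝ)+1) * Real.log 2 + (K + 1) + (K + 1))] with n h1 h2 h3
  rw [div_le_iff₀ hδ] at h1 h2
  set N : ℕ := n + K + 1 with hNdef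
  set L := Real.log (N : ℝ) with hL
  have hNpos : (0:ℝ) < N := by positivity
  have hL0 : 0 ≤ L := Real.log_natCast_nonneg N
  rw [Real.norm_of_nonneg (by positivity)]
  have e1 : 1 / (n.factorial : ℝ) ≤ Real.exp (N - n * L) := by
    have := Real.pow_div_factorial_le_exp (N:ℝ) hNpos.le n
    have e : (N:ℝ) ^ n = Real.exp (n * L) := by
      rw [Real.exp_nat_mul, Real.exp_log hNpos]
    rw [e] at this
    rw [Real.exp_sub, le_div_iff₀ (Real.exp_pos _)]
    calc _ = _ := by ring
      _ ≤ _ := this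
  have e2 : r ^ n ≤ Real.exp (n * Real.log (r + 1)) := by
    rw [Real.exp_nat_mul, Real.exp_log (by linarith)]
    gcongr; linarith
  have e3 : (2:ℝ) ^ N = Real.exp (N * Real.log 2) := by
    rw [Real.exp_nat_mul, Real.exp_log (by norm_num)]
  calc _ = r ^ n * (1 / (n.factorial : ℝ)) * (2 ^ N * Real.exp ((α * n + K + 1) * (1 + L))) := by
        ring
    _ ≤ Real.exp (n * Real.log (r + 1)) * Real.exp (N - n * L) *
        (Real.exp (N * Real.log 2) * Real.exp ((α * n + K + 1) * (1 + L))) := by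
        rw [e3]; gcongr
    _ = Real.exp (n * Real.log (r + 1) + (N - n * L) +
        (N * Real.log 2 + (α * n + K + 1) * (1 + L))) := by
        simp only [Real.exp_add]
    _ ≤ _ := by
        apply Real.exp_le_exp.mpr
        have hNc : (N:ℝ) = n + K + 1 := by rw [hNdef]; push_cast; ring
        rw [hNc]
        have hn0 : (0:ℝ) ≤ n := by positivity
        have p1 := mul_le_mul_of_nonneg_left h1 hn0
        have p2 := mul_le_mul_of_nonneg_right h2 hL0
        nlinarith

lemma exists_bound (α β : ℝ) (hα : α ∈ Set.Ioo (0 : ℝ) 1) : ∃ B : ℕ → ℝ,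
    (∀ n k : ℕ, 1 ≤ k → |(Real.GammaSeq (β + -α * n) k)⁻¹| ≤ B n) ∧
    (∀ r : ℝ, 0 ≤ r → Summable (fun n : ℕ => r ^ n / (n.factorial : ℝ) * B n)) := by
  have hC : ∀ n : ℕ, ∃ C : ℝ, ∀ k, |(Real.GammaSeq (β + -α * n) k)⁻¹| ≤ C := by
    intro n
    obtain ⟨C, hC⟩ := (Metric.isBounded_range_of_tendsto _
      (tendsto_invGammaSeq (β + -α * n))).exists_norm_le
    exact ⟨C, fun k => hC _ ⟨k, rfl⟩⟩
  choose C hC using hC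
  set K := ⌈|β|⌉₊ with hK
  have hKβ : |β| ≤ K := Nat.le_ceil _
  classical
  refine ⟨fun n => if β ≤ α * n then 2 ^ (n + K + 1) *
      Real.exp ((α * n + K + 1) * (1 + Real.log ((n + K + 1 : ℕ) : ℝ))) else C n, ?_, ?_⟩
  · intro n k hk
    simp only
    split_ifs with h
    · have hm : ⌈α * n - β⌉₊ ≤ n + K + 1 := by
        apply Nat.ceil_le.mpr
        push_cast
        have : α * n ≤ n := by
          nlinarith [hα.2, show (0:ℝ) ≤ n by positivity]
        linarith [neg_abs_le β]
      have := invGammaSeq_bound (α * n - β) (by linarith) (n + K + 1) hm k hk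
      rw [show β + -α * n = -(α * n - β) by ring]
      refine this.trans ?_
      have := Real.log_natCast_nonneg (n + K + 1)
      gcongr
      linarith [neg_abs_le β]
    · exact hC n k
  · intro r hr
    refine (summable_congr_atTop ?_).mpr (summable_aux α hα.2 K r hr)
    have hn : Tendsto (fun n : ℕ => (n : ℝ)) atTop atTop := tendsto_natCast_atTop_atTop
    filter_upwards [hn.eventually_ge_atTop (β / α)] with n hn
    rw [div_le_iff₀ hα.1] at hn
    rw [if_pos (by linarith)]

lemma wright_abs_summable (α β : ℝ) (hα : α ∈ Set.Ioo (0 : ℝ) 1) (r : ℝ) (hr : 0 ≤ r) :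
    Summable (fun n : ℕ => r ^ n * |1 / ((n.factorial : ℝ) * Real.Gamma (β + -α * n))|) := by
  obtain ⟨B, h1, h2⟩ := exists_bound α β hα
  refine Summable.of_nonneg_of_le (fun n => by positivity) (fun n => ?_) (h2 r hr)
  have : |(Real.Gamma (β + -α * n))⁻¹| ≤ B n := by
    refine le_of_tendsto (tendsto_invGammaSeq (β + -α * n)).abs ?_
    filter_upwards [eventually_ge_atTop 1] with k hk using h1 n k hk
  rw [one_div, mul_inv, abs_mul, abs_of_nonneg (by positivity), div_eq_mul_inv, mul_assoc]
  gcongr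

lemma wright_summable (α β : ℝ) (hα : α ∈ Set.Ioo (0 : ℝ) 1) (x : ℝ) :
    Summable (fun n : ℕ => x ^ n / ((n.factorial : ℝ) * Real.Gamma (β + -α * n))) := by
  refine Summable.of_norm_bounded (wright_abs_summable α β hα |x| (abs_nonneg x)) (fun n => ?_)
  rw [Real.norm_eq_abs, div_eq_mul_one_div, abs_mul, abs_pow]

lemma coeff_shift (α β : ℝ) (n : ℕ) :
    ((n + 1 : ℕ) : ℝ) * (1 / (((n + 1).factorial : ℝ) * Real.Gamma (β + -α * (n + 1 : ℕ)))) =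
      1 / ((n.factorial : ℝ) * Real.Gamma (β - α + -α * n)) := by
  rw [show β + -α * (n + 1 : ℕ) = β - α + -α * n by push_cast; ring, Nat.factorial_succ]
  push_cast
  have : (n : ℝ) + 1 ≠ 0 := by positivity
  rw [one_div, one_div, mul_assoc, mul_inv ((n:ℝ)+1), ← mul_assoc, mul_inv_cancel₀ this, one_mul]

lemma wright_deriv (α β : ℝ) (hα : α ∈ Set.Ioo (0 : ℝ) 1) (x : ℝ) :
    HasDerivAt (fun y => wright (-α) β (-y)) (-(wright (-α) (β - α) (-x))) x := by
  set a : ℕ → ℝ := fun n => 1 / ((n.factorial : ℝ) * Real.Gamma (β + -α * n)) with ha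
  set R := |x| + 1 with hR
  have hR0 : 0 ≤ R := by positivity
  have hu : Summable (fun n : ℕ => (n : ℝ) * R ^ (n - 1) * |a n|) := by
    rw [← summable_nat_add_iff 1]
    refine (wright_abs_summable α (β - α) hα R hR0).congr (fun n => ?_)
    rw [← coeff_shift, abs_mul, Nat.abs_cast]
    simp only [ha, Nat.add_sub_cancel]
    ring
  have key := hasDerivAt_tsum_of_isPreconnected (g := fun (n : ℕ) (y : ℝ) => (-y) ^ n * a n)
    (g' := fun (n : ℕ) (y : ℝ) => (n : ℝ) * (-y) ^ (n - 1) * (-1) * a n)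
    (t := Metric.ball (0:ℝ) R) (y₀ := x) (y := x) hu Metric.isOpen_ball
    (convex_ball (0:ℝ) R).isPreconnected ?_ ?_ ?_ ?_ ?_
  · have e1 : (fun y => wright (-α) β (-y)) = fun z => ∑' n : ℕ, (-z) ^ n * a n := by
      ext y
      unfold wright
      exact tsum_congr fun n => div_eq_mul_one_div _ _
    have e2 : ∑' n : ℕ, (n : ℝ) * (-x) ^ (n - 1) * (-1) * a n = -(wright (-α) (β - α) (-x)) := by
      have hs : Summable (fun n : ℕ => (n : ℝ) * (-x) ^ (n - 1) * (-1) * a n) := by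
        refine Summable.of_norm_bounded hu (fun n => ?_)
        rw [Real.norm_eq_abs, abs_mul, abs_mul, abs_mul, abs_pow, abs_neg, abs_neg, Nat.abs_cast,
          abs_one, mul_one]
        gcongr
        linarith
      rw [hs.tsum_eq_zero_add]
      simp only [Nat.cast_zero, zero_mul, zero_add, wright]
      rw [← tsum_neg]
      refine tsum_congr fun n => ?_
      rw [div_eq_mul_one_div, ← coeff_shift]
      simp only [ha, Nat.add_sub_cancel]
      ring
    rw [e1, ← e2]
    exact key
  · intro n y _
    have h := ((hasDerivAt_neg y).pow n).mul_const (a n)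
    exact h
  · intro n y hy
    have hy' : |y| ≤ R := by
      rw [mem_ball_zero_iff] at hy
      exact hy.le
    rw [Real.norm_eq_abs, abs_mul, abs_mul, abs_mul, abs_pow, abs_neg, abs_neg, Nat.abs_cast,
          abs_one, mul_one]
    gcongr
  · rw [mem_ball_zero_iff, Real.norm_eq_abs]; linarith
  · exact (wright_summable α β hα (-x)).congr (fun n => div_eq_mul_one_div _ _)
  · rw [mem_ball_zero_iff, Real.norm_eq_abs]; linarith

/-- Discrete positivity. -/
lemma discrete_nonneg (α lam : ℝ) (hα : α ∈ Set.Ioo (0 : ℝ) 1) (hl : 0 ≤ lam) (k : ℕ) :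
    ∀ γ : ℝ, 0 ≤ γ → ∃ S : ℝ, 0 ≤ S ∧
      HasSum (fun n : ℕ => (-lam) ^ n / (n.factorial : ℝ) * wb k (γ + -α * n)) S := by
  induction k with
  | zero =>
    intro γ _
    refine ⟨Real.exp (-lam), (Real.exp_pos _).le, ?_⟩
    have := NormedSpace.expSeries_div_hasSum_exp (𝔸 := ℝ) (-lam)
    rw [← Real.exp_eq_exp_ℝ] at this
    simpa [wb] using this
  | succ k ih =>
    intro γ hγ
    obtain ⟨S1, hS1, h1⟩ := ih (γ + 1) (by linarith)
    obtain ⟨S2, hS2, h2⟩ := ih (γ + 1 - α) (by linarith [hα.2])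
    have hv : HasSum (fun n : ℕ => (n : ℝ) * ((-lam) ^ n / (n.factorial : ℝ) *
        wb k (γ + 1 + -α * n))) (-lam * S2) := by
      rw [← hasSum_nat_add_iff' 1]
      simp only [Finset.range_one, Finset.sum_singleton, Nat.cast_zero, zero_mul, sub_zero]
      refine (h2.mul_left (-lam)).congr_fun ?_
      intro n
      rw [show γ + 1 + -α * (n + 1 : ℕ) = γ + 1 - α + -α * n by push_cast; ring,
        Nat.factorial_succ]
      push_cast
      have : (n : ℝ) + 1 ≠ 0 := by positivity
      have : (n.factorial : ℝ) ≠ 0 := by positivity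
      field_simp
      ring
    refine ⟨(γ * S1 - α * (-lam * S2)) / (k + 1), ?_, ?_⟩
    · have := mul_nonneg hγ hS1
      have := mul_nonneg hα.1.le (mul_nonneg hl hS2)
      apply div_nonneg _ (by positivity)
      linarith
    · refine (((h1.mul_left γ).sub (hv.mul_left α)).div_const ((k:ℝ) + 1)).congr_fun ?_
      intro n
      rw [wb_succ', show γ + -α * n + 1 = γ + 1 + -α * n by ring]
      ring

lemma wright_nonneg (α γ x : ℝ) (hα : α ∈ Set.Ioo (0 : ℝ) 1) (hγ : 0 ≤ γ) (hx : 0 ≤ x) :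
    0 ≤ wright (-α) γ (-x) := by
  obtain ⟨B, h1, h2⟩ := exists_bound α γ hα
  have ht : Tendsto (fun k : ℕ => ∑' n : ℕ, (-x) ^ n / (n.factorial : ℝ) *
      (Real.GammaSeq (γ + -α * n) k)⁻¹) atTop (𝓝 (∑' n : ℕ, (-x) ^ n / (n.factorial : ℝ) *
      (Real.Gamma (γ + -α * n))⁻¹)) := by
    refine tendsto_tsum_of_dominated_convergence (h2 x hx) ?_ ?_
    · intro n
      exact (tendsto_invGammaSeq _).const_mul _
    · filter_upwards [eventually_ge_atTop 1] with k hk n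
      rw [Real.norm_eq_abs, abs_mul, abs_div, abs_pow, abs_neg, abs_of_nonneg hx, Nat.abs_cast]
      have := h1 n k hk
      gcongr
  have e : wright (-α) γ (-x) = ∑' n : ℕ, (-x) ^ n / (n.factorial : ℝ) *
      (Real.Gamma (γ + -α * n))⁻¹ := by
    unfold wright
    refine tsum_congr fun n => ?_
    rw [← div_eq_mul_inv, div_div]
  rw [e]
  refine ge_of_tendsto ht ?_
  filter_upwards [eventually_ge_atTop 1] with k hk
  have hk' : (0:ℝ) < k := by exact_mod_cast hk
  obtain ⟨S, hS, h⟩ := discrete_nonneg α (x * (k:ℝ) ^ α) hα (by positivity) (k + 1) γ hγ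
  have h' : HasSum (fun n : ℕ => (-x) ^ n / (n.factorial : ℝ) *
      (Real.GammaSeq (γ + -α * n) k)⁻¹) ((k:ℝ) ^ (-γ) * (k + 1) * S) := by
    refine (h.mul_left ((k:ℝ) ^ (-γ) * (k + 1))).congr_fun ?_
    intro n
    rw [invGammaSeq _ _ hk, show -(γ + -α * n) = -γ + α * n by ring, Real.rpow_add hk',
      Real.rpow_mul hk'.le, Real.rpow_natCast, neg_mul_eq_neg_mul, mul_pow]
    ring
  rw [h'.tsum_eq]
  positivity

lemma wright_rec (α γ x : ℝ) (hα : α ∈ Set.Ioo (0 : ℝ) 1)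
    (hγ : 0 ≤ γ) :
    wright (-α) γ (-x) = γ * wright (-α) (γ + 1) (-x) + α * x * wright (-α) (γ + 1 - α) (-x) := by
  have h1 := (wright_summable α (γ + 1) hα (-x)).hasSum
  have h2 := (wright_summable α (γ + 1 - α) hα (-x)).hasSum
  have hv : HasSum (fun n : ℕ => (n : ℝ) * ((-x) ^ n / ((n.factorial : ℝ) *
      Real.Gamma (γ + 1 + -α * n)))) (-x * wright (-α) (γ + 1 - α) (-x)) := by
    rw [← hasSum_nat_add_iff' 1]
    simp only [Finset.range_one, Finset.sum_singleton, Nat.cast_zero, zero_mul, sub_zero]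
    refine (h2.mul_left (-x)).congr_fun ?_
    intro n
    rw [div_eq_mul_one_div, div_eq_mul_one_div (_ ^ _), ← coeff_shift]
    ring
  have h3 := (h1.mul_left γ).sub (hv.mul_left α)
  have h4 : wright (-α) γ (-x) = γ * wright (-α) (γ + 1) (-x) -
      α * (-x * wright (-α) (γ + 1 - α) (-x)) := by
    refine HasSum.tsum_eq (h3.congr_fun ?_)
    intro n
    rw [show γ + 1 + -α * n = (γ + -α * n) + 1 by ring]
    by_cases hz : γ + -α * n = 0
    · rw [hz, Real.Gamma_zero]
      have : γ = α * n := by linarith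
      rw [this]; simp; ring
    · rw [Real.Gamma_add_one hz, mul_left_comm, ← div_div ((-x) ^ n) (γ + -α * n)]
      have : γ * ((-x) ^ n / (γ + -α * n) / ((n.factorial : ℝ) * Real.Gamma (γ + -α * n))) -
        α * (n * ((-x) ^ n / (γ + -α * n) / ((n.factorial : ℝ) * Real.Gamma (γ + -α * n))))
        = (γ + -α * n) * ((-x) ^ n / (γ + -α * n)) /
          ((n.factorial : ℝ) * Real.Gamma (γ + -α * n)) := by ring
      rw [this, mul_div_cancel₀ _ hz]
  rw [h4]; ring

lemma wright_analytic (α β : ℝ) (hα : α ∈ Set.Ioo (0 : ℝ) 1) :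
    AnalyticOnNhd ℝ (fun y => wright (-α) β y) Set.univ := by
  set a : ℕ → ℝ := fun n => 1 / ((n.factorial : ℝ) * Real.Gamma (β + -α * n)) with ha
  set p := FormalMultilinearSeries.ofScalars ℝ a with hp
  have hr : p.radius = ⊤ := by
    apply FormalMultilinearSeries.radius_eq_top_of_summable_norm
    intro r
    refine (wright_abs_summable α β hα r r.2).congr (fun n => ?_)
    rw [hp, FormalMultilinearSeries.ofScalars_norm, mul_comm, Real.norm_eq_abs]
  have h := p.hasFPowerSeriesOnBall (by rw [hr]; simp)
  have e : (fun y => wright (-α) β y) = p.sum := by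
    ext y
    unfold wright FormalMultilinearSeries.sum
    refine tsum_congr fun n => ?_
    rw [hp, FormalMultilinearSeries.ofScalars_apply_eq, smul_eq_mul, mul_comm (a n),
      div_eq_mul_one_div]
  rw [e]
  intro y _
  exact h.analyticAt_of_mem (by rw [hr]; simp)

lemma wright_zero (α γ : ℝ) : wright (-α) γ 0 = 1 / Real.Gamma γ := by
  unfold wright
  rw [tsum_eq_single 0]
  · simp
  · intro n hn
    simp [hn]

lemma wright_pos_large (α γ x : ℝ) (hα : α ∈ Set.Ioo (0 : ℝ) 1) (hγ : α ≤ γ) (hx : 0 < x) :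
    0 < wright (-α) γ (-x) := by
  have hd := wright_deriv α γ hα
  have hanti : AntitoneOn (fun y => wright (-α) γ (-y)) (Set.Ici 0) := by
    apply antitoneOn_of_deriv_nonpos (convex_Ici 0)
    · exact fun y _ => (hd y).continuousAt.continuousWithinAt
    · exact fun y _ => (hd y).differentiableAt.differentiableWithinAt
    · intro y hy
      rw [interior_Ici] at hy
      rw [(hd y).deriv]
      have := wright_nonneg α (γ - α) y hα (by linarith) (le_of_lt hy)
      linarith
  refine lt_of_le_of_ne (wright_nonneg α γ x hα (by linarith [hα.1]) hx.le) (fun h0 => ?_)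
  have hz : ∀ y, x ≤ y → wright (-α) γ (-y) = 0 := by
    intro y hy
    have h1 := wright_nonneg α γ y hα (by linarith [hα.1]) (by linarith)
    have h2 := hanti (Set.mem_Ici.mpr hx.le) (Set.mem_Ici.mpr (by linarith : (0:ℝ) ≤ y)) hy
    simp only at h2
    linarith
  have hE : (fun y => wright (-α) γ y) =ᶠ[𝓝 (-(x + 1))] (fun _ => (0:ℝ)) := by
    filter_upwards [Iio_mem_nhds (show -(x + 1) < -x by linarith)] with y hy
    have := hz (-y) (by linarith [Set.mem_Iio.mp hy])
    rwa [neg_neg] at this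
  have := (wright_analytic α γ hα).eqOn_of_preconnected_of_eventuallyEq
    (fun _ _ => analyticAt_const) isPreconnected_univ (Set.mem_univ _) hE (Set.mem_univ 0)
  simp only [wright_zero] at this
  have hG := Real.Gamma_pos_of_pos (show 0 < γ by linarith [hα.1])
  have : 0 < 1 / Real.Gamma γ := by positivity
  linarith

lemma wright_pos_mid (α γ x : ℝ) (hα : α ∈ Set.Ioo (0 : ℝ) 1) (hγ : 0 < γ) (hx : 0 < x) :
    0 < wright (-α) γ (-x) := by
  rw [wright_rec α γ x hα hγ.le]
  have h1 := wright_pos_large α (γ + 1) x hα (by linarith [hα.2]) hx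
  have h2 := wright_nonneg α (γ + 1 - α) x hα (by linarith [hα.2]) hx.le
  have := mul_pos hγ h1
  have := mul_nonneg (mul_nonneg hα.1.le hx.le) h2
  linarith

lemma wright_pos (α γ x : ℝ) (hα : α ∈ Set.Ioo (0 : ℝ) 1) (hγ : 0 ≤ γ) (hx : 0 < x) :
    0 < wright (-α) γ (-x) := by
  rw [wright_rec α γ x hα hγ]
  have h1 := wright_nonneg α (γ + 1) x hα (by linarith) hx.le
  have h2 := wright_pos_mid α (γ + 1 - α) x hα (by linarith [hα.2]) hx
  have := mul_nonneg hγ h1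
  have := mul_pos (mul_pos hα.1 hx) h2
  linarith

/-- For `α ∈ (0,1)` and any `β`, the function `x ↦ φ(-α, β, -x)` is differentiable with
derivative `-φ(-α, β-α, -x)`; in particular for `β ≥ α` and `x > 0` the derivative is
strictly negative. -/
theorem wright_hasDerivAt (α β : ℝ) (hα : α ∈ Set.Ioo (0 : ℝ) 1) :
    (∀ x : ℝ, HasDerivAt (fun y => wright (-α) β (-y)) (-(wright (-α) (β - α) (-x))) x) ∧
    (α ≤ β → ∀ x : ℝ, 0 < x → deriv (fun y => wright (-α) β (-y)) x < 0) := by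
  refine ⟨wright_deriv α β hα, fun h x hx => ?_⟩
  rw [(wright_deriv α β hα x).deriv]
  have := wright_pos α (β - α) x hα (by linarith) hx
  linarith
end
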